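/- arXiv:2411.12684 — 2 statements merged into one kernel-verified Lean document; each statement's English description precedes it below -/
import Mathlib

section
/- The set 𝒮₁(4) ∩ (1/4, 1/2] has finite symmetric difference with the set { 1/4 + 1/(8s + 12) : s ∈ ℤ, s ≥ 0 }. -/
noncomputable section

abbrev Torus (n : ℕ) : Type := Fin n → AddCircle (1 : ℝ)

def torusProj {n : ℕ} (x : Fin n → ℝ) : Torus n := fun i => (x i : AddCircle (1 : ℝ))

def spanTorus {n k : ℕ} (v : Fin k → Fin n → ℤ) : Set (Torus n) :=
  {p | ∃ t : Fin k → ℝ, p = torusProj fun i => ∑ j, t j * (v j i : ℝ)}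

def IsSubtorus {n : ℕ} (k : ℕ) (S : Set (Torus n)) : Prop :=
  ∃ v : Fin k → Fin n → ℤ,
    LinearIndependent ℝ (fun j : Fin k => fun i : Fin n => (v j i : ℝ)) ∧ S = spanTorus v

def IsProperSub {n : ℕ} (S : Set (Torus n)) : Prop :=
  ¬ S ⊆ ⋃ i : Fin n, {x : Torus n | x i = 0}

def DVal {n : ℕ} (S : Set (Torus n)) : ℝ :=
  sInf ((fun x : Torus n => ⨆ i, dist (x i) ((1 / 2 : ℝ) : AddCircle (1 : ℝ))) '' S)

def relSpec1 {n : ℕ} (U : Set (Torus n)) : Set ℝ :=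
  {d | ∃ T : Set (Torus n), IsSubtorus 1 T ∧ IsProperSub T ∧ T ⊆ U ∧ d = DVal T}

def Spec (k n : ℕ) : Set ℝ :=
  {d | ∃ T : Set (Torus n), IsSubtorus k T ∧ IsProperSub T ∧ d = DVal T}

def progSet (d : ℝ) (α β : ℚ) : Set ℝ :=
  {x | ∃ s : ℕ, x = d + 1 / ((α : ℝ) * s + (β : ℝ))}


/-- `AA r x`: the distance from `x` to the nearest integer is at least `r`. -/
def AA (r x : ℝ) : Prop := ∃ n : ℤ, (n : ℝ) + r ≤ x ∧ x ≤ n + 1 - r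

lemma AA_neg {r x : ℝ} (h : AA r x) : AA r (-x) := by
  obtain ⟨n, h1, h2⟩ := h
  exact ⟨-n - 1, by push_cast; linarith, by push_cast; linarith⟩

lemma AA_mono {r r' x : ℝ} (h : AA r x) (hr : r' ≤ r) : AA r' x := by
  obtain ⟨n, h1, h2⟩ := h
  exact ⟨n, by linarith, by linarith⟩

lemma AA_add {r x y : ℝ} (h : AA r x) (m : ℤ) (hy : y = x + m) : AA r y := by
  obtain ⟨n, h1, h2⟩ := h
  exact ⟨n + m, by push_cast; linarith, by push_cast; linarith⟩

lemma AA_pert {r x y d : ℝ} (h : AA r x) (hd : |y - x| ≤ d) : AA (r - d) y := by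
  obtain ⟨n, h1, h2⟩ := h
  rw [abs_le] at hd
  exact ⟨n, by linarith, by linarith⟩

lemma AA_abs {r t : ℝ} {z : ℤ} : AA r (t * (|z| : ℤ)) ↔ AA r (t * z) := by
  rcases abs_choice z with h | h
  · rw [h]
  · rw [h]
    constructor
    · intro h; have := AA_neg h; push_cast at this; simpa using this
    · intro h; have := AA_neg h; push_cast; simpa using this

lemma AA_of_abs {r t : ℝ} {z z' : ℤ} (hz : |z| = |z'|) (h : AA r (t * z)) : AA r (t * z') := by
  rw [← AA_abs, ← hz, AA_abs]; exact h

def GG {n : ℕ} (r : ℝ) (v : Fin n → ℤ) : Prop := ∃ t : ℝ, ∀ i, AA r (t * v i)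

def HH {n : ℕ} (r : ℝ) (v w : Fin n → ℤ) : Prop := ∃ x y : ℝ, ∀ i, AA r (x * v i + y * w i)

lemma GG_mono {n : ℕ} {r r' : ℝ} {v : Fin n → ℤ} (h : GG r v) (hr : r' ≤ r) : GG r' v := by
  obtain ⟨t, ht⟩ := h
  exact ⟨t, fun i => AA_mono (ht i) hr⟩

lemma GG_of_abs {n : ℕ} {r : ℝ} {v w : Fin n → ℤ} (h : GG r v) (hw : ∀ i, |v i| = |w i|) :
    GG r w := by
  obtain ⟨t, ht⟩ := h
  exact ⟨t, fun i => AA_of_abs (hw i) (ht i)⟩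

/-- Density step: a primitive line with a large speed is dense in a two-dimensional torus. -/
lemma density {n K : ℕ} (hK : 0 < K) (v : Fin n → ℤ) (i0 : Fin n)
    (hV : (K : ℤ) ^ (n - 1) < v i0) (hprim : ∀ d : ℤ, (∀ i, d ∣ v i) → d ∣ 1) :
    ∃ w : Fin n → ℤ, (∃ i j, v i * w j - v j * w i ≠ 0) ∧
      ∀ r, HH r v w → GG (r - 1 / (2 * K)) v := by
  set V := v i0 with hVdef
  have hVpos : 0 < V := lt_of_le_of_lt (by positivity) hV
  have hVR : (0 : ℝ) < V := by exact_mod_cast hVpos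
  have hKR : (0 : ℝ) < K := by exact_mod_cast hK
  have hb : ∀ (q : ℤ) (i : Fin n), ⌊(K : ℝ) * Int.fract ((q : ℝ) * v i / V)⌋.toNat < K := by
    intro q i
    have h1 := Int.fract_lt_one ((q : ℝ) * v i / V)
    have h0 := Int.fract_nonneg ((q : ℝ) * v i / V)
    have h2 : ⌊(K : ℝ) * Int.fract ((q : ℝ) * v i / V)⌋ < K := by
      rw [Int.floor_lt]; push_cast; nlinarith
    omega
  let f : Fin V.toNat → ({i : Fin n // i ≠ i0} → Fin K) := fun q i =>
    ⟨⌊(K : ℝ) * Int.fract (((q : ℕ) : ℤ) * v i / V : ℝ)⌋.toNat, hb q i⟩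
  have hcard : Fintype.card ({i : Fin n // i ≠ i0} → Fin K) < Fintype.card (Fin V.toNat) := by
    simp only [Fintype.card_fun, Fintype.card_fin, Fintype.card_subtype_compl,
      Fintype.card_subtype_eq]
    zify
    rw [Int.toNat_of_nonneg hVpos.le]; exact hV
  obtain ⟨q1, q2, hne, hf⟩ : ∃ q1 q2, q1 < q2 ∧ f q1 = f q2 := by
    obtain ⟨a, b, hab, h⟩ := Fintype.exists_ne_map_eq_of_card_lt f hcard
    rcases lt_or_gt_of_ne hab with h' | h'
    · exact ⟨a, b, h', h⟩
    · exact ⟨b, a, h', h.symm⟩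
  set p1 : ℤ := ((q1 : ℕ) : ℤ)
  set p2 : ℤ := ((q2 : ℕ) : ℤ)
  have hp : p1 < p2 := by simpa [p1, p2] using hne
  have hp2 : p2 < V := by have := q2.2; omega
  have hp1 : 0 ≤ p1 := by simp [p1]
  let w : Fin n → ℤ := fun i => ⌊(p2 : ℝ) * v i / V⌋ - ⌊(p1 : ℝ) * v i / V⌋
  have hwi0 : w i0 = p2 - p1 := by
    simp only [w]
    rw [← hVdef, mul_div_assoc, mul_div_assoc, div_self hVR.ne']; simp
  have heta : ∀ i, |((p2 - p1 : ℤ) : ℝ) * v i / V - w i| ≤ 1 / K := by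
    intro i
    by_cases hi : i = i0
    · subst hi
      rw [hwi0, ← hVdef, mul_div_assoc, div_self hVR.ne']; simp
    · have h := congrFun hf ⟨i, hi⟩
      simp only [f, Fin.mk.injEq] at h
      have e1 := Int.fract_nonneg ((p1 : ℝ) * v i / V)
      have e2 := Int.fract_nonneg ((p2 : ℝ) * v i / V)
      have g1 : 0 ≤ ⌊(K : ℝ) * Int.fract ((p1 : ℝ) * v i / V)⌋ := Int.floor_nonneg.2 (by positivity)
      have g2 : 0 ≤ ⌊(K : ℝ) * Int.fract ((p2 : ℝ) * v i / V)⌋ := Int.floor_nonneg.2 (by positivity)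
      have hfl : ⌊(K : ℝ) * Int.fract ((p1 : ℝ) * v i / V)⌋ = ⌊(K : ℝ) * Int.fract ((p2 : ℝ) * v i / V)⌋ := by
        have : ⌊(K : ℝ) * Int.fract ((p1 : ℝ) * v i / V)⌋.toNat = ⌊(K : ℝ) * Int.fract ((p2 : ℝ) * v i / V)⌋.toNat := h
        omega
      have h3 := Int.abs_sub_lt_one_of_floor_eq_floor hfl
      have h4 : ((p2 - p1 : ℤ) : ℝ) * v i / V - w i
          = Int.fract ((p2 : ℝ) * v i / V) - Int.fract ((p1 : ℝ) * v i / V) := by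
        simp only [w, Int.fract]; push_cast; ring
      rw [h4]
      rw [← mul_sub, abs_mul, abs_of_pos hKR, abs_sub_comm] at h3
      rw [le_div_iff₀ hKR]; nlinarith
  refine ⟨w, ?_, ?_⟩
  · by_contra hcon
    push Not at hcon
    have h1 : ∀ i, v i * (p2 - p1) = V * w i := by
      intro i
      have := hcon i i0
      rw [hwi0, ← hVdef] at this
      linarith
    -- V divides every v i * q, hence q
    have h2 : V ∣ p2 - p1 := by
      have hg : Finset.univ.gcd v = 1 := by
        have h := hprim (Finset.univ.gcd v) (fun i => Finset.gcd_dvd (Finset.mem_univ i))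
        have h' : normalize (Finset.univ.gcd v) = Finset.univ.gcd v := Finset.normalize_gcd
        rw [← h']
        exact normalize_eq_one.2 (isUnit_of_dvd_one h)
      have h3 : V ∣ Finset.univ.gcd (fun i => v i * (p2 - p1)) :=
        Finset.dvd_gcd (fun i _ => by rw [h1 i]; exact dvd_mul_right _ _)
      rw [Finset.gcd_mul_right, hg, one_mul] at h3
      exact (dvd_normalize_iff).1 h3
    have := Int.le_of_dvd (by omega) h2
    omega
  · rintro r ⟨x, y, hxy⟩
    set j : ℤ := round (-y) with hj
    refine ⟨x + y * ((p2 - p1 : ℤ) : ℝ) / V + j * ((p2 - p1 : ℤ) : ℝ) / V, fun i => ?_⟩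
    have h1 : |y + j| ≤ 1 / 2 := by
      have := abs_sub_round (-y)
      rw [← hj] at this
      rw [abs_le] at this ⊢
      constructor <;> linarith [this.1, this.2]
    have h2 : AA r (x * v i + y * w i + ((j * w i : ℤ) : ℝ)) := AA_add (hxy i) _ rfl
    have h3 := AA_pert (y := (x + y * ((p2 - p1 : ℤ) : ℝ) / V + j * ((p2 - p1 : ℤ) : ℝ) / V) * v i)
      (d := 1 / (2 * K)) h2 ?_
    · exact h3
    · have : (x + y * ((p2 - p1 : ℤ) : ℝ) / V + j * ((p2 - p1 : ℤ) : ℝ) / V) * v i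
        - (x * v i + y * w i + ((j * w i : ℤ) : ℝ))
        = (y + j) * (((p2 - p1 : ℤ) : ℝ) * v i / V - w i) := by push_cast; ring
      rw [this, abs_mul]
      calc _ ≤ 1 / 2 * (1 / (K : ℝ)) := mul_le_mul h1 (heta i) (abs_nonneg _) (by norm_num)
        _ = _ := by field_simp


/-- rational time: residues modulo `q` -/
lemma AA_rat {r : ℝ} {p q z : ℤ} (hq : 0 < q) (h1 : r * q ≤ ((p * z % q : ℤ) : ℝ))
    (h2 : ((p * z % q : ℤ) : ℝ) ≤ (1 - r) * q) : AA r ((p : ℝ) / q * z) := by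
  have hq' : (0 : ℝ) < q := by exact_mod_cast hq
  have h : (p : ℝ) * z = (p * z % q : ℤ) + q * (p * z / q : ℤ) := by
    exact_mod_cast (Int.emod_add_mul_ediv (p * z) q).symm
  refine ⟨p * z / q, ?_, ?_⟩
  · rw [div_mul_eq_mul_div, le_div_iff₀ hq', h]; nlinarith
  · rw [div_mul_eq_mul_div, div_le_iff₀ hq', h]; nlinarith

lemma two_coprime (a b : ℤ) (ha : 0 < a) (hb : 0 < b) (hab : IsCoprime a b) :
    ∃ t : ℝ, AA (1/3) (t * a) ∧ AA (1/3) (t * b) := by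
  obtain ⟨x, y, hxy⟩ := hab
  -- (x - y) * a + y * (a + b) = 1
  set m := a + b with hm
  have hm2 : 2 ≤ m := by omega
  have hmR : (2 : ℝ) ≤ m := by exact_mod_cast hm2
  set h := m / 2 with hh
  have hk : (h * (x - y)) * a = h - h * y * m := by
    have : (x - y) * a = 1 - y * m := by rw [hm]; linarith
    rw [mul_assoc, this]; ring
  have hkb : (h * (x - y)) * b = h * (x - y) * m - (h - h * y * m) := by
    rw [← hk, hm]; ring
  have hkR : ((h * (x - y) : ℤ) : ℝ) * a = h - h * y * m := by exact_mod_cast hk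
  have hkbR : ((h * (x - y) : ℤ) : ℝ) * b = (h * (x - y) : ℤ) * m - (h - h * y * m) := by
    exact_mod_cast hkb
  have h1 : (m : ℝ) ≤ 3 * h := by
    have : m ≤ 3 * h := by omega
    exact_mod_cast this
  have h2 : 2 * (h : ℝ) ≤ m := by
    have : 2 * h ≤ m := by omega
    exact_mod_cast this
  refine ⟨((h * (x - y) : ℤ) : ℝ) / m, ?_, ?_⟩
  · rw [div_mul_eq_mul_div, hkR]
    refine ⟨-(h * y), ?_, ?_⟩
    · rw [le_div_iff₀ (by linarith)]; push_cast; nlinarith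
    · rw [div_le_iff₀ (by linarith)]; push_cast; nlinarith
  · rw [div_mul_eq_mul_div, hkbR]
    refine ⟨h * (x - y) - 1 + h * y, ?_, ?_⟩
    · rw [le_div_iff₀ (by linarith)]; push_cast; nlinarith
    · rw [div_le_iff₀ (by linarith)]; push_cast; nlinarith

lemma two_speed (a b : ℤ) (ha : a ≠ 0) (hb : b ≠ 0) :
    ∃ t : ℝ, AA (1/3) (t * a) ∧ AA (1/3) (t * b) := by
  obtain ⟨a', ha'⟩ : gcd a b ∣ a := gcd_dvd_left a b
  obtain ⟨b', hb'⟩ : gcd a b ∣ b := gcd_dvd_right a b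
  set g := gcd a b with hg
  have hg0 : g ≠ 0 := by rintro h; rw [h] at ha'; simp at ha'; exact ha ha'
  have hcop : IsCoprime a' b' := by
    have : IsUnit (gcd a' b') := isUnit_gcd_of_eq_mul_gcd ha' hb' hg0
    exact (gcd_isUnit_iff a' b').1 this
  have ha0 : a' ≠ 0 := by rintro rfl; simp at ha'; exact ha ha'
  have hb0 : b' ≠ 0 := by rintro rfl; simp at hb'; exact hb hb'
  obtain ⟨t, h1, h2⟩ := two_coprime |a'| |b'| (abs_pos.2 ha0) (abs_pos.2 hb0)
    (by rcases abs_choice a' with h | h <;> rcases abs_choice b' with h' | h' <;> rw [h, h'] <;>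
        simpa [IsCoprime.neg_left_iff, IsCoprime.neg_right_iff] using hcop)
  rw [AA_abs] at h1 h2
  have hgR : (g : ℝ) ≠ 0 := by exact_mod_cast hg0
  refine ⟨t / g, ?_, ?_⟩
  · convert h1 using 1; rw [ha']; push_cast; field_simp
  · convert h2 using 1; rw [hb']; push_cast; field_simp

/-- a two-dimensional subtorus of the three-dimensional torus -/
lemma HH3 (v w : Fin 3 → ℤ) (hv : ∀ i, v i ≠ 0) (h : ∃ i j, v i * w j - v j * w i ≠ 0) :
    HH (1/3) v w := by
  -- main tool: `x_i = s x_j`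
  have tool : ∀ (i j k : Fin 3) (s : ℤ), s * s = 1 → (∀ l, l = i ∨ l = j ∨ l = k) →
      v i * w j - v j * w i ≠ 0 →
      (v k * w i - v i * w k) - s * (v k * w j - v j * w k) ≠ 0 → HH (1/3) v w := by
    intro i j k s hs hl hij hk
    obtain ⟨t, h1, h2⟩ := two_speed _ _ hij hk
    have hs' : s = 1 ∨ s = -1 := by
      rcases mul_self_eq_one_iff.1 hs with h | h <;> simp [h]
    refine ⟨t * (w i - s * w j), - t * (v i - s * v j), fun l => ?_⟩
    rcases hl l with rfl | rfl | rfl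
    · rcases hs' with rfl | rfl
      · convert AA_neg h1 using 1; push_cast; ring
      · convert h1 using 1; push_cast; ring
    · convert AA_neg h1 using 1; push_cast; ring
    · convert h2 using 1; push_cast; ring
  set a := v 0 * w 1 - v 1 * w 0 with ha
  set b := v 0 * w 2 - v 2 * w 0 with hb
  set d := v 1 * w 2 - v 2 * w 1 with hd
  have id1 : v 0 * d - v 1 * b + v 2 * a = 0 := by rw [ha, hb, hd]; ring
  have hnz : ¬ (a = 0 ∧ b = 0 ∧ d = 0) := by
    rintro ⟨h1, h2, h3⟩
    obtain ⟨i, j, hij⟩ := h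
    fin_cases i <;> fin_cases j <;> simp at hij <;>
      exact hij (by linarith)
  have t1 := tool 0 1 2
  have t2 := tool 0 2 1
  by_cases h0 : a = 0
  · -- then b ≠ 0
    have hb0 : b ≠ 0 := by
      intro hb0
      rw [hb0, h0] at id1
      have : d = 0 := by
        have : v 0 * d = 0 := by linarith
        exact (mul_eq_zero.1 this).resolve_left (hv 0)
      exact hnz ⟨h0, hb0, this⟩
    have hd0 : d ≠ 0 := by
      intro hd0
      rw [hd0, h0] at id1
      have : v 1 * b = 0 := by linarith
      exact hb0 ((mul_eq_zero.1 this).resolve_left (hv 1))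
    refine t2 1 (by norm_num) (by decide) hb0 ?_
    intro hh; apply hd0; linarith
  · by_cases hs : b = d
    · refine t1 (-1) (by norm_num) (by decide) h0 ?_
      intro hh
      have hbd : b + d = 0 := by linarith
      have hd0 : d = 0 := by omega
      have hb0 : b = 0 := by omega
      rw [hd0, hb0] at id1
      have : v 2 * a = 0 := by linarith
      exact h0 ((mul_eq_zero.1 this).resolve_left (hv 2))
    · refine t1 1 (by norm_num) (by decide) h0 ?_
      intro hh
      apply hs; linarith

/-- finite list of times for small triples -/
def times3 : List (ℕ × ℕ) :=
  [(1, 3), (3, 7), (1, 7), (2, 7), (3, 11), (3, 19), (9, 19), (1, 67), (1, 11), (1, 26), (1, 19),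
   (22, 45), (6, 19), (4, 19), (16, 91), (4, 11), (7, 18), (4, 37), (23, 66), (15, 34), (11, 34),
   (9, 76), (17, 45), (11, 86), (5, 52), (3, 10), (6, 13), (6, 25), (1, 15), (9, 40)]

def okr (q r : ℕ) : Bool := Nat.ble (11 * q) (42 * r) && Nat.ble (42 * r) (31 * q)

def okt (t : ℕ × ℕ) (a b c : ℕ) : Bool :=
  okr t.2 (t.1 * a % t.2) && (okr t.2 (t.1 * b % t.2) && okr t.2 (t.1 * c % t.2))

def chk3 (a b c : ℕ) : Bool :=
  times3.any (fun t => okt t a b c) || (!(Nat.beq (Nat.gcd (Nat.gcd a b) c) 1)) ||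
    (Nat.beq a 1 && (Nat.beq b 2 && Nat.beq c 3))

/-- bounded universal quantifier over `1..n` -/
def allN (f : ℕ → Bool) : ℕ → Bool
  | 0 => true
  | n + 1 => f (n + 1) && allN f n

lemma allN_spec {f : ℕ → Bool} {n : ℕ} (h : allN f n = true) {k : ℕ} (h1 : 1 ≤ k) (h2 : k ≤ n) :
    f k = true := by
  induction n with
  | zero => omega
  | succ n ih =>
    simp only [allN, Bool.and_eq_true] at h
    rcases Nat.lt_or_ge n k with hk | hk
    · have : k = n + 1 := by omega
      rw [this]; exact h.1
    · exact ih h.2 hk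

set_option maxRecDepth 100000 in
lemma chk3_all : allN (fun c => allN (fun b => allN (fun a => chk3 a b c) b) c) 49 = true := by
  decide +kernel

lemma three_small (a b c : ℕ) (ha : 1 ≤ a) (hab : a ≤ b) (hbc : b ≤ c) (hc : c ≤ 49)
    (hg : Nat.gcd (Nat.gcd a b) c = 1) :
    (∃ t : ℝ, AA (11/42) (t * (a : ℤ)) ∧ AA (11/42) (t * (b : ℤ)) ∧ AA (11/42) (t * (c : ℤ))) ∨
    (a = 1 ∧ b = 2 ∧ c = 3) := by
  have h := allN_spec (allN_spec (allN_spec chk3_all (by omega) hc) (by omega) hbc) ha hab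
  simp only [chk3, Bool.or_eq_true, Bool.and_eq_true, List.any_eq_true] at h
  rcases h with (⟨⟨p, q⟩, hmem, h⟩ | h) | h
  · left
    simp only [okt, okr, Bool.and_eq_true, Nat.ble_eq] at h
    have hq : 0 < q := by
      have : ∀ t ∈ times3, 0 < t.2 := by decide
      exact this _ hmem
    have key : ∀ z : ℕ, 11 * q ≤ 42 * (p * z % q) → 42 * (p * z % q) ≤ 31 * q →
        AA (11/42) (((p : ℤ) : ℝ) / (q : ℤ) * (z : ℤ)) := by
      intro z h1 h2
      have h1' : 11 * (q : ℝ) ≤ 42 * ((p * z % q : ℕ) : ℝ) := by exact_mod_cast h1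
      have h2' : 42 * ((p * z % q : ℕ) : ℝ) ≤ 31 * (q : ℝ) := by exact_mod_cast h2
      have e : (((p : ℤ) * (z : ℤ) % (q : ℤ) : ℤ) : ℝ) = ((p * z % q : ℕ) : ℝ) := by
        norm_cast
      apply AA_rat (by exact_mod_cast hq)
      · rw [e]; push_cast; linarith
      · rw [e]; push_cast; linarith
    exact ⟨_, key a h.1.1 h.1.2, key b h.2.1.1 h.2.1.2, key c h.2.2.1 h.2.2.2⟩
  · rw [hg] at h; simp at h
  · right
    simpa [Nat.beq_eq] using h


def T3 (r : ℝ) (a b c : ℤ) : Prop := ∃ t : ℝ, AA r (t * a) ∧ AA r (t * b) ∧ AA r (t * c)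

def R3 (a b c : ℤ) : Prop := ∃ g : ℤ, 0 < g ∧
  ((a = g ∧ b = 2 * g ∧ c = 3 * g) ∨ (a = g ∧ b = 3 * g ∧ c = 2 * g) ∨
   (a = 2 * g ∧ b = g ∧ c = 3 * g) ∨ (a = 2 * g ∧ b = 3 * g ∧ c = g) ∨
   (a = 3 * g ∧ b = g ∧ c = 2 * g) ∨ (a = 3 * g ∧ b = 2 * g ∧ c = g))

lemma three_prim (a b c : ℕ) (ha : 1 ≤ a) (hab : a ≤ b) (hbc : b ≤ c)
    (hg : Nat.gcd (Nat.gcd a b) c = 1) :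
    T3 (11/42) a b c ∨ (a = 1 ∧ b = 2 ∧ c = 3) := by
  by_cases hc : c ≤ 49
  · exact three_small a b c ha hab hbc hc hg
  · left
    have hprim : ∀ d : ℤ, (∀ i, d ∣ (![(a : ℤ), b, c] : Fin 3 → ℤ) i) → d ∣ 1 := by
      intro d hd
      have h0 := hd 0
      have h1 := hd 1
      have h2 := hd 2
      simp at h0 h1 h2
      rw [← Int.natAbs_dvd_natAbs]
      rw [← Int.natAbs_dvd_natAbs, Int.natAbs_natCast] at h0 h1 h2
      have := Nat.dvd_gcd (Nat.dvd_gcd h0 h1) h2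
      rw [hg] at this
      simpa using this
    obtain ⟨w, hw, hd⟩ := density (n := 3) (K := 7) (by norm_num) ![(a : ℤ), b, c] 2
      (by simp; omega) hprim
    have hH := HH3 ![(a : ℤ), b, c] w (by
      intro i; fin_cases i <;> simp <;> omega) hw
    obtain ⟨t, ht⟩ := hd _ hH
    have e : (1 / 3 - 1 / (2 * ((7 : ℕ) : ℝ))) = 11 / 42 := by norm_num
    rw [e] at ht
    exact ⟨t, by simpa using ht 0, by simpa using ht 1, by simpa using ht 2⟩

lemma three_sorted (a b c : ℕ) (ha : 1 ≤ a) (hab : a ≤ b) (hbc : b ≤ c) :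
    T3 (11/42) a b c ∨ ∃ g : ℕ, 0 < g ∧ a = g ∧ b = 2 * g ∧ c = 3 * g := by
  set g := Nat.gcd (Nat.gcd a b) c with hg
  have hgpos : 0 < g := Nat.gcd_pos_of_pos_right _ (by omega)
  obtain ⟨a', ha'⟩ : g ∣ a := (Nat.gcd_dvd_left _ _).trans (Nat.gcd_dvd_left _ _)
  obtain ⟨b', hb'⟩ : g ∣ b := (Nat.gcd_dvd_left _ _).trans (Nat.gcd_dvd_right _ _)
  obtain ⟨c', hc'⟩ : g ∣ c := Nat.gcd_dvd_right _ _
  have hg' : Nat.gcd (Nat.gcd a' b') c' = 1 := by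
    have : g * Nat.gcd (Nat.gcd a' b') c' = g * 1 := by
      rw [← Nat.gcd_mul_left, ← Nat.gcd_mul_left, ← ha', ← hb', ← hc', mul_one]
    exact Nat.eq_of_mul_eq_mul_left hgpos this
  have ha1 : 1 ≤ a' := by
    rcases Nat.eq_zero_or_pos a' with h | h
    · rw [h] at ha'; omega
    · exact h
  have hab1 : a' ≤ b' := by rw [ha', hb'] at hab; exact Nat.le_of_mul_le_mul_left hab hgpos
  have hbc1 : b' ≤ c' := by rw [hb', hc'] at hbc; exact Nat.le_of_mul_le_mul_left hbc hgpos
  rcases three_prim a' b' c' ha1 hab1 hbc1 hg' with ⟨t, h1, h2, h3⟩ | ⟨h1, h2, h3⟩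
  · left
    have hgR : (g : ℝ) ≠ 0 := by positivity
    refine ⟨t / g, ?_, ?_, ?_⟩
    · convert h1 using 1; rw [ha']; push_cast; field_simp
    · convert h2 using 1; rw [hb']; push_cast; field_simp
    · convert h3 using 1; rw [hc']; push_cast; field_simp
  · right
    refine ⟨g, hgpos, ?_, ?_, ?_⟩
    · rw [ha', h1, mul_one]
    · rw [hb', h2, mul_comm]
    · rw [hc', h3, mul_comm]

lemma three_speed (a b c : ℤ) (ha : a ≠ 0) (hb : b ≠ 0) (hc : c ≠ 0) :
    T3 (11/42) a b c ∨ R3 |a| |b| |c| := by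
  have key : ∀ x y z : ℤ, x ≠ 0 → |x| ≤ |y| → |y| ≤ |z| →
      T3 (11/42) x y z ∨ ∃ g : ℤ, 0 < g ∧ |x| = g ∧ |y| = 2 * g ∧ |z| = 3 * g := by
    intro x y z hx hxy hyz
    have hx' := abs_pos.2 hx
    have e1 := Int.abs_eq_natAbs x
    have e2 := Int.abs_eq_natAbs y
    have e3 := Int.abs_eq_natAbs z
    rcases three_sorted x.natAbs y.natAbs z.natAbs (by omega) (by omega) (by omega) with h | h
    · left
      obtain ⟨t, h1, h2, h3⟩ := h
      rw [Int.natCast_natAbs, AA_abs] at h1 h2 h3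
      exact ⟨t, h1, h2, h3⟩
    · right
      obtain ⟨g, h0, h1, h2, h3⟩ := h
      exact ⟨g, by omega, by omega, by omega, by omega⟩
  rcases le_total |a| |b| with h1 | h1 <;> rcases le_total |b| |c| with h2 | h2 <;>
    rcases le_total |a| |c| with h3 | h3
  · rcases key a b c ha h1 h2 with ⟨t, t1, t2, t3⟩ | ⟨g, g0, g1, g2, g3⟩
    · exact Or.inl ⟨t, t1, t2, t3⟩
    · exact Or.inr ⟨g, g0, Or.inl ⟨g1, g2, g3⟩⟩
  · rcases key a b c ha h1 h2 with ⟨t, t1, t2, t3⟩ | ⟨g, g0, g1, g2, g3⟩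
    · exact Or.inl ⟨t, t1, t2, t3⟩
    · exact Or.inr ⟨g, g0, Or.inl ⟨g1, g2, g3⟩⟩
  · rcases key a c b ha h3 h2 with ⟨t, t1, t2, t3⟩ | ⟨g, g0, g1, g2, g3⟩
    · exact Or.inl ⟨t, t1, t3, t2⟩
    · exact Or.inr ⟨g, g0, Or.inr (Or.inl ⟨g1, g3, g2⟩)⟩
  · rcases key c a b hc h3 h1 with ⟨t, t1, t2, t3⟩ | ⟨g, g0, g1, g2, g3⟩
    · exact Or.inl ⟨t, t2, t3, t1⟩
    · exact Or.inr ⟨g, g0, Or.inr (Or.inr (Or.inr (Or.inl ⟨g2, g3, g1⟩)))⟩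
  · rcases key b a c hb h1 h3 with ⟨t, t1, t2, t3⟩ | ⟨g, g0, g1, g2, g3⟩
    · exact Or.inl ⟨t, t2, t1, t3⟩
    · exact Or.inr ⟨g, g0, Or.inr (Or.inr (Or.inl ⟨g2, g1, g3⟩))⟩
  · rcases key b c a hb h2 h3 with ⟨t, t1, t2, t3⟩ | ⟨g, g0, g1, g2, g3⟩
    · exact Or.inl ⟨t, t3, t1, t2⟩
    · exact Or.inr ⟨g, g0, Or.inr (Or.inr (Or.inr (Or.inr (Or.inl ⟨g3, g1, g2⟩))))⟩
  · rcases key c b a hc h2 h1 with ⟨t, t1, t2, t3⟩ | ⟨g, g0, g1, g2, g3⟩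
    · exact Or.inl ⟨t, t3, t2, t1⟩
    · exact Or.inr ⟨g, g0, Or.inr (Or.inr (Or.inr (Or.inr (Or.inr (⟨g3, g2, g1⟩)))))⟩
  · rcases key c b a hc h2 h1 with ⟨t, t1, t2, t3⟩ | ⟨g, g0, g1, g2, g3⟩
    · exact Or.inl ⟨t, t3, t2, t1⟩
    · exact Or.inr ⟨g, g0, Or.inr (Or.inr (Or.inr (Or.inr (Or.inr (⟨g3, g2, g1⟩)))))⟩

/-- the lonely runner bound for three speeds -/
lemma three_quarter (a b c : ℤ) (ha : a ≠ 0) (hb : b ≠ 0) (hc : c ≠ 0) : T3 (1/4) a b c := by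
  rcases three_speed a b c ha hb hc with ⟨t, h1, h2, h3⟩ | ⟨g, hg, h⟩
  · exact ⟨t, AA_mono h1 (by norm_num), AA_mono h2 (by norm_num), AA_mono h3 (by norm_num)⟩
  · have hgR : (0 : ℝ) < g := by exact_mod_cast hg
    have k1 : AA (1/4) (1 / (4 * (g : ℝ)) * g) := ⟨0, by field_simp; norm_num, by field_simp; norm_num⟩
    have k2 : AA (1/4) (1 / (4 * (g : ℝ)) * ((2 * g : ℤ) : ℝ)) :=
      ⟨0, by push_cast; field_simp; norm_num, by push_cast; field_simp; norm_num⟩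
    have k3 : AA (1/4) (1 / (4 * (g : ℝ)) * ((3 * g : ℤ) : ℝ)) :=
      ⟨0, by push_cast; field_simp; norm_num, by push_cast; field_simp; norm_num⟩
    refine ⟨1 / (4 * (g : ℝ)), ?_⟩
    rw [← AA_abs, ← AA_abs (z := b), ← AA_abs (z := c)]
    rcases h with ⟨h1, h2, h3⟩ | ⟨h1, h2, h3⟩ | ⟨h1, h2, h3⟩ | ⟨h1, h2, h3⟩ | ⟨h1, h2, h3⟩ |
      ⟨h1, h2, h3⟩ <;> rw [h1, h2, h3] <;> exact ⟨by assumption, by assumption, by assumption⟩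


/-- sign -/
def sgs : List ℤ := [1, -1]

def dgs : List ℤ := [1, -1, 2, -2, 3, -3]

def okz (Q : ℕ) (n : ℤ) : Bool := okr Q (n % (Q : ℤ)).toNat

/-- candidate points `(x / Q, y / Q)`, stored as `(Q, x, y)` -/
def pts4 : List (ℕ × ℤ × ℤ) :=
  [(3, 1, 1), (3, 1, 2), (10, 4, 5), (10, 5, 4), (7, 1, 2), (7, 1, 5), (7, 1, 3), (7, 1, 4),
   (10, 1, 2), (10, 1, 8), (7, 3, 1), (7, 3, 6), (7, 2, 1), (7, 2, 6), (7, 2, 3), (7, 2, 4),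
   (10, 2, 1), (10, 2, 9), (6, 1, 3), (10, 4, 1), (10, 4, 9), (7, 3, 3), (7, 3, 4), (5, 1, 2),
   (5, 1, 3), (6, 3, 1), (7, 2, 2), (7, 2, 5), (10, 1, 4), (10, 1, 6), (10, 1, 3), (10, 1, 7)]

def hhok (c d : Fin 4 → ℤ) : Bool := pts4.any fun p =>
  okz p.1 (p.2.1 * c 0 + p.2.2 * d 0) && (okz p.1 (p.2.1 * c 1 + p.2.2 * d 1) &&
    (okz p.1 (p.2.1 * c 2 + p.2.2 * d 2) && okz p.1 (p.2.1 * c 3 + p.2.2 * d 3)))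

/-- orderings of the four indices -/
def idx4 : List (Fin 4 × Fin 4 × Fin 4 × Fin 4) :=
  [(0,1,2,3),(0,1,3,2),(0,2,1,3),(0,2,3,1),(0,3,1,2),(0,3,2,1),
   (1,0,2,3),(1,0,3,2),(1,2,0,3),(1,2,3,0),(1,3,0,2),(1,3,2,0),
   (2,0,1,3),(2,0,3,1),(2,1,0,3),(2,1,3,0),(2,3,0,1),(2,3,1,0),
   (3,0,1,2),(3,0,2,1),(3,1,0,2),(3,1,2,0),(3,2,0,1),(3,2,1,0)]

def C4 (i j k l : Fin 4) : Prop := ∀ m, m = i ∨ m = j ∨ m = k ∨ m = l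

instance (i j k l : Fin 4) : Decidable (C4 i j k l) := by unfold C4; infer_instance

def Ur1 (c d : Fin 4 → ℤ) : Prop := ∃ i j k l, C4 i j k l ∧ ∃ s ∈ sgs, ∃ t ∈ sgs,
  c j = 2 * s * c i ∧ d j = 2 * s * d i ∧ c k = 3 * t * c i ∧ d k = 3 * t * d i

def Ur2 (c d : Fin 4 → ℤ) : Prop := ∃ i j k l, C4 i j k l ∧
  (∃ s ∈ sgs, ∃ t ∈ sgs, c k = s * c i + t * c j ∧ d k = s * d i + t * d j) ∧
  (∃ s ∈ sgs, ∃ t ∈ sgs, c l = s * c i + t * c j ∧ d l = s * d i + t * d j)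

def ur1 (c d : Fin 4 → ℤ) : Bool := idx4.any fun p => sgs.any fun s => sgs.any fun t =>
  decide (c p.2.1 = 2 * s * c p.1) && (decide (d p.2.1 = 2 * s * d p.1) &&
  (decide (c p.2.2.1 = 3 * t * c p.1) && decide (d p.2.2.1 = 3 * t * d p.1)))

def ur2 (c d : Fin 4 → ℤ) : Bool := idx4.any fun p =>
  (sgs.any fun s => sgs.any fun t => decide (c p.2.2.1 = s * c p.1 + t * c p.2.1) &&
    decide (d p.2.2.1 = s * d p.1 + t * d p.2.1)) &&
  (sgs.any fun s => sgs.any fun t => decide (c p.2.2.2 = s * c p.1 + t * c p.2.1) &&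
    decide (d p.2.2.2 = s * d p.1 + t * d p.2.1))

def surj3 (d : Fin 4 → ℤ) : Prop := ∀ x ∈ [1, 2, 3], ∃ m, (d m).natAbs = x

def surj3b (a b c d : ℕ) : Bool := [1, 2, 3].all fun x =>
  Nat.beq a x || (Nat.beq b x || (Nat.beq c x || Nat.beq d x))

def clist : List (ℤ × ℤ × ℤ) := [(1,2,3),(1,3,2),(2,1,3),(2,3,1),(3,1,2),(3,2,1)]

def chk4 : Bool := clist.all fun c => dgs.all fun d0 => dgs.all fun d1 =>
  Nat.beq d0.natAbs d1.natAbs || dgs.all fun d2 => dgs.all fun d3 =>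
  !(surj3b d0.natAbs d1.natAbs d2.natAbs d3.natAbs) ||
  (hhok ![c.1, c.1, c.2.1, c.2.2] ![d0, d1, d2, d3] ||
  (ur1 ![c.1, c.1, c.2.1, c.2.2] ![d0, d1, d2, d3] ||
   ur2 ![c.1, c.1, c.2.1, c.2.2] ![d0, d1, d2, d3]))

set_option maxRecDepth 100000 in
lemma chk4_true : chk4 = true := by decide +kernel


lemma idx4_C4 : ∀ p ∈ idx4, C4 p.1 p.2.1 p.2.2.1 p.2.2.2 := by decide +kernel

lemma ur1_sound {c d : Fin 4 → ℤ} (h : ur1 c d = true) : Ur1 c d := by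
  simp only [ur1, List.any_eq_true, Bool.and_eq_true, decide_eq_true_eq] at h
  obtain ⟨p, hp, s, hs, t, ht, h1, h2, h3, h4⟩ := h
  exact ⟨_, _, _, _, idx4_C4 p hp, s, hs, t, ht, h1, h2, h3, h4⟩

lemma ur2_sound {c d : Fin 4 → ℤ} (h : ur2 c d = true) : Ur2 c d := by
  simp only [ur2, List.any_eq_true, Bool.and_eq_true, decide_eq_true_eq] at h
  obtain ⟨p, hp, ⟨s, hs, t, ht, h1, h2⟩, s', hs', t', ht', h3, h4⟩ := h
  exact ⟨_, _, _, _, idx4_C4 p hp, ⟨s, hs, t, ht, h1, h2⟩, s', hs', t', ht', h3, h4⟩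

lemma okz_sound {Q : ℕ} {n : ℤ} (hQ : 0 < Q) (h : okz Q n = true) : AA (11/42) ((n : ℝ) / Q) := by
  simp only [okz, okr, Bool.and_eq_true, Nat.ble_eq] at h
  have hQ' : (0 : ℤ) < Q := by exact_mod_cast hQ
  have hn := Int.emod_nonneg n hQ'.ne'
  have e : ((n % (Q : ℤ)).toNat : ℤ) = n % Q := Int.toNat_of_nonneg hn
  obtain ⟨h1, h2⟩ := h
  have h1' : 11 * (Q : ℤ) ≤ 42 * (n % Q) := by rw [← e]; exact_mod_cast h1
  have h2' : 42 * (n % Q) ≤ 31 * (Q : ℤ) := by rw [← e]; exact_mod_cast h2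
  have h1R : 11 * (Q : ℝ) ≤ 42 * ((n % (Q : ℤ) : ℤ) : ℝ) := by exact_mod_cast h1'
  have h2R : 42 * ((n % (Q : ℤ) : ℤ) : ℝ) ≤ 31 * (Q : ℝ) := by exact_mod_cast h2'
  have := AA_rat (r := 11/42) (p := n) (q := Q) (z := 1) hQ'
    (by rw [mul_one]; push_cast at h1R ⊢; linarith) (by rw [mul_one]; push_cast at h2R ⊢; linarith)
  simpa using this

lemma hhok_sound {c d : Fin 4 → ℤ} (h : hhok c d = true) : HH (11/42) c d := by
  simp only [hhok, List.any_eq_true, Bool.and_eq_true] at h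
  obtain ⟨⟨Q, x, y⟩, hp, h0, h1, h2, h3⟩ := h
  have hQ : 0 < Q := by
    have : ∀ p ∈ pts4, 0 < p.1 := by decide
    exact this _ hp
  have hQR : (0 : ℝ) < Q := by exact_mod_cast hQ
  have key : ∀ i, AA (11/42) (((x * c i + y * d i : ℤ) : ℝ) / Q) := by
    intro i
    fin_cases i
    · exact okz_sound hQ h0
    · exact okz_sound hQ h1
    · exact okz_sound hQ h2
    · exact okz_sound hQ h3
  refine ⟨x / Q, y / Q, fun i => ?_⟩
  convert key i using 1
  push_cast; field_simp

def VV (z z' : Fin 4 → ℤ) : Prop := HH (11/42) z z' ∨ Ur1 z z' ∨ Ur2 z z'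

lemma chk_core (c0 c2 c3 : ℤ) (d : Fin 4 → ℤ) (hc : (c0, c2, c3) ∈ clist)
    (hd : ∀ m, d m ∈ dgs) (h01 : (d 0).natAbs ≠ (d 1).natAbs) (hs : surj3 d) :
    VV ![c0, c0, c2, c3] d := by
  have h := chk4_true
  simp only [chk4, List.all_eq_true, Bool.or_eq_true] at h
  have h := (h _ hc _ (hd 0) _ (hd 1)).resolve_left (by simpa using h01)
  have h := (h _ (hd 2) _ (hd 3)).resolve_left (by
    simp only [surj3b, Bool.not_eq_true', ← Bool.not_eq_true, not_not]
    simp only [List.all_eq_true, Bool.or_eq_true, Nat.beq_eq]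
    intro x hx
    obtain ⟨m, hm⟩ := hs x hx
    fin_cases m
    · exact Or.inl hm
    · exact Or.inr (Or.inl hm)
    · exact Or.inr (Or.inr (Or.inl hm))
    · exact Or.inr (Or.inr (Or.inr hm)))
  have e : ![d 0, d 1, d 2, d 3] = d := by ext i; fin_cases i <;> rfl
  rw [e] at h
  rcases h with h | h | h
  · exact Or.inl (hhok_sound h)
  · exact Or.inr (Or.inl (ur1_sound h))
  · exact Or.inr (Or.inr (ur2_sound h))

lemma sgs_iff {s : ℤ} : s ∈ sgs ↔ s = 1 ∨ s = -1 := by simp [sgs]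

lemma sgs_mul {s t : ℤ} (hs : s ∈ sgs) (ht : t ∈ sgs) : s * t ∈ sgs := by
  rw [sgs_iff] at *
  rcases hs with rfl | rfl <;> rcases ht with rfl | rfl <;> simp

lemma sgs_sq {s : ℤ} (hs : s ∈ sgs) : s * s = 1 := by
  rw [sgs_iff] at *
  rcases hs with rfl | rfl <;> simp

lemma VV_scale {c d z z' ε : Fin 4 → ℤ} {g g' : ℤ} (hg : 0 < g) (hg' : 0 < g')
    (hε : ∀ m, ε m ∈ sgs) (hz : ∀ m, z m = ε m * (g * c m)) (hz' : ∀ m, z' m = ε m * (g' * d m))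
    (h : VV c d) : VV z z' := by
  have hgR : (0 : ℝ) < g := by exact_mod_cast hg
  have hgR' : (0 : ℝ) < g' := by exact_mod_cast hg'
  rcases h with ⟨x, y, h⟩ | ⟨i, j, k, l, hC, s, hs, t, ht, h1, h2, h3, h4⟩ |
    ⟨i, j, k, l, hC, ⟨s, hs, t, ht, h1, h2⟩, s', hs', t', ht', h3, h4⟩
  · left
    refine ⟨x / g, y / g', fun i => ?_⟩
    have hi := h i
    rw [hz i, hz' i]
    rcases sgs_iff.1 (hε i) with e | e <;> rw [e]
    · convert hi using 1; push_cast; field_simp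
    · convert AA_neg hi using 1; push_cast; field_simp; ring
  · right; left
    have ei := sgs_sq (hε i)
    refine ⟨i, j, k, l, hC, s * (ε i * ε j), sgs_mul hs (sgs_mul (hε i) (hε j)),
      t * (ε i * ε k), sgs_mul ht (sgs_mul (hε i) (hε k)), ?_, ?_, ?_, ?_⟩
    · rw [hz, hz, h1]; linear_combination (-2 * s * ε j * g * c i) * ei
    · rw [hz', hz', h2]; linear_combination (-2 * s * ε j * g' * d i) * ei
    · rw [hz, hz, h3]; linear_combination (-3 * t * ε k * g * c i) * ei
    · rw [hz', hz', h4]; linear_combination (-3 * t * ε k * g' * d i) * ei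
  · right; right
    have ei := sgs_sq (hε i)
    have ej := sgs_sq (hε j)
    refine ⟨i, j, k, l, hC, ⟨s * (ε i * ε k), sgs_mul hs (sgs_mul (hε i) (hε k)),
      t * (ε j * ε k), sgs_mul ht (sgs_mul (hε j) (hε k)), ?_, ?_⟩,
      s' * (ε i * ε l), sgs_mul hs' (sgs_mul (hε i) (hε l)),
      t' * (ε j * ε l), sgs_mul ht' (sgs_mul (hε j) (hε l)), ?_, ?_⟩
    · rw [hz, hz, hz, h1]
      linear_combination (-s * ε k * g * c i) * ei + (-t * ε k * g * c j) * ej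
    · rw [hz', hz', hz', h2]
      linear_combination (-s * ε k * g' * d i) * ei + (-t * ε k * g' * d j) * ej
    · rw [hz, hz, hz, h3]
      linear_combination (-s' * ε l * g * c i) * ei + (-t' * ε l * g * c j) * ej
    · rw [hz', hz', hz', h4]
      linear_combination (-s' * ε l * g' * d i) * ei + (-t' * ε l * g' * d j) * ej

lemma VV_perm {z z' : Fin 4 → ℤ} {σ : Fin 4 → Fin 4} (hσ : Function.Bijective σ)
    (h : VV (z ∘ σ) (z' ∘ σ)) : VV z z' := by
  have hC : ∀ i j k l, C4 i j k l → C4 (σ i) (σ j) (σ k) (σ l) := by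
    intro i j k l h m
    obtain ⟨m, rfl⟩ := hσ.2 m
    rcases h m with rfl | rfl | rfl | rfl <;> simp
  rcases h with ⟨x, y, h⟩ | ⟨i, j, k, l, h, h'⟩ | ⟨i, j, k, l, h, h'⟩
  · left
    refine ⟨x, y, fun i => ?_⟩
    obtain ⟨m, rfl⟩ := hσ.2 i
    exact h m
  · right; left
    exact ⟨_, _, _, _, hC _ _ _ _ h, h'⟩
  · right; right
    exact ⟨_, _, _, _, hC _ _ _ _ h, h'⟩

/-- magnitudes `g, 2g, 3g`, all occurring -/
def S3 (z : Fin 4 → ℤ) : Prop := ∃ g : ℤ, 0 < g ∧ (∀ m, |z m| = g ∨ |z m| = 2 * g ∨ |z m| = 3 * g) ∧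
  (∃ m, |z m| = g) ∧ (∃ m, |z m| = 2 * g) ∧ (∃ m, |z m| = 3 * g)

lemma core01 {z z' : Fin 4 → ℤ} (h01 : |z 0| = |z 1|) (hR : R3 |z 0| |z 2| |z 3|)
    (hS : S3 z') (hne : |z' 0| ≠ |z' 1|) : VV z z' := by
  obtain ⟨g', hg', hm, hs1, hs2, hs3⟩ := hS
  obtain ⟨g, hg, hR⟩ := hR
  have hc : ∃ c0 c2 c3 : ℤ, (c0, c2, c3) ∈ clist ∧ |z 0| = g * c0 ∧ |z 2| = g * c2 ∧
      |z 3| = g * c3 := by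
    rcases hR with ⟨h1, h2, h3⟩ | ⟨h1, h2, h3⟩ | ⟨h1, h2, h3⟩ | ⟨h1, h2, h3⟩ | ⟨h1, h2, h3⟩ |
      ⟨h1, h2, h3⟩
    · exact ⟨1, 2, 3, by decide, by omega, by omega, by omega⟩
    · exact ⟨1, 3, 2, by decide, by omega, by omega, by omega⟩
    · exact ⟨2, 1, 3, by decide, by omega, by omega, by omega⟩
    · exact ⟨2, 3, 1, by decide, by omega, by omega, by omega⟩
    · exact ⟨3, 1, 2, by decide, by omega, by omega, by omega⟩
    · exact ⟨3, 2, 1, by decide, by omega, by omega, by omega⟩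
  obtain ⟨c0, c2, c3, hc, h0, h2, h3⟩ := hc
  have hε : ∀ m, ∃ e ∈ sgs, z m = e * |z m| := by
    intro m
    rcases abs_choice (z m) with h | h
    · exact ⟨1, by decide, by rw [h]; ring⟩
    · exact ⟨-1, by decide, by rw [h]; ring⟩
  choose ε hε1 hε2 using hε
  have hd : ∀ m, ∃ d ∈ dgs, ε m * z' m = g' * d := by
    intro m
    have : |ε m * z' m| = |z' m| := by
      rcases sgs_iff.1 (hε1 m) with e | e <;> rw [e] <;> simp
    have hm := hm m
    rw [← this] at hm
    rcases hm with hm | hm | hm <;> rcases abs_choice (ε m * z' m) with h | h <;> rw [h] at hm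
    · exact ⟨1, by decide, by omega⟩
    · exact ⟨-1, by decide, by omega⟩
    · exact ⟨2, by decide, by omega⟩
    · exact ⟨-2, by decide, by omega⟩
    · exact ⟨3, by decide, by omega⟩
    · exact ⟨-3, by decide, by omega⟩
  choose d hd1 hd2 using hd
  have hz' : ∀ m, z' m = ε m * (g' * d m) := by
    intro m
    have := sgs_sq (hε1 m)
    rw [← hd2 m]; linear_combination (-z' m) * this
  have habs : ∀ m, |z' m| = g' * |d m| := by
    intro m
    rw [hz' m, abs_mul, abs_mul, abs_of_pos hg']
    rcases sgs_iff.1 (hε1 m) with e | e <;> rw [e] <;> simp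
  have hcan : ∀ m x, |z' m| = x * g' → |d m| = x := by
    intro m x h
    rw [habs m] at h
    have : g' * |d m| = g' * x := by rw [h]; ring
    exact mul_left_cancel₀ hg'.ne' this
  refine VV_scale (c := ![c0, c0, c2, c3]) (d := d) (ε := ε) hg hg' hε1 ?_ hz' ?_
  · intro m
    rw [hε2 m]
    fin_cases m
    · show _ = ε 0 * (g * c0); rw [← h0]; rfl
    · show _ = ε 1 * (g * c0); rw [← h0, h01]; rfl
    · show _ = ε 2 * (g * c2); rw [← h2]; rfl
    · show _ = ε 3 * (g * c3); rw [← h3]; rfl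
  · refine chk_core c0 c2 c3 d hc hd1 ?_ ?_
    · intro h
      apply hne
      rw [habs, habs, Int.abs_eq_natAbs, Int.abs_eq_natAbs, h]
    · intro x hx
      obtain ⟨m, hm⟩ : ∃ m, |d m| = x := by
        simp only [List.mem_cons, List.not_mem_nil, or_false] at hx
        rcases hx with rfl | rfl | rfl
        · obtain ⟨m, hm⟩ := hs1; exact ⟨m, hcan m _ (by push_cast; omega)⟩
        · obtain ⟨m, hm⟩ := hs2; exact ⟨m, hcan m _ (by push_cast; omega)⟩
        · obtain ⟨m, hm⟩ := hs3; exact ⟨m, hcan m _ (by push_cast; omega)⟩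
      exact ⟨m, by rw [Int.abs_eq_natAbs] at hm; exact_mod_cast hm⟩

lemma core {z z' : Fin 4 → ℤ} {i j k l : Fin 4} (hC : C4 i j k l) (hij : |z i| = |z j|)
    (hR : R3 |z i| |z k| |z l|) (hS : S3 z') (hne : |z' i| ≠ |z' j|) : VV z z' := by
  have hsur : Function.Surjective ![i, j, k, l] := by
    intro m
    rcases hC m with rfl | rfl | rfl | rfl
    · exact ⟨0, rfl⟩
    · exact ⟨1, rfl⟩
    · exact ⟨2, rfl⟩
    · exact ⟨3, rfl⟩
  have hbij : Function.Bijective ![i, j, k, l] := ⟨Finite.injective_iff_surjective.2 hsur, hsur⟩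
  apply VV_perm hbij
  refine core01 hij hR ?_ hne
  obtain ⟨g, hg, h, ⟨m1, h1⟩, ⟨m2, h2⟩, ⟨m3, h3⟩⟩ := hS
  obtain ⟨m1, rfl⟩ := hsur m1
  obtain ⟨m2, rfl⟩ := hsur m2
  obtain ⟨m3, rfl⟩ := hsur m3
  exact ⟨g, hg, fun m => h _, ⟨m1, h1⟩, ⟨m2, h2⟩, ⟨m3, h3⟩⟩


def U1 (v : Fin 4 → ℤ) : Prop := ∃ i j k l, C4 i j k l ∧ |v j| = 2 * |v i| ∧ |v k| = 3 * |v i|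

def U2 (v : Fin 4 → ℤ) : Prop := ∃ i j k l, C4 i j k l ∧
  (|v k| = |v i + v j| ∨ |v k| = |v i - v j|) ∧ (|v l| = |v i + v j| ∨ |v l| = |v i - v j|)

def PP (v w : Fin 4 → ℤ) (i j : Fin 4) : ℤ := v i * w j - v j * w i

def ZP (v w : Fin 4 → ℤ) (i j k l : Fin 4) : Prop := PP v w i j ≠ 0 ∧ ∃ s ∈ sgs,
  PP v w k i - s * PP v w k j ≠ 0 ∧ PP v w l i - s * PP v w l j ≠ 0

lemma C4_ne {i j k l : Fin 4} (h : C4 i j k l) :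
    i ≠ j ∧ i ≠ k ∧ i ≠ l ∧ j ≠ k ∧ j ≠ l ∧ k ≠ l := by
  revert i j k l; unfold C4; decide +kernel

lemma lemmaA {v w : Fin 4 → ℤ} {i j k l : Fin 4} (hC : C4 i j k l) (h : ZP v w i j k l) :
    HH (11/42) v w ∨ ∃ p q : ℤ, ∃ z : Fin 4 → ℤ, (∀ m, z m = p * v m + q * w m) ∧
      |z i| = |z j| ∧ R3 |z i| |z k| |z l| := by
  obtain ⟨hij, s, hs, hk, hl⟩ := h
  set z : Fin 4 → ℤ := fun m => (w i - s * w j) * v m + (-(v i - s * v j)) * w m with hz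
  have zi : z i = -s * PP v w i j := by simp only [hz, PP]; ring
  have zj : z j = - PP v w i j := by simp only [hz, PP]; ring
  have zk : z k = PP v w k i - s * PP v w k j := by simp only [hz, PP]; ring
  have zl : z l = PP v w l i - s * PP v w l j := by simp only [hz, PP]; ring
  have zij : |z i| = |z j| := by
    rw [zi, zj]
    rcases sgs_iff.1 hs with rfl | rfl <;> simp
  have hzi : z i ≠ 0 := by
    rw [← abs_pos, zij, abs_pos, zj]; simpa using hij
  rcases three_speed (z i) (z k) (z l) hzi (by rwa [zk]) (by rwa [zl]) with ⟨t, h1, h2, h3⟩ | h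
  · left
    refine ⟨t * (w i - s * w j), t * (-(v i - s * v j)), fun m => ?_⟩
    have : AA (11/42) (t * z m) := by
      rcases hC m with rfl | rfl | rfl | rfl
      · exact h1
      · exact AA_of_abs zij h1
      · exact h2
      · exact h3
    convert this using 1
    simp only [hz]; push_cast; ring
  · right
    exact ⟨_, _, z, fun m => rfl, zij, h⟩

lemma lemmaB {v w : Fin 4 → ℤ} {i j k l i' j' k' l' : Fin 4} (hC : C4 i j k l)
    (hC' : C4 i' j' k' l') (h : ZP v w i j k l) (h' : ZP v w i' j' k' l')
    (hd : ¬ ((i = i' ∧ j = j') ∨ (i = j' ∧ j = i'))) : HH (11/42) v w ∨ U1 v ∨ U2 v := by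
  rcases lemmaA hC h with h | ⟨p, q, z, hz, zij, hR⟩
  · exact Or.inl h
  rcases lemmaA hC' h' with h | ⟨p', q', z', hz', zij', hR'⟩
  · exact Or.inl h
  have hS : S3 z' := by
    obtain ⟨g, hg, hr⟩ := hR'
    refine ⟨g, hg, ?_, ?_⟩
    · intro m
      rcases hC' m with rfl | rfl | rfl | rfl
      · omega
      · rw [← zij']; omega
      · omega
      · omega
    · rcases hr with ⟨h1, h2, h3⟩ | ⟨h1, h2, h3⟩ | ⟨h1, h2, h3⟩ | ⟨h1, h2, h3⟩ | ⟨h1, h2, h3⟩ |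
        ⟨h1, h2, h3⟩
      · exact ⟨⟨_, h1⟩, ⟨_, h2⟩, ⟨_, h3⟩⟩
      · exact ⟨⟨_, h1⟩, ⟨_, h3⟩, ⟨_, h2⟩⟩
      · exact ⟨⟨_, h2⟩, ⟨_, h1⟩, ⟨_, h3⟩⟩
      · exact ⟨⟨_, h3⟩, ⟨_, h1⟩, ⟨_, h2⟩⟩
      · exact ⟨⟨_, h2⟩, ⟨_, h3⟩, ⟨_, h1⟩⟩
      · exact ⟨⟨_, h3⟩, ⟨_, h2⟩, ⟨_, h1⟩⟩
  have hne : |z' i| ≠ |z' j| := by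
    obtain ⟨g, hg, hr⟩ := hR'
    have hij := (C4_ne hC).1
    have n1 : |z' i'| ≠ |z' k'| := by omega
    have n2 : |z' i'| ≠ |z' l'| := by omega
    have n3 : |z' k'| ≠ |z' l'| := by omega
    have n4 : |z' j'| ≠ |z' k'| := by omega
    have n5 : |z' j'| ≠ |z' l'| := by omega
    rcases hC' i with e | e | e | e <;> rcases hC' j with f | f | f | f <;> rw [e, f] <;>
      first
      | assumption
      | (apply Ne.symm; assumption)
      | (exfalso; exact hij (e.trans f.symm))
      | (exfalso; exact hd (Or.inl ⟨e, f⟩))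
      | (exfalso; exact hd (Or.inr ⟨e, f⟩))
  have hD : p * q' - q * p' ≠ 0 := by
    intro hD
    have e1 : z i * z' j - z j * z' i = 0 := by
      rw [hz, hz, hz', hz']; linear_combination (v i * w j - v j * w i) * hD
    have zi0 : |z i| ≠ 0 := by
      obtain ⟨g, hg, hr⟩ := hR
      omega
    have e2 : |z i| * |z' j| = |z j| * |z' i| := by rw [← abs_mul, ← abs_mul]; congr 1; linarith
    rw [zij] at e2 zi0
    exact hne (mul_left_cancel₀ zi0 e2).symm
  have hv : ∀ m, (p * q' - q * p') * v m = q' * z m - q * z' m := by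
    intro m; rw [hz, hz']; ring
  rcases core hC zij hR hS hne with ⟨x, y, h⟩ | ⟨i, j, k, l, hC, s, hs, t, ht, h1, h2, h3, h4⟩ |
    ⟨i, j, k, l, hC, ⟨s, hs, t, ht, h1, h2⟩, s', hs', t', ht', h3, h4⟩
  · left
    refine ⟨x * p + y * p', x * q + y * q', fun m => ?_⟩
    convert h m using 1
    rw [hz, hz']; push_cast; ring
  · right; left
    refine ⟨i, j, k, l, hC, ?_, ?_⟩
    · have : v j = 2 * s * v i := by
        apply mul_left_cancel₀ hD
        rw [hv, h1, h2]; linear_combination (-2 * s) * hv i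
      rw [this]
      rcases sgs_iff.1 hs with rfl | rfl <;> simp [abs_mul]
    · have : v k = 3 * t * v i := by
        apply mul_left_cancel₀ hD
        rw [hv, h3, h4]; linear_combination (-3 * t) * hv i
      rw [this]
      rcases sgs_iff.1 ht with rfl | rfl <;> simp [abs_mul]
  · right; right
    have aux : ∀ s ∈ sgs, ∀ t ∈ sgs, ∀ x y z : ℤ, z = s * x + t * y → |z| = |x + y| ∨ |z| = |x - y| := by
      intro s hs t ht x y z h
      rcases sgs_iff.1 hs with rfl | rfl <;> rcases sgs_iff.1 ht with rfl | rfl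
      · left; rw [h]; ring_nf
      · right; rw [h]; ring_nf
      · right; rw [h, ← abs_neg]; ring_nf
      · left; rw [h, ← abs_neg]; ring_nf
    refine ⟨i, j, k, l, hC, aux s hs t ht _ _ _ ?_, aux s' hs' t' ht' _ _ _ ?_⟩
    · apply mul_left_cancel₀ hD
      rw [hv, h1, h2]; linear_combination (-s) * hv i - t * hv j
    · apply mul_left_cancel₀ hD
      rw [hv, h3, h4]; linear_combination (-s') * hv i - t' * hv j

/-- generic killing criterion -/
lemma ZP_gen {v w : Fin 4 → ℤ} {i j k l : Fin 4} (hij : PP v w i j ≠ 0)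
    (hk : PP v w k i ≠ 0 ∨ PP v w k j ≠ 0) (hl : PP v w l i ≠ 0 ∨ PP v w l j ≠ 0)
    (h : ¬ ZP v w i j k l) : |PP v w k i| = |PP v w k j| ∧ |PP v w l i| = |PP v w l j| := by
  have h1 : ¬ (PP v w k i - 1 * PP v w k j ≠ 0 ∧ PP v w l i - 1 * PP v w l j ≠ 0) :=
    fun hh => h ⟨hij, 1, by decide, hh⟩
  have h2 : ¬ (PP v w k i - (-1) * PP v w k j ≠ 0 ∧ PP v w l i - (-1) * PP v w l j ≠ 0) :=
    fun hh => h ⟨hij, -1, by decide, hh⟩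
  rw [abs_eq_abs, abs_eq_abs]
  omega

lemma PP_trans {v w : Fin 4 → ℤ} (hv : ∀ i, v i ≠ 0) {i j k : Fin 4} (h1 : PP v w i j = 0)
    (h2 : PP v w j k = 0) : PP v w i k = 0 := by
  have : v j * PP v w i k = 0 := by
    unfold PP at *; linear_combination v k * h1 + v i * h2
  exact (mul_eq_zero.1 this).resolve_left (hv j)

lemma PP_symm (v w : Fin 4 → ℤ) (i j : Fin 4) : PP v w j i = - PP v w i j := by
  unfold PP; ring

lemma C4_perm {i j k l : Fin 4} (h : C4 i j k l) : C4 i k j l ∧ C4 j k i l ∧ C4 i l j k ∧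
    C4 j l i k := by
  refine ⟨?_, ?_, ?_, ?_⟩ <;> intro m <;> have := h m <;> tauto

lemma classify {v w : Fin 4 → ℤ} (hv : ∀ i, v i ≠ 0) (hP : ∃ i j, PP v w i j ≠ 0) :
    HH (11/42) v w ∨ U1 v ∨ U2 v := by
  by_contra hcon
  have hno : ∀ {i j k l i' j' k' l' : Fin 4}, C4 i j k l → C4 i' j' k' l' → ZP v w i j k l →
    ZP v w i' j' k' l' → ¬ ((i = i' ∧ j = j') ∨ (i = j' ∧ j = i')) → False :=
    fun h1 h2 h3 h4 h5 => hcon (lemmaB h1 h2 h3 h4 h5)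
  have sy := PP_symm v w
  -- no vanishing minors
  have hnz : ∀ i j k l, C4 i j k l → PP v w i j ≠ 0 := by
    intro i j k l hC h0
    obtain ⟨c1, c2, c3, c4⟩ := C4_perm hC
    obtain ⟨n1, n2, n3, n4, n5, n6⟩ := C4_ne hC
    have h0' : PP v w j i = 0 := by rw [sy, h0, neg_zero]
    by_cases hik : PP v w i k = 0
    · have hjk : PP v w j k = 0 := PP_trans hv h0' hik
      have hki : PP v w k i = 0 := by rw [sy, hik, neg_zero]
      have hkj : PP v w k j = 0 := by rw [sy, hjk, neg_zero]
      have hil : PP v w i l ≠ 0 := by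
        intro hil
        have hself : ∀ m, PP v w i m = 0 := by
          intro m
          rcases hC m with rfl | rfl | rfl | rfl
          · unfold PP; ring
          · exact h0
          · exact hik
          · exact hil
        obtain ⟨a, b, hab⟩ := hP
        apply hab
        exact PP_trans hv (by rw [sy, hself, neg_zero]) (hself b)
      have hjl : PP v w j l ≠ 0 := fun h => hil (PP_trans hv h0 h)
      have hkl : PP v w k l ≠ 0 := fun h => hil (PP_trans hv hik h)
      refine hno c3 c4 ⟨hil, 1, by decide, ?_, ?_⟩ ⟨hjl, 1, by decide, ?_, ?_⟩ (by tauto)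
      · rw [h0']; omega
      · rw [hki]; omega
      · rw [h0]; omega
      · rw [hkj]; omega
    · have hjk : PP v w j k ≠ 0 := fun h => hik (PP_trans hv h0 h)
      have z1 : ZP v w i k j l := by
        by_contra hz
        have hl : PP v w l i ≠ 0 ∨ PP v w l k ≠ 0 := by
          by_contra hh
          push Not at hh
          exact hik (PP_trans hv (by rw [sy, hh.1, neg_zero]) hh.2)
        have := (ZP_gen hik (Or.inr hjk) hl hz).1
        rw [h0', abs_zero] at this
        exact hjk (abs_eq_zero.1 this.symm)
      have z2 : ZP v w j k i l := by
        by_contra hz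
        have hl : PP v w l j ≠ 0 ∨ PP v w l k ≠ 0 := by
          by_contra hh
          push Not at hh
          exact hjk (PP_trans hv (by rw [sy, hh.1, neg_zero]) hh.2)
        have := (ZP_gen hjk (Or.inr hik) hl hz).1
        rw [h0, abs_zero] at this
        exact hik (abs_eq_zero.1 this.symm)
      exact hno c1 c2 z1 z2 (by tauto)
  have a0 : PP v w 0 1 ≠ 0 := hnz 0 1 2 3 (by decide)
  have b0 : PP v w 0 2 ≠ 0 := hnz 0 2 1 3 (by decide)
  have c0 : PP v w 0 3 ≠ 0 := hnz 0 3 1 2 (by decide)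
  have d0 : PP v w 1 2 ≠ 0 := hnz 1 2 0 3 (by decide)
  have e0 : PP v w 1 3 ≠ 0 := hnz 1 3 0 2 (by decide)
  have f0 : PP v w 2 3 ≠ 0 := hnz 2 3 0 1 (by decide)
  have E : ∀ i j k l, C4 i j k l → ¬ ZP v w i j k l →
      |PP v w k i| = |PP v w k j| ∧ |PP v w l i| = |PP v w l j| := by
    intro i j k l hC h
    have h1 : PP v w k i ≠ 0 := hnz k i j l (by intro m; have := hC m; tauto)
    have h2 : PP v w l i ≠ 0 := hnz l i j k (by intro m; have := hC m; tauto)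
    exact ZP_gen (hnz i j k l hC) (Or.inl h1) (Or.inl h2) h
  have E01 := E 0 1 2 3 (by decide)
  have E02 := E 0 2 1 3 (by decide)
  have E03 := E 0 3 1 2 (by decide)
  have E12 := E 1 2 0 3 (by decide)
  have E13 := E 1 3 0 2 (by decide)
  have E23 := E 2 3 0 1 (by decide)
  rw [sy 0 2, sy 1 2, sy 0 3, sy 1 3, abs_neg, abs_neg, abs_neg, abs_neg] at E01
  rw [sy 0 1, sy 0 3, sy 2 3, abs_neg, abs_neg, abs_neg] at E02
  rw [sy 0 1, sy 0 2, abs_neg, abs_neg] at E03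
  rw [sy 1 3, sy 2 3, abs_neg, abs_neg] at E12
  rw [sy 1 2, abs_neg] at E13
  have hall : |PP v w 0 1| = |PP v w 0 2| ∧ |PP v w 0 1| = |PP v w 1 2| ∧
      |PP v w 0 1| = |PP v w 0 3| ∧ |PP v w 0 1| = |PP v w 1 3| := by
    clear E hnz hcon hP
    by_cases z01 : ZP v w 0 1 2 3
    · have y02 := E02 (fun h => hno (by decide) (by decide) z01 h (by decide))
      have y03 := E03 (fun h => hno (by decide) (by decide) z01 h (by decide))
      have y12 := E12 (fun h => hno (by decide) (by decide) z01 h (by decide))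
      have y13 := E13 (fun h => hno (by decide) (by decide) z01 h (by decide))
      omega
    have y01 := E01 z01
    by_cases z02 : ZP v w 0 2 1 3
    · have y03 := E03 (fun h => hno (by decide) (by decide) z02 h (by decide))
      have y12 := E12 (fun h => hno (by decide) (by decide) z02 h (by decide))
      have y13 := E13 (fun h => hno (by decide) (by decide) z02 h (by decide))
      omega
    have y02 := E02 z02
    by_cases z03 : ZP v w 0 3 1 2
    · have y12 := E12 (fun h => hno (by decide) (by decide) z03 h (by decide))
      have y13 := E13 (fun h => hno (by decide) (by decide) z03 h (by decide))
      omega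
    have y03 := E03 z03
    by_cases z12 : ZP v w 1 2 0 3
    · have y13 := E13 (fun h => hno (by decide) (by decide) z12 h (by decide))
      have y23 := E23 (fun h => hno (by decide) (by decide) z12 h (by decide))
      omega
    have y12 := E12 z12
    omega
  apply hcon
  right; right
  have aux : ∀ x y z p q r : ℤ, p ≠ 0 → |p| = |q| → |p| = |r| → x * r - y * q + z * p = 0 →
      |z| = |x + y| ∨ |z| = |x - y| := by
    intro x y z p q r hp hq hr h
    rcases abs_eq_abs.1 hq with rfl | rfl <;> rcases abs_eq_abs.1 hr with h' | h'
    · subst h'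
      have : z = -(x - y) := by apply mul_left_cancel₀ hp; linear_combination h
      right; rw [this, abs_neg]
    · obtain rfl : r = -p := by omega
      have : z = x + y := by apply mul_left_cancel₀ hp; linear_combination h
      left; rw [this]
    · obtain rfl : r = -q := by omega
      have : z = -(x + y) := by apply mul_left_cancel₀ hp; linear_combination h
      left; rw [this, abs_neg]
    · obtain rfl : r = q := by omega
      have : z = x - y := by apply mul_left_cancel₀ hp; linear_combination h
      right; rw [this]
  refine ⟨0, 1, 2, 3, by decide, aux _ _ _ _ _ _ a0 hall.1 hall.2.1 ?_,
    aux _ _ _ _ _ _ a0 hall.2.2.1 hall.2.2.2 ?_⟩ <;> unfold PP <;> ring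

/-- Step 4: primitive lines with a large speed -/
lemma large {v : Fin 4 → ℤ} (hv : ∀ i, v i ≠ 0) (hprim : ∀ d : ℤ, (∀ i, d ∣ v i) → d ∣ 1)
    (hl : ∃ i, 42 ^ 3 < |v i|) : GG (1/4) v ∨ U1 v ∨ U2 v := by
  have main : ∀ u : Fin 4 → ℤ, (∀ i, u i ≠ 0) → (∀ d : ℤ, (∀ i, d ∣ u i) → d ∣ 1) →
      (∃ i, 42 ^ 3 < u i) → GG (1/4) u ∨ U1 u ∨ U2 u := by
    intro u hu hp ⟨i, hi⟩
    obtain ⟨w, hw, hd⟩ := density (n := 4) (K := 42) (by norm_num) u i (by norm_num at hi ⊢; exact hi) hp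
    rcases classify hu hw with h | h
    · left
      have := hd _ h
      norm_num at this
      norm_num
      exact this
    · exact Or.inr h
  obtain ⟨i, hi⟩ := hl
  rcases abs_choice (v i) with h | h
  · exact main v hv hprim ⟨i, by rwa [h] at hi⟩
  · have := main (fun i => - v i) (fun i => by simpa using hv i)
      (fun d hd => hprim d (fun i => by simpa using hd i)) ⟨i, by rwa [h] at hi⟩
    rcases this with h | h | h
    · left; exact GG_of_abs h (fun i => abs_neg _)
    · right; left
      simpa [U1] using h
    · right; right
      obtain ⟨i, j, k, l, hC, h1, h2⟩ := h
      have e1 : |-v i + -v j| = |v i + v j| := by rw [← abs_neg]; ring_nf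
      have e2 : |-v i - -v j| = |v i - v j| := by rw [← abs_neg]; ring_nf
      rw [e1, e2, abs_neg] at h1 h2
      exact ⟨i, j, k, l, hC, h1, h2⟩


def F4 (r : ℝ) (a b c d : ℤ) : Prop :=
  ∃ t : ℝ, AA r (t * a) ∧ AA r (t * b) ∧ AA r (t * c) ∧ AA r (t * d)

lemma GG_F4 {v : Fin 4 → ℤ} {i j k l : Fin 4} (hC : C4 i j k l) {a b c d : ℤ}
    (ha : |v i| = |a|) (hb : |v j| = |b|) (hc : |v k| = |c|) (hd : |v l| = |d|) (r : ℝ) :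
    GG r v ↔ F4 r a b c d := by
  constructor
  · rintro ⟨t, h⟩
    exact ⟨t, AA_of_abs ha (h i), AA_of_abs hb (h j), AA_of_abs hc (h k), AA_of_abs hd (h l)⟩
  · rintro ⟨t, h1, h2, h3, h4⟩
    refine ⟨t, fun m => ?_⟩
    rcases hC m with rfl | rfl | rfl | rfl
    · exact AA_of_abs ha.symm h1
    · exact AA_of_abs hb.symm h2
    · exact AA_of_abs hc.symm h3
    · exact AA_of_abs hd.symm h4

lemma u1_aux {r x K : ℝ} (k : ℤ) (hk : (k : ℝ) = K) (hK : 1 ≤ K) (hr : K < r * (4 * K + 1))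
    (h1 : r ≤ x) (h2 : 3 * x ≤ 1 - r) (h : AA r (4 * K * x)) : False := by
  obtain ⟨n, hn1, hn2⟩ := h
  have e1 : K - r < 4 * K * x := by nlinarith
  have e2 : 4 * K * x < K + r := by nlinarith
  have e3 : (n : ℝ) < k := by linarith
  have e4 : (k : ℝ) < n + 1 := by linarith
  have e3' : n < k := by exact_mod_cast e3
  have e4' : k < n + 1 := by exact_mod_cast e4
  omega

lemma u1_upper (k : ℤ) (hk : 1 ≤ k) (r : ℝ) (hr : 1/4 - 1/(4 * ((4 * k + 1 : ℤ) : ℝ)) < r) :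
    ¬ F4 r 1 2 3 (4 * k) := by
  rintro ⟨t, ⟨n, hn1, hn2⟩, h2, h3, h4⟩
  have hK : (1 : ℝ) ≤ k := by exact_mod_cast hk
  have hr' : (k : ℝ) < r * (4 * k + 1) := by
    push_cast at hr
    have e : (1:ℝ)/4 - 1/(4 * (4 * k + 1)) = k / (4 * k + 1) := by field_simp; ring
    rw [e, div_lt_iff₀ (by linarith)] at hr
    exact hr
  have hr5 : 1/5 < r := by nlinarith
  set x := t - n with hx
  have x1 : r ≤ x := by push_cast at hn1; linarith
  have x2 : x ≤ 1 - r := by push_cast at hn2; linarith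
  have h2' : AA r (2 * x) := AA_add h2 (-2 * n) (by rw [hx]; push_cast; ring)
  have h3' : AA r (3 * x) := AA_add h3 (-3 * n) (by rw [hx]; push_cast; ring)
  have h4' : AA r (4 * k * x) := AA_add h4 (-(4 * k) * n) (by rw [hx]; push_cast; ring)
  obtain ⟨p, p1, p2⟩ := h3'
  have pl : (-1 : ℝ) < p := by linarith
  have pu : (p : ℝ) < 3 := by linarith
  have pl' : -1 < p := by exact_mod_cast pl
  have pu' : p < 3 := by exact_mod_cast pu
  have : p = 0 ∨ p = 1 ∨ p = 2 := by omega
  rcases this with rfl | rfl | rfl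
  · push_cast at p1 p2
    exact u1_aux k rfl hK hr' x1 (by linarith) h4'
  · push_cast at p1 p2
    obtain ⟨s, s1, s2⟩ := h2'
    have a1 : (s : ℝ) < 1 := by linarith
    have a2 : (0 : ℝ) < s := by linarith
    have a1' : s < 1 := by exact_mod_cast a1
    have a2' : 0 < s := by exact_mod_cast a2
    omega
  · push_cast at p1 p2
    refine u1_aux (x := 1 - x) k rfl hK hr' (by linarith) (by linarith) ?_
    exact AA_add (AA_neg h4') (4 * k) (by push_cast; ring)

lemma u1_lower (k : ℤ) (hk : 1 ≤ k) : F4 (1/4 - 1/(4 * ((4 * k + 1 : ℤ) : ℝ))) 1 2 3 (4 * k) := by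
  have hK : (1 : ℝ) ≤ k := by exact_mod_cast hk
  have e : (1:ℝ)/4 - 1/(4 * ((4 * k + 1 : ℤ) : ℝ)) = k / (4 * k + 1) := by
    push_cast; field_simp; ring
  rw [e]
  set r : ℝ := k / (4 * k + 1) with hr
  have hr1 : r * (4 * k + 1) = k := by rw [hr]; field_simp
  have hr0 : 0 < r := by positivity
  have hr4 : 4 * r ≤ 1 := by nlinarith
  refine ⟨r, ⟨0, ?_, ?_⟩, ⟨0, ?_, ?_⟩, ⟨0, ?_, ?_⟩, ⟨k - 1, ?_, ?_⟩⟩ <;> push_cast <;> nlinarith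

/-- exact maximum of the form `1/4 - 1/(4N)`, `N` odd, or at least `1/4` -/
def Res (a b c d : ℤ) : Prop := F4 (1/4) a b c d ∨
  ∃ N : ℤ, 1 ≤ N ∧ N % 2 = 1 ∧ F4 (1/4 - 1/(4 * (N : ℝ))) a b c d ∧
    ∀ r : ℝ, 1/4 - 1/(4 * (N : ℝ)) < r → ¬ F4 r a b c d

lemma u1_main (q m : ℤ) (hq : 0 < q) (hm : 0 < m) (hco : IsCoprime q m) :
    Res q (2 * q) (3 * q) m := by
  by_cases hq1 : q = 1
  · subst hq1
    by_cases h4 : m % 4 = 0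
    · right
      obtain ⟨k, rfl⟩ : (4 : ℤ) ∣ m := Int.dvd_of_emod_eq_zero h4
      exact ⟨4 * k + 1, by omega, by omega, u1_lower k (by omega), u1_upper k (by omega)⟩
    · left
      have key : ∀ z : ℤ, z % 4 ≠ 0 → AA (1/4) (((1 : ℤ) : ℝ) / (4 : ℤ) * z) := by
        intro z hz
        have h1 : (1 : ℤ) ≤ 1 * z % 4 := by omega
        have h2 : 1 * z % 4 ≤ 3 := by omega
        have h1' : (1 : ℝ) ≤ ((1 * z % 4 : ℤ) : ℝ) := by exact_mod_cast h1
        have h2' : ((1 * z % 4 : ℤ) : ℝ) ≤ 3 := by exact_mod_cast h2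
        apply AA_rat (by norm_num)
        · push_cast at h1' ⊢; linarith
        · push_cast at h2' ⊢; linarith
      exact ⟨_, key 1 (by decide), key _ (by decide), key _ (by decide), key m h4⟩
  · left
    obtain ⟨x, y, hxy⟩ := hco
    have hqR : (0 : ℝ) < q := by exact_mod_cast hq
    set c := (q - m + 3) / 4 with hc
    have c1 : q ≤ m + 4 * c := by omega
    have c2 : m + 4 * c ≤ 3 * q := by omega
    have c1R : (q : ℝ) ≤ m + 4 * c := by exact_mod_cast c1
    have c2R : (m : ℝ) + 4 * c ≤ 3 * q := by exact_mod_cast c2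
    have hj : (c * y : ℤ) * m = c - c * x * q := by linear_combination c * hxy
    have hjR : ((c * y : ℤ) : ℝ) * m = c - (c * x : ℤ) * q := by exact_mod_cast hj
    refine ⟨(1/4 + (c * y : ℤ)) / q, ?_, ?_, ?_, ?_⟩
    · refine ⟨c * y, ?_, ?_⟩ <;> push_cast <;> field_simp <;> linarith
    · refine ⟨2 * (c * y), ?_, ?_⟩ <;> push_cast <;> field_simp <;> ring_nf <;> norm_num
    · refine ⟨3 * (c * y), ?_, ?_⟩ <;> push_cast <;> field_simp <;> ring_nf <;> norm_num
    · have e : (1/4 + ((c * y : ℤ) : ℝ)) / q * m = (m + 4 * c) / (4 * q) - (c * x : ℤ) := by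
        field_simp
        linear_combination 4 * hjR
      rw [e]
      refine ⟨-(c * x), ?_, ?_⟩
      · have : 1/4 ≤ ((m : ℝ) + 4 * c) / (4 * q) := by
          rw [le_div_iff₀ (by positivity)]; linarith
        push_cast; push_cast at this; linarith
      · have : ((m : ℝ) + 4 * c) / (4 * q) ≤ 3/4 := by
          rw [div_le_iff₀ (by positivity)]; linarith
        push_cast; push_cast at this; linarith

def Half (r : ℝ) (a b : ℤ) : Prop := ∃ t : ℝ, ∃ n m : ℤ, ∃ u w : ℝ, t * a = 1/2 + u + n ∧
  t * b = 1/4 + w + m ∧ -(1/4 - r) ≤ w ∧ w + u ≤ 1/4 - r ∧ w - u ≤ 1/4 - r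

lemma half_F4 {r : ℝ} {a b : ℤ} (hr : 0 ≤ r) (h : Half r a b) : F4 r a b (a + b) (a - b) := by
  obtain ⟨t, n, m, u, w, h1, h2, h3, h4, h5⟩ := h
  refine ⟨t, ⟨n, ?_, ?_⟩, ⟨m, ?_, ?_⟩, ⟨n + m, ?_, ?_⟩, ⟨n - m, ?_, ?_⟩⟩ <;> push_cast <;> linarith

lemma F4_swap {r : ℝ} {a b : ℤ} (h : F4 r b a (b + a) (b - a)) : F4 r a b (a + b) (a - b) := by
  obtain ⟨t, h1, h2, h3, h4⟩ := h
  refine ⟨t, h2, h1, ?_, ?_⟩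
  · rwa [add_comm]
  · have := AA_neg h4
    convert this using 1
    push_cast; ring

lemma F4_half {r : ℝ} {a b : ℤ} (hr : 0 < r) (h : F4 r a b (a + b) (a - b)) :
    Half r a b ∨ Half r b a := by
  obtain ⟨t, ⟨n, n1, n2⟩, ⟨m, m1, m2⟩, ⟨p, p1, p2⟩, ⟨q, q1, q2⟩⟩ := h
  push_cast at p1 p2 q1 q2
  have P1 : ((n + m - 1 : ℤ) : ℝ) < p := by push_cast; linarith
  have P2 : (p : ℝ) < ((n + m + 2 : ℤ) : ℝ) := by push_cast; linarith
  have Q1 : ((n - m - 2 : ℤ) : ℝ) < q := by push_cast; linarith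
  have Q2 : (q : ℝ) < ((n - m + 1 : ℤ) : ℝ) := by push_cast; linarith
  rw [Int.cast_lt] at P1 P2 Q1 Q2
  have hp : p = n + m ∨ p = n + m + 1 := by omega
  have hq : q = n - m ∨ q = n - m - 1 := by omega
  rcases hp with rfl | rfl <;> rcases hq with rfl | rfl <;> push_cast at p1 p2 q1 q2
  · left
    refine ⟨t, n, m, t * a - n - 1/2, t * b - m - 1/4, by ring, by ring, ?_, ?_, ?_⟩ <;> linarith
  · right
    refine ⟨t, m, n, t * b - m - 1/2, t * a - n - 1/4, by ring, by ring, ?_, ?_, ?_⟩ <;> linarith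
  · right
    refine ⟨-t, -m-1, -n-1, -t * b + m + 1/2, -t * a + n + 3/4, by push_cast; ring,
      by push_cast; ring, ?_, ?_, ?_⟩ <;> linarith
  · left
    refine ⟨-t, -n-1, -m-1, -t * a + n + 1/2, -t * b + m + 3/4, by push_cast; ring,
      by push_cast; ring, ?_, ?_, ?_⟩ <;> linarith

lemma half_of {a b K : ℤ} {u w ε : ℝ} (ha : 0 < a) (hco : IsCoprime a b) (hK : (4 : ℤ) ∣ a - 2 * b - K)
    (h1 : -ε ≤ w) (h2 : w + u ≤ ε) (h3 : w - u ≤ ε) (h4 : a * w - b * u = -K / 4) :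
    Half (1/4 - ε) a b := by
  obtain ⟨c, hc⟩ := hK
  obtain ⟨x, y, hxy⟩ := hco
  have haR : (0 : ℝ) < a := by exact_mod_cast ha
  have e : b * (c * y) - a * (-(c * x)) = c := by linear_combination c * hxy
  have eR : (b : ℝ) * (c * y : ℤ) - a * (-(c * x) : ℤ) = c := by exact_mod_cast e
  have hcR : (a : ℝ) - 2 * b - K = 4 * c := by exact_mod_cast hc
  refine ⟨(1/2 + u + (c * y : ℤ)) / a, c * y, -(c * x), u, w, ?_, ?_, ?_, ?_, ?_⟩
  · field_simp
  · rw [div_mul_eq_mul_div, div_eq_iff haR.ne']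
    linear_combination eR - h4 - hcR / 4
  · linarith
  · linarith
  · linarith

def N1 (a b : ℤ) : ℤ := if (a + 2 * b) % 4 = 1 then a + 2 * b else
  if (a + 2 * b) % 4 = 2 then (a + 2 * b) / 2 else max a (2 * b - a)

lemma N1_pos {a b : ℤ} (ha : 0 < a) (hb : 0 < b) : 1 ≤ N1 a b := by
  unfold N1; split_ifs <;> omega

lemma N1_odd {a b : ℤ} (h : (a + 2 * b) % 4 ≠ 0) : N1 a b % 2 = 1 := by
  unfold N1; split_ifs <;> omega

lemma half_attain {a b : ℤ} (ha : 0 < a) (hb : 0 < b) (hco : IsCoprime a b)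
    (h : (a + 2 * b) % 4 ≠ 0) : Half (1/4 - 1/(4 * (N1 a b : ℝ))) a b := by
  have haR : (0 : ℝ) < a := by exact_mod_cast ha
  have hbR : (0 : ℝ) < b := by exact_mod_cast hb
  have hN : (0 : ℝ) < N1 a b := by exact_mod_cast (N1_pos ha hb)
  set ε : ℝ := 1/(4 * (N1 a b : ℝ)) with hε
  have hε0 : 0 < ε := by positivity
  have hεN : 4 * N1 a b * ε = 1 := by rw [hε]; field_simp
  by_cases h1 : (a + 2 * b) % 4 = 1
  · have e : N1 a b = a + 2 * b := by simp [N1, h1]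
    rw [e] at hεN; push_cast at hεN
    refine half_of (K := 1) (u := 2 * ε) (w := -ε) ha hco (by omega) ?_ ?_ ?_ ?_
    · linarith
    · linarith
    · linarith
    · push_cast; linear_combination (-1/4) * hεN
  by_cases h2 : (a + 2 * b) % 4 = 2
  · have e : 2 * N1 a b = a + 2 * b := by simp only [N1, h2]; norm_num; omega
    have eR : 2 * (N1 a b : ℝ) = a + 2 * b := by exact_mod_cast e
    refine half_of (K := 2) (u := 2 * ε) (w := -ε) ha hco (by omega) ?_ ?_ ?_ ?_
    · linarith
    · linarith
    · linarith
    · push_cast; linear_combination (-1/2) * hεN + ε * eR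
  · have e : N1 a b = max a (2 * b - a) := by simp [N1, h1, h2]
    rcases max_choice a (2 * b - a) with h' | h' <;> rw [e, h'] at hεN
    · refine half_of (K := -1) (u := 0) (w := ε) ha hco (by omega) ?_ ?_ ?_ ?_
      · linarith
      · linarith
      · linarith
      · push_cast; linear_combination (1/4) * hεN
    · push_cast at hεN
      refine half_of (K := -1) (u := -2 * ε) (w := -ε) ha hco (by omega) ?_ ?_ ?_ ?_
      · linarith
      · linarith
      · linarith
      · push_cast; linear_combination (1/4) * hεN

lemma half_bound {a b : ℤ} (ha : 0 < a) (hb : 0 < b) (h : (a + 2 * b) % 4 ≠ 0) {r : ℝ}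
    (hH : Half r a b) : r ≤ 1/4 - 1/(4 * (N1 a b : ℝ)) := by
  have haR : (0 : ℝ) < a := by exact_mod_cast ha
  have hbR : (0 : ℝ) < b := by exact_mod_cast hb
  have hN : (0 : ℝ) < N1 a b := by exact_mod_cast (N1_pos ha hb)
  obtain ⟨t, n, m, u, w, h1, h2, h3, h4, h5⟩ := hH
  obtain ⟨ε, hε⟩ : ∃ ε, ε = 1/4 - r := ⟨_, rfl⟩
  rw [← hε] at h3 h4 h5
  suffices hs : 1 ≤ 4 * N1 a b * ε by
    have : 1/(4 * (N1 a b : ℝ)) ≤ ε := by rw [div_le_iff₀ (by positivity)]; linarith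
    linarith
  have hε0 : 0 ≤ ε := by linarith
  obtain ⟨K, hK⟩ : ∃ K : ℤ, K = a - 2 * b - 4 * (b * n - a * m) := ⟨_, rfl⟩
  have hKR : (K : ℝ) = a - 2 * b - 4 * (b * n - a * m) := by exact_mod_cast hK
  have hKu : (K : ℝ) / 4 = b * u - a * w := by
    linear_combination hKR / 4 - a * h2 + b * h1
  have hKmod : K % 4 = (a + 2 * b) % 4 := by omega
  have B1 : (K : ℝ) ≤ 4 * (a + 2 * b) * ε := by nlinarith
  obtain ⟨M, hM⟩ : ∃ M, M = max a (2 * b - a) := ⟨_, rfl⟩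
  have B2 : -(K : ℝ) ≤ 4 * M * ε := by
    rcases le_total b a with hab | hab
    · have habR : (b : ℝ) ≤ a := by exact_mod_cast hab
      have : M = a := by omega
      rw [this]; nlinarith
    · have habR : (a : ℝ) ≤ b := by exact_mod_cast hab
      have : M = 2 * b - a := by omega
      rw [this]; push_cast; nlinarith
  have M1 : M ≤ a + 2 * b := by omega
  have M2 : a + 2 * b ≤ 3 * M := by omega
  have M1R : (M : ℝ) ≤ a + 2 * b := by exact_mod_cast M1
  have M2R : (a : ℝ) + 2 * b ≤ 3 * M := by exact_mod_cast M2
  by_cases c1 : (a + 2 * b) % 4 = 1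
  · have e : N1 a b = a + 2 * b := by simp [N1, c1]
    rw [e]; push_cast
    have : 1 ≤ K ∨ K ≤ -1 := by omega
    rcases this with h | h
    · have : (1 : ℝ) ≤ K := by exact_mod_cast h
      linarith
    · have : (K : ℝ) ≤ -1 := by exact_mod_cast h
      nlinarith
  by_cases c2 : (a + 2 * b) % 4 = 2
  · have e : 2 * N1 a b = a + 2 * b := by simp only [N1, c2]; norm_num; omega
    have eR : 2 * (N1 a b : ℝ) = a + 2 * b := by exact_mod_cast e
    have : 2 ≤ K ∨ K ≤ -2 := by omega
    rcases this with h | h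
    · have : (2 : ℝ) ≤ K := by exact_mod_cast h
      nlinarith
    · have : (K : ℝ) ≤ -2 := by exact_mod_cast h
      nlinarith
  · have e : N1 a b = M := by simp [N1, c1, c2, hM]
    rw [e]
    have : 3 ≤ K ∨ K ≤ -1 := by omega
    rcases this with h | h
    · have : (3 : ℝ) ≤ K := by exact_mod_cast h
      nlinarith
    · have : (K : ℝ) ≤ -1 := by exact_mod_cast h
      linarith

lemma half_zero {a b : ℤ} (ha : 0 < a) (hco : IsCoprime a b) (h : (a + 2 * b) % 4 = 0) :
    Half (1/4) a b := by
  have := half_of (K := 0) (u := 0) (w := 0) (ε := 0) ha hco (by omega) (by norm_num) (by norm_num)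
    (by norm_num) (by norm_num)
  simpa using this

lemma u2_exact {a b : ℤ} (ha : 0 < a) (hb : 0 < b) (hco : IsCoprime a b)
    (h1 : (a + 2 * b) % 4 ≠ 0) (h2 : (b + 2 * a) % 4 ≠ 0) (N : ℤ) (hN : N = max (N1 a b) (N1 b a)) :
    F4 (1/4 - 1/(4 * (N : ℝ))) a b (a + b) (a - b) ∧
    ∀ r : ℝ, 1/4 - 1/(4 * (N : ℝ)) < r → ¬ F4 r a b (a + b) (a - b) := by
  have p1 := N1_pos ha hb
  have p2 := N1_pos hb ha
  have pN : 1 ≤ N := by omega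
  have p1R : (1 : ℝ) ≤ N1 a b := by exact_mod_cast p1
  have p2R : (1 : ℝ) ≤ N1 b a := by exact_mod_cast p2
  have pNR : (1 : ℝ) ≤ N := by exact_mod_cast pN
  have q1 : (N1 a b : ℝ) ≤ N := by exact_mod_cast (by omega : N1 a b ≤ N)
  have q2 : (N1 b a : ℝ) ≤ N := by exact_mod_cast (by omega : N1 b a ≤ N)
  have r0 : 0 ≤ 1/4 - 1/(4 * (N : ℝ)) := by
    have : 1/(4 * (N : ℝ)) ≤ 1/4 := by
      rw [div_le_div_iff₀ (by positivity) (by norm_num)]; linarith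
    linarith
  constructor
  · rcases max_choice (N1 a b) (N1 b a) with h | h
    · have e : N = N1 a b := by rw [hN, h]
      rw [e] at r0 ⊢
      exact half_F4 r0 (half_attain ha hb hco h1)
    · have e : N = N1 b a := by rw [hN, h]
      rw [e] at r0 ⊢
      exact F4_swap (half_F4 r0 (half_attain hb ha hco.symm h2))
  · intro r hr hF
    have m1 : 1/(4 * (N : ℝ)) ≤ 1/(4 * (N1 a b : ℝ)) := by gcongr
    have m2 : 1/(4 * (N : ℝ)) ≤ 1/(4 * (N1 b a : ℝ)) := by gcongr
    rcases F4_half (by linarith) hF with h | h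
    · have := half_bound ha hb h1 h; linarith
    · have := half_bound hb ha h2 h; linarith

lemma u2_main (a b : ℤ) (ha : 0 < a) (hb : 0 < b) (hco : IsCoprime a b) :
    Res a b (a + b) (a - b) := by
  by_cases h1 : (a + 2 * b) % 4 = 0
  · left; exact half_F4 (by norm_num) (half_zero ha hco h1)
  by_cases h2 : (b + 2 * a) % 4 = 0
  · left; exact F4_swap (half_F4 (by norm_num) (half_zero hb hco.symm h2))
  right
  refine ⟨max (N1 a b) (N1 b a), ?_, ?_, u2_exact ha hb hco h1 h2 _ rfl⟩
  · have := N1_pos ha hb; omega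
  · have := N1_odd h1
    have := N1_odd h2
    omega


def MaxV (v : Fin 4 → ℤ) (m : ℝ) : Prop := GG m v ∧ ∀ r : ℝ, m < r → ¬ GG r v

lemma structured {v : Fin 4 → ℤ} (hv : ∀ i, v i ≠ 0) (hprim : ∀ d : ℤ, (∀ i, d ∣ v i) → d ∣ 1)
    (h : U1 v ∨ U2 v) : GG (1/4) v ∨
      ∃ N : ℤ, 1 ≤ N ∧ N % 2 = 1 ∧ MaxV v (1/4 - 1/(4 * (N : ℝ))) := by
  have fin : ∀ {i j k l : Fin 4} {a b c d : ℤ}, C4 i j k l → |v i| = |a| → |v j| = |b| →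
      |v k| = |c| → |v l| = |d| → Res a b c d → GG (1/4) v ∨
      ∃ N : ℤ, 1 ≤ N ∧ N % 2 = 1 ∧ MaxV v (1/4 - 1/(4 * (N : ℝ))) := by
    intro i j k l a b c d hC ha hb hc hd hR
    have e := GG_F4 hC ha hb hc hd
    rcases hR with h | ⟨N, h1, h2, h3, h4⟩
    · left; exact (e _).2 h
    · right; exact ⟨N, h1, h2, (e _).2 h3, fun r hr hG => h4 r hr ((e _).1 hG)⟩
  have cop : ∀ x y : ℤ, (∀ d : ℤ, d ∣ x → d ∣ y → d ∣ 1) → IsCoprime x y := by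
    intro x y hd
    rw [Int.isCoprime_iff_gcd_eq_one]
    have := hd (Int.gcd x y) (Int.gcd_dvd_left _ _) (Int.gcd_dvd_right _ _)
    have h' : Int.gcd x y ∣ 1 := by exact_mod_cast this
    exact Nat.dvd_one.1 h'
  rcases h with ⟨i, j, k, l, hC, hj, hk⟩ | ⟨i, j, k, l, hC, hk, hl⟩
  · refine fin (a := |v i|) (b := 2 * |v i|) (c := 3 * |v i|) (d := |v l|) hC (abs_abs _).symm ?_ ?_
      (abs_abs _).symm (u1_main _ _ (abs_pos.2 (hv i)) (abs_pos.2 (hv l)) ?_)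
    · rw [hj, abs_mul, abs_abs]; rfl
    · rw [hk, abs_mul, abs_abs]; rfl
    · apply cop
      intro d h1 h2
      apply hprim
      intro m
      rw [← dvd_abs]
      rcases hC m with rfl | rfl | rfl | rfl
      · exact h1
      · rw [hj]; exact h1.mul_left _
      · rw [hk]; exact h1.mul_left _
      · exact h2
  · by_cases hkl : |v k| = |v l|
    · left
      obtain ⟨t, h1, h2, h3⟩ := three_quarter (v i) (v j) (v k) (hv i) (hv j) (hv k)
      refine ⟨t, fun m => ?_⟩
      rcases hC m with rfl | rfl | rfl | rfl
      · exact h1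
      · exact h2
      · exact h3
      · exact AA_of_abs hkl h3
    · have hco : IsCoprime |v i| |v j| := by
        apply cop
        intro d h1 h2
        rw [dvd_abs] at h1 h2
        apply hprim
        intro m
        rcases hC m with rfl | rfl | rfl | rfl
        · exact h1
        · exact h2
        · rw [← dvd_abs]
          rcases hk with hk | hk <;> rw [hk, dvd_abs]
          · exact dvd_add h1 h2
          · exact dvd_sub h1 h2
        · rw [← dvd_abs]
          rcases hl with hl | hl <;> rw [hl, dvd_abs]
          · exact dvd_add h1 h2
          · exact dvd_sub h1 h2
      have hR := u2_main _ _ (abs_pos.2 (hv i)) (abs_pos.2 (hv j)) hco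
      have hC' : C4 i j l k := by intro m; have := hC m; tauto
      have hs : (|v i + v j| = abs (|v i| + |v j|) ∧ |v i - v j| = abs (|v i| - |v j|)) ∨
          (|v i + v j| = abs (|v i| - |v j|) ∧ |v i - v j| = abs (|v i| + |v j|)) := by
        rcases abs_choice (v i) with e | e <;> rcases abs_choice (v j) with f | f <;> rw [e, f]
        · left; exact ⟨rfl, rfl⟩
        · right; constructor <;> congr 1 <;> ring
        · right; constructor <;> rw [← abs_neg] <;> congr 1 <;> ring
        · left; constructor <;> rw [← abs_neg] <;> congr 1 <;> ring
      have hcases : (|v k| = abs (|v i| + |v j|) ∧ |v l| = abs (|v i| - |v j|)) ∨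
          (|v l| = abs (|v i| + |v j|) ∧ |v k| = abs (|v i| - |v j|)) := by
        rcases hs with ⟨e, f⟩ | ⟨e, f⟩ <;> rw [e, f] at hk hl <;> rcases hk with hk | hk <;>
          rcases hl with hl | hl
        · exact absurd (hk.trans hl.symm) hkl
        · exact Or.inl ⟨hk, hl⟩
        · exact Or.inr ⟨hl, hk⟩
        · exact absurd (hk.trans hl.symm) hkl
        · exact absurd (hk.trans hl.symm) hkl
        · exact Or.inr ⟨hl, hk⟩
        · exact Or.inl ⟨hk, hl⟩
        · exact absurd (hk.trans hl.symm) hkl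
      rcases hcases with ⟨e, f⟩ | ⟨e, f⟩
      · exact fin hC (abs_abs _).symm (abs_abs _).symm e f hR
      · exact fin hC' (abs_abs _).symm (abs_abs _).symm e f hR

lemma realize (N : ℤ) (hN : 15 ≤ N) (hodd : N % 2 = 1) : ∃ v : Fin 4 → ℤ, (∀ i, v i ≠ 0) ∧
    MaxV v (1/4 - 1/(4 * (N : ℝ))) := by
  have hcase : N % 4 = 1 ∨ N % 4 = 3 := by omega
  have fin : ∀ a b c d : ℤ, a ≠ 0 → b ≠ 0 → c ≠ 0 → d ≠ 0 →
      F4 (1/4 - 1/(4 * (N : ℝ))) a b c d ∧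
      (∀ r : ℝ, 1/4 - 1/(4 * (N : ℝ)) < r → ¬ F4 r a b c d) →
      ∃ v : Fin 4 → ℤ, (∀ i, v i ≠ 0) ∧ MaxV v (1/4 - 1/(4 * (N : ℝ))) := by
    intro a b c d ha hb hc hd h
    have e := GG_F4 (v := ![a, b, c, d]) (i := 0) (j := 1) (k := 2) (l := 3) (by decide)
      (a := a) (b := b) (c := c) (d := d) rfl rfl rfl rfl
    refine ⟨![a, b, c, d], ?_, (e _).2 h.1, fun r hr hG => h.2 r hr ((e _).1 hG)⟩
    intro i; fin_cases i
    · exact ha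
    · exact hb
    · exact hc
    · exact hd
  rcases hcase with h | h
  · obtain ⟨k, rfl⟩ : ∃ k, N = 4 * k + 1 := ⟨N / 4, by omega⟩
    exact fin 1 2 3 (4 * k) (by norm_num) (by norm_num) (by norm_num) (by omega)
      ⟨u1_lower k (by omega), u1_upper k (by omega)⟩
  · obtain ⟨a, rfl⟩ : ∃ a, N = a + 4 := ⟨N - 4, by omega⟩
    refine fin a 8 (a + 8) (a - 8) (by omega) (by norm_num) (by omega) (by omega)
      (u2_exact (by omega) (by norm_num) ?_ (by omega) (by omega) _ ?_)
    · have : IsCoprime a 2 := ⟨1, -((a - 1) / 2), by omega⟩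
      have h3 := this.pow_right (n := 3)
      norm_num at h3
      exact h3
    · have e1 : N1 a 8 = a := by
        unfold N1
        rw [if_neg (by omega), if_neg (by omega)]; omega
      have e2 : N1 8 a = a + 4 := by
        unfold N1
        rw [if_neg (by omega), if_pos (by omega)]; omega
      rw [e1, e2]; omega


lemma dist_AA {r y : ℝ} :
    dist ((y : ℝ) : AddCircle (1 : ℝ)) ((1 / 2 : ℝ) : AddCircle (1 : ℝ)) ≤ 1/2 - r ↔ AA r y := by
  rw [dist_eq_norm, ← AddCircle.coe_sub, AddCircle.norm_eq]
  simp only [inv_one, one_mul, mul_one]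
  constructor
  · intro h
    rw [abs_le] at h
    exact ⟨round (y - 1/2), by linarith, by linarith⟩
  · rintro ⟨n, h1, h2⟩
    refine (round_le (y - 1/2) n).trans ?_
    rw [abs_le]
    constructor <;> linarith

lemma mem_span {v : Fin 4 → ℤ} {p : Torus 4} : p ∈ spanTorus (fun _ : Fin 1 => v) ↔
    ∃ t : ℝ, p = torusProj (fun i => t * (v i : ℝ)) := by
  unfold spanTorus
  constructor
  · rintro ⟨t, rfl⟩
    exact ⟨t 0, by simp⟩
  · rintro ⟨t, rfl⟩
    exact ⟨fun _ => t, by simp⟩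

lemma DVal_le {v : Fin 4 → ℤ} {r : ℝ} (h : GG r v) :
    DVal (spanTorus (fun _ : Fin 1 => v)) ≤ 1/2 - r := by
  obtain ⟨t, ht⟩ := h
  unfold DVal
  refine le_trans (csInf_le ⟨0, ?_⟩ ⟨torusProj (fun i => t * (v i : ℝ)), mem_span.2 ⟨t, rfl⟩, rfl⟩) ?_
  · rintro _ ⟨p, _, rfl⟩
    exact Real.iSup_nonneg (fun i => dist_nonneg)
  · exact ciSup_le (fun i => dist_AA.2 (ht i))

lemma le_DVal {v : Fin 4 → ℤ} {m : ℝ} (h : ∀ r, m < r → ¬ GG r v) :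
    1/2 - m ≤ DVal (spanTorus (fun _ : Fin 1 => v)) := by
  unfold DVal
  refine le_csInf ⟨_, torusProj (fun i => 0 * (v i : ℝ)), mem_span.2 ⟨0, rfl⟩, rfl⟩ ?_
  rintro _ ⟨p, hp, rfl⟩
  obtain ⟨t, rfl⟩ := mem_span.1 hp
  by_contra hlt
  push Not at hlt
  refine h (1/2 - ⨆ i, dist ((torusProj (fun i => t * (v i : ℝ)) : Torus 4) i)
    ((1 / 2 : ℝ) : AddCircle (1 : ℝ))) ?_ ⟨t, fun i => ?_⟩
  · linarith
  · rw [← dist_AA, sub_sub_cancel]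
    exact le_ciSup (f := fun i => dist ((torusProj (fun i => t * (v i : ℝ)) : Torus 4) i)
      ((1 / 2 : ℝ) : AddCircle (1 : ℝ))) (Set.finite_range _).bddAbove i

lemma DVal_eq {v : Fin 4 → ℤ} {m : ℝ} (h : MaxV v m) :
    DVal (spanTorus (fun _ : Fin 1 => v)) = 1/2 - m :=
  le_antisymm (DVal_le h.1) (le_DVal h.2)

lemma span_scale {u u' : Fin 4 → ℤ} {g : ℤ} (hg : g ≠ 0) (h : ∀ i, u i = g * u' i) :
    spanTorus (fun _ : Fin 1 => u) = spanTorus (fun _ : Fin 1 => u') := by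
  have hgR : (g : ℝ) ≠ 0 := by exact_mod_cast hg
  ext p
  rw [mem_span, mem_span]
  constructor
  · rintro ⟨t, rfl⟩
    refine ⟨t * g, ?_⟩
    congr 1; ext i; rw [h i]; push_cast; ring
  · rintro ⟨t, rfl⟩
    refine ⟨t / g, ?_⟩
    congr 1; ext i; rw [h i]; push_cast; field_simp

lemma spec_mem {x : ℝ} (hx : x ∈ Spec 1 4) : ∃ u : Fin 4 → ℤ, (∀ i, u i ≠ 0) ∧
    (∀ d : ℤ, (∀ i, d ∣ u i) → d ∣ 1) ∧ x = DVal (spanTorus (fun _ : Fin 1 => u)) := by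
  obtain ⟨T, ⟨v, -, rfl⟩, hp, rfl⟩ := hx
  have hv : v = fun _ => v 0 := by ext j i; rw [Subsingleton.elim j 0]
  rw [hv] at hp ⊢
  generalize v 0 = u at hp
  have hu : ∀ i, u i ≠ 0 := by
    intro i hi
    apply hp
    intro p hpp
    obtain ⟨t, rfl⟩ := mem_span.1 hpp
    refine Set.mem_iUnion.2 ⟨i, ?_⟩
    simp [torusProj, hi]
  obtain ⟨u', h1, h2⟩ := Finset.extract_gcd u (s := Finset.univ) Finset.univ_nonempty
  have hg : Finset.univ.gcd u ≠ 0 := by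
    intro h
    have := h1 0 (Finset.mem_univ _)
    rw [h, zero_mul] at this
    exact hu 0 this
  refine ⟨u', ?_, ?_, ?_⟩
  · intro i hi
    have := h1 i (Finset.mem_univ _)
    rw [hi, mul_zero] at this
    exact hu i this
  · intro d hd
    rw [← h2]
    exact Finset.dvd_gcd (fun i _ => hd i)
  · rw [span_scale hg (fun i => h1 i (Finset.mem_univ _))]

lemma mem_spec {u : Fin 4 → ℤ} {m : ℝ} (hm : 0 < m) (hu : ∀ i, u i ≠ 0) (h : MaxV u m) :
    1/2 - m ∈ Spec 1 4 := by
  refine ⟨spanTorus (fun _ : Fin 1 => u), ⟨fun _ => u, ?_, rfl⟩, ?_, (DVal_eq h).symm⟩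
  · rw [linearIndependent_unique_iff]
    intro hz
    have := congrFun hz 0
    simp at this
    exact hu 0 this
  · obtain ⟨t, ht⟩ := h.1
    intro hs
    obtain ⟨i, hi⟩ := Set.mem_iUnion.1 (hs (mem_span.2 ⟨t, rfl⟩))
    obtain ⟨n, h1, h2⟩ := ht i
    have hi' : ((t * (u i : ℝ) : ℝ) : AddCircle (1 : ℝ)) = 0 := hi
    rw [AddCircle.coe_eq_zero_iff] at hi'
    obtain ⟨k, hk⟩ := hi'
    rw [zsmul_eq_mul, mul_one] at hk
    rw [← hk] at h1 h2
    have a1 : (n : ℝ) < k := by linarith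
    have a2 : (k : ℝ) < n + 1 := by linarith
    have a1' : n < k := by exact_mod_cast a1
    have a2' : k < n + 1 := by exact_mod_cast a2
    omega

/-- `𝒮₁(4) ∩ (1/4, 1/2]` has finite symmetric difference with `1/4 + 1/Prog(8,12)`. -/
theorem stmt3 :
    (symmDiff (Spec 1 4 ∩ Set.Ioc (1/4 : ℝ) (1/2))
      {x : ℝ | ∃ s : ℕ, x = 1/4 + 1/(8 * (s : ℝ) + 12)}).Finite := by
  have hbox : (Set.Icc (fun _ : Fin 4 => (-42 ^ 3 : ℤ)) (fun _ => 42 ^ 3)).Finite := Set.finite_Icc _ _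
  refine Set.Finite.subset (((hbox.image (fun u => DVal (spanTorus (fun _ : Fin 1 => u)))).union
    (Set.finite_singleton (1/2 : ℝ))).union
    ((Set.finite_Iio 7).image (fun s : ℕ => 1/4 + 1/(8 * (s : ℝ) + 12)))) ?_
  rintro x (⟨⟨hx, hx1, hx2⟩, hnot⟩ | ⟨⟨s, rfl⟩, hnot⟩)
  · left
    obtain ⟨u, hu, hprim, rfl⟩ := spec_mem hx
    by_cases hl : ∃ i, 42 ^ 3 < |u i|
    · right
      have key : GG (1/4) u ∨ ∃ N : ℤ, 1 ≤ N ∧ N % 2 = 1 ∧ MaxV u (1/4 - 1/(4 * (N : ℝ))) := by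
        rcases large hu hprim hl with h | h
        · exact Or.inl h
        · exact structured hu hprim h
      rcases key with h | ⟨N, hN, hodd, h⟩
      · have := DVal_le h
        linarith
      · rw [DVal_eq h] at hnot ⊢
        by_cases h1 : N = 1
        · subst h1; norm_num
        · exfalso
          apply hnot
          refine ⟨((N - 3) / 2).toNat, ?_⟩
          have e : (2 * (((N - 3) / 2).toNat : ℤ) + 3) = N := by omega
          have eR : 2 * ((((N - 3) / 2).toNat : ℕ) : ℝ) + 3 = N := by exact_mod_cast e
          rw [← eR]; ring
    · left
      push Not at hl
      refine ⟨u, ⟨fun i => ?_, fun i => ?_⟩, rfl⟩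
      · have := (abs_le.1 (hl i)).1; simpa using this
      · exact (abs_le.1 (hl i)).2
  · by_cases hs : s < 7
    · right; exact ⟨s, hs, rfl⟩
    · exfalso
      apply hnot
      have hsR : (0 : ℝ) ≤ s := by positivity
      obtain ⟨u, hu, h⟩ := realize (2 * s + 3) (by omega) (by omega)
      refine ⟨?_, ?_, ?_⟩
      · have := mem_spec ?_ hu h
        · convert this using 1
          push_cast; ring
        · have : 1/(4 * ((2 * (s : ℤ) + 3 : ℤ) : ℝ)) < 1/4 := by
            push_cast
            rw [div_lt_div_iff₀ (by positivity) (by norm_num)]; linarith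
          linarith
      · have : 0 < 1/(8 * (s : ℝ) + 12) := by positivity
        linarith
      · have : 1/(8 * (s : ℝ) + 12) ≤ 1/4 := by
          rw [div_le_div_iff₀ (by positivity) (by norm_num)]; linarith
        linarith
end
end

section
/- The set 𝒮₁(3) ∩ (1/10, 1/6] has finite symmetric difference with the set { 1/10 + 4/(5(5s + 7)) : s ∈ ℤ, s ≥ 0 } ∪ { 1/10 + 3/(5(5s + 9)) : s ∈ ℤ, s ≥ 0 }. -/
noncomputable section

/-- `x` is within `d` of a half-integer point `1/2 + ℤ`. -/
def near (d x : ℝ) : Prop := ∃ n : ℤ, |x - n - 1/2| ≤ d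

/-- some point of the line spanned by `(a,b,c)` is `d`-close to `(1/2,1/2,1/2)`. -/
def EE (a b c : ℤ) (d : ℝ) : Prop :=
  ∃ t : ℝ, near d (t * a) ∧ near d (t * b) ∧ near d (t * c)

def LL (a b c : ℤ) (d : ℝ) : Prop := EE a b c d ∧ ∀ d' < d, ¬ EE a b c d'

lemma near_neg {d x : ℝ} (h : near d x) : near d (-x) := by
  obtain ⟨n, hn⟩ := h
  refine ⟨-n - 1, ?_⟩
  rw [abs_le] at *
  push_cast
  constructor <;> linarith [hn.1, hn.2]

lemma near_mono {d d' x : ℝ} (hd : d ≤ d') (h : near d x) : near d' x := by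
  obtain ⟨n, hn⟩ := h
  exact ⟨n, hn.trans hd⟩

lemma EE_neg1 {a b c : ℤ} {d : ℝ} (h : EE a b c d) : EE (-a) b c d := by
  obtain ⟨t, h1, h2, h3⟩ := h
  refine ⟨t, ?_, h2, h3⟩
  have := near_neg h1
  push_cast
  rwa [mul_neg]

lemma EE_swap12 {a b c : ℤ} {d : ℝ} (h : EE a b c d) : EE b a c d := by
  obtain ⟨t, h1, h2, h3⟩ := h
  exact ⟨t, h2, h1, h3⟩

lemma EE_swap23 {a b c : ℤ} {d : ℝ} (h : EE a b c d) : EE a c b d := by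
  obtain ⟨t, h1, h2, h3⟩ := h
  exact ⟨t, h1, h3, h2⟩

lemma LL_neg1 {a b c : ℤ} {d : ℝ} (h : LL a b c d) : LL (-a) b c d :=
  ⟨EE_neg1 h.1, fun d' hd' h' => h.2 d' hd' (by simpa using EE_neg1 h')⟩

lemma LL_swap12 {a b c : ℤ} {d : ℝ} (h : LL a b c d) : LL b a c d :=
  ⟨EE_swap12 h.1, fun d' hd' h' => h.2 d' hd' (EE_swap12 h')⟩

lemma LL_swap23 {a b c : ℤ} {d : ℝ} (h : LL a b c d) : LL a c b d :=
  ⟨EE_swap23 h.1, fun d' hd' h' => h.2 d' hd' (EE_swap23 h')⟩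

lemma LL_neg2 {a b c : ℤ} {d : ℝ} (h : LL a b c d) : LL a (-b) c d :=
  LL_swap12 (LL_neg1 (LL_swap12 h))

lemma LL_neg3 {a b c : ℤ} {d : ℝ} (h : LL a b c d) : LL a b (-c) d :=
  LL_swap23 (LL_neg2 (LL_swap23 h))

/-- Description of the closeness condition by integers in an interval. -/
structure Hyp (a b c R g mp mm : ℤ) : Prop where
  mp_pos : 0 < mp
  mm_pos : 0 < mm
  g_nonneg : 0 ≤ g
  fwd : ∀ l : ℝ, 0 ≤ l → l ≤ 1/15 → EE a b c (1/10 + l) →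
    ∃ n : ℤ, (10:ℤ) ∣ n - R ∧ -(g:ℝ) - mm/6 * l ≤ n ∧ (n:ℝ) ≤ g + mp/6 * l
  bwd : ∀ l : ℝ, 0 ≤ l → l ≤ 1/15 → ∀ n : ℤ, (10:ℤ) ∣ n - R →
    -(g:ℝ) - mm/6 * l ≤ n → (n:ℝ) ≤ g + mp/6 * l → EE a b c (1/10 + l)

lemma core_s4 {a b c R g mp mm : ℤ} (H : Hyp a b c R g mp mm) {l : ℝ} (hl : 0 < l)
    (hl' : l ≤ 1/15) (hL : LL a b c (1/10 + l)) :
    ∃ n : ℤ, (10:ℤ) ∣ n - R ∧ g < n ∧ n < 10 - g ∧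
      ((mp * l = 6 * (n - g) ∧ (n - g) * mm ≤ (10 - n - g) * mp) ∨
       (mm * l = 6 * (10 - n - g) ∧ (10 - n - g) * mp ≤ (n - g) * mm)) := by
  obtain ⟨n, hnR, hn1, hn2⟩ := H.fwd l hl.le hl' hL.1
  have hmp : (0:ℝ) < mp := by exact_mod_cast H.mp_pos
  have hmm : (0:ℝ) < mm := by exact_mod_cast H.mm_pos
  have hg : (0:ℝ) ≤ g := by exact_mod_cast H.g_nonneg
  have key : ∀ l' : ℝ, 0 ≤ l' → l' < l → ∀ k : ℤ, (10:ℤ) ∣ k - R →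
      ¬ (-(g:ℝ) - mm/6 * l' ≤ k ∧ (k:ℝ) ≤ g + mp/6 * l') := by
    intro l' h0 h1 k hk ⟨h2, h3⟩
    exact hL.2 (1/10 + l') (by linarith) (H.bwd l' h0 (by linarith) k hk h2 h3)
  have key0 : ∀ k : ℤ, (10:ℤ) ∣ k - R → ¬ (-g ≤ k ∧ k ≤ g) := by
    intro k hk ⟨h1, h2⟩
    refine key 0 le_rfl hl k hk ⟨?_, ?_⟩
    · have : (-(g:ℝ)) ≤ k := by exact_mod_cast h1
      linarith
    · have : (k:ℝ) ≤ g := by exact_mod_cast h2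
      linarith
  -- a point above `g` needs a large parameter
  have up : ∀ k : ℤ, (10:ℤ) ∣ k - R → g < k → 6 * ((k:ℝ) - g) ≥ mp * l := by
    intro k hk hgk
    by_contra hcon
    push Not at hcon
    have hgk' : (g:ℝ) < k := by exact_mod_cast hgk
    refine key (6 * (k - g) / mp) (by apply div_nonneg <;> linarith)
      (by rw [div_lt_iff₀ hmp]; linarith) k hk ⟨?_, ?_⟩
    · have : 0 ≤ mm/6 * (6 * (k - g) / mp : ℝ) := by
        apply mul_nonneg <;> [skip; apply div_nonneg] <;> linarith
      linarith
    · field_simp; linarith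
  have down : ∀ k : ℤ, (10:ℤ) ∣ k - R → k < -g → 6 * (-(k:ℝ) - g) ≥ mm * l := by
    intro k hk hgk
    by_contra hcon
    push Not at hcon
    have hgk' : (k:ℝ) < -g := by exact_mod_cast hgk
    refine key (6 * (-k - g) / mm) (by apply div_nonneg <;> linarith)
      (by rw [div_lt_iff₀ hmm]; linarith) k hk ⟨?_, ?_⟩
    · have : mm/6 * (6 * (-k - g) / mm : ℝ) = -k - g := by field_simp
      linarith
    · have : 0 ≤ mp/6 * (6 * (-k - g) / mm : ℝ) := by
        apply mul_nonneg <;> [skip; apply div_nonneg] <;> linarith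
      linarith
  rcases lt_or_ge g n with hgn | hgn
  · have h1 : (mp:ℝ) * l = 6 * (n - g) := by
      have := up n hnR hgn
      linarith
    have h2 : n - 10 < -g := by
      by_contra hcon
      have hk : (10:ℤ) ∣ (n - 10) - R := by omega
      rcases le_or_gt (n - 10) g with h | h
      · exact key0 _ hk ⟨by omega, h⟩
      · have := up _ hk h
        push_cast at this
        linarith
    refine ⟨n, hnR, hgn, by omega, Or.inl ⟨h1, ?_⟩⟩
    have h3 := down (n - 10) (by omega) h2
    push_cast at h3
    have h4 : (((n - g) * mm : ℤ) : ℝ) ≤ ((10 - n - g) * mp : ℤ) := by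
      push_cast
      have := mul_le_mul_of_nonneg_right h3 hmp.le
      have e : (mm * l * mp : ℝ) = mm * (6 * (n - g)) := by rw [← h1]; ring
      nlinarith
    exact_mod_cast h4
  · have hgn' : n < -g := by
      by_contra hcon
      exact key0 n hnR ⟨by omega, hgn⟩
    have h1 : (mm:ℝ) * l = 6 * (-n - g) := by
      have := down n hnR hgn'
      linarith
    have h2 : g < n + 10 := by
      by_contra hcon
      have hk : (10:ℤ) ∣ (n + 10) - R := by omega
      rcases le_or_gt (-g) (n + 10) with h | h
      · exact key0 _ hk ⟨h, by omega⟩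
      · have := down _ hk h
        push_cast at this
        linarith
    refine ⟨n + 10, by omega, h2, by omega, Or.inr ⟨by push_cast; linarith, ?_⟩⟩
    have h3 := up (n + 10) (by omega) h2
    push_cast at h3
    have h4 : (((10 - (n + 10) - g) * mp : ℤ) : ℝ) ≤ ((n + 10 - g) * mm : ℤ) := by
      push_cast
      have := mul_le_mul_of_nonneg_right h3 hmm.le
      have e : (mp * l * mm : ℝ) = mp * (6 * (-n - g)) := by rw [← h1]; ring
      nlinarith
    exact_mod_cast h4

lemma lift_pt {a1 a2 a3 : ℤ} (h1 : 0 ≤ a1) (h2 : 0 ≤ a2) (h3 : 0 ≤ a3) (h5 : a1 + a2 + a3 = 5)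
    {x1 x2 x3 l : ℝ} (hl : l ≤ 1/15) (hx : a1 * x1 + a2 * x2 + a3 * x3 = 0)
    (n1 : near (1/10 + l) x1) (n2 : near (1/10 + l) x2) (n3 : near (1/10 + l) x3) :
    ∃ (e : ℝ) (k1 k2 k3 : ℤ) (u1 u2 u3 : ℝ), (e = 1 ∨ e = -1) ∧
      e * x1 = k1 + 3/5 + u1 ∧ e * x2 = k2 + 3/5 + u2 ∧ e * x3 = k3 + 3/5 + u3 ∧
      u1 ≤ l ∧ u2 ≤ l ∧ u3 ≤ l ∧ -1/5 - l ≤ u1 ∧ -1/5 - l ≤ u2 ∧ -1/5 - l ≤ u3 ∧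
      a1 * u1 + a2 * u2 + a3 * u3 = 0 ∧ a1 * k1 + a2 * k2 + a3 * k3 = -3 := by
  obtain ⟨m1, n1⟩ := n1
  obtain ⟨m2, n2⟩ := n2
  obtain ⟨m3, n3⟩ := n3
  rw [abs_le] at n1 n2 n3
  have h1' : (0:ℝ) ≤ a1 := by exact_mod_cast h1
  have h2' : (0:ℝ) ≤ a2 := by exact_mod_cast h2
  have h3' : (0:ℝ) ≤ a3 := by exact_mod_cast h3
  have h5' : (a1 + a2 + a3 : ℝ) = 5 := by exact_mod_cast h5
  set S : ℤ := a1 * m1 + a2 * m2 + a3 * m3 with hS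
  have hSr : (S:ℝ) = a1 * m1 + a2 * m2 + a3 * m3 := by rw [hS]; push_cast; ring
  have b1 : (S:ℝ) < -1 := by
    nlinarith [mul_le_mul_of_nonneg_left n1.1 h1', mul_le_mul_of_nonneg_left n2.1 h2',
      mul_le_mul_of_nonneg_left n3.1 h3', mul_le_mul_of_nonneg_left hl h1',
      mul_le_mul_of_nonneg_left hl h2', mul_le_mul_of_nonneg_left hl h3']
  have b2 : (-4:ℝ) < S := by
    nlinarith [mul_le_mul_of_nonneg_left n1.2 h1', mul_le_mul_of_nonneg_left n2.2 h2',
      mul_le_mul_of_nonneg_left n3.2 h3', mul_le_mul_of_nonneg_left hl h1',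
      mul_le_mul_of_nonneg_left hl h2', mul_le_mul_of_nonneg_left hl h3']
  have b1' : S < -1 := by exact_mod_cast b1
  have b2' : -4 < S := by exact_mod_cast b2
  have : S = -3 ∨ S = -2 := by omega
  rcases this with hs | hs
  · refine ⟨1, m1, m2, m3, x1 - m1 - 3/5, x2 - m2 - 3/5, x3 - m3 - 3/5, Or.inl rfl,
      by ring, by ring, by ring, by linarith, by linarith, by linarith, by linarith, by linarith,
      by linarith, ?_, by rw [← hs]⟩
    have : (S:ℝ) = -3 := by exact_mod_cast hs
    nlinarith
  · refine ⟨-1, -m1-1, -m2-1, -m3-1, -x1 + m1 + 2/5, -x2 + m2 + 2/5, -x3 + m3 + 2/5, Or.inr rfl,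
      by push_cast; ring, by push_cast; ring, by push_cast; ring, by linarith, by linarith,
      by linarith, by linarith, by linarith, by linarith, ?_, by linarith⟩
    have : (S:ℝ) = -2 := by exact_mod_cast hs
    nlinarith

lemma bez {q r : ℤ} (h : IsCoprime q r) {X Y : ℝ} {k : ℤ} (hk : r * X - q * Y = k) :
    ∃ (t : ℝ) (m n : ℤ), t * q = X + m ∧ t * r = Y + n := by
  obtain ⟨A, B, hAB⟩ := h
  have hAB' : (A * q + B * r : ℝ) = 1 := by exact_mod_cast hAB
  refine ⟨A * X + B * Y, -B * k, A * k, ?_, ?_⟩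
  · push_cast; rw [← hk]; linear_combination X * hAB'
  · push_cast; rw [← hk]; linear_combination Y * hAB'

lemma Hfull {α β q r mp mm : ℤ} (hα : 0 < α) (hβ : 0 < β) (hab : α + β = 4)
    (hc : IsCoprime q r) (hmp : 0 < mp) (hmm : 0 < mm)
    (dual : ∀ l u1 u2 u3 : ℝ, u1 + α * u2 + β * u3 = 0 → u1 ≤ l → u2 ≤ l → u3 ≤ l →
      -(mm / 6 * l) ≤ 10 * (r * u2 - q * u3) ∧ 10 * (r * u2 - q * u3) ≤ mp / 6 * l)
    (vp : ∃ u1 u2 u3 : ℝ, u1 + α * u2 + β * u3 = 0 ∧ u1 ≤ 1 ∧ u2 ≤ 1 ∧ u3 ≤ 1 ∧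
      10 * (r * u2 - q * u3) = mp / 6)
    (vm : ∃ u1 u2 u3 : ℝ, u1 + α * u2 + β * u3 = 0 ∧ u1 ≤ 1 ∧ u2 ≤ 1 ∧ u3 ≤ 1 ∧
      10 * (r * u2 - q * u3) = -(mm / 6)) :
    Hyp (-α * q - β * r) q r (4 * (r - q)) 0 mp mm := by
  have hαr : (1:ℝ) ≤ α := by exact_mod_cast hα
  have hβr : (1:ℝ) ≤ β := by exact_mod_cast hβ
  have habr : (α + β : ℝ) = 4 := by exact_mod_cast hab
  have hmpr : (0:ℝ) < mp := by exact_mod_cast hmp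
  have hmmr : (0:ℝ) < mm := by exact_mod_cast hmm
  refine ⟨hmp, hmm, le_rfl, ?_, ?_⟩
  · rintro l hl hl' ⟨t, n1, n2, n3⟩
    obtain ⟨e, k1, k2, k3, u1, u2, u3, -, e1, e2, e3, l1, l2, l3, -, -, -, hu, hk⟩ :=
      lift_pt (a1 := 1) (a2 := α) (a3 := β) (by norm_num) hα.le hβ.le (by omega) hl'
      (by push_cast; ring) n1 n2 n3
    obtain ⟨d1, d2⟩ := dual l u1 u2 u3 (by push_cast at hu; linarith) l1 l2 l3
    have hn : ((-10 * (r * k2 - q * k3) - 6 * (r - q) : ℤ) : ℝ) = 10 * (r * u2 - q * u3) := by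
      push_cast
      linear_combination (-10 * q : ℝ) * e3 + 10 * (r:ℝ) * e2
    refine ⟨-10 * (r * k2 - q * k3) - 6 * (r - q), ⟨-(r * k2 - q * k3) - (r - q), by ring⟩, ?_, ?_⟩
    · rw [hn]; push_cast; linarith
    · rw [hn]; push_cast; linarith
  · intro l hl hl' n hn h1 h2
    push_cast at h1 h2
    -- find u
    have hu : ∃ u1 u2 u3 : ℝ, u1 + α * u2 + β * u3 = 0 ∧ u1 ≤ l ∧ u2 ≤ l ∧ u3 ≤ l ∧
        10 * (r * u2 - q * u3) = n := by
      rcases le_total (0:ℝ) n with h0 | h0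
      · obtain ⟨u1, u2, u3, hu, l1, l2, l3, hv⟩ := vp
        have hs : 0 ≤ 6 * n / (mp:ℝ) := by positivity
        have hs' : 6 * n / (mp:ℝ) ≤ l := by rw [div_le_iff₀ hmpr]; linarith
        refine ⟨6 * n / mp * u1, 6 * n / mp * u2, 6 * n / mp * u3, ?_, by nlinarith, by nlinarith,
          by nlinarith, ?_⟩
        · linear_combination (6 * n / mp : ℝ) * hu
        · have : (6 * n / mp : ℝ) * (mp / 6) = n := by field_simp
          linear_combination (6 * n / mp : ℝ) * hv + this
      · obtain ⟨u1, u2, u3, hu, l1, l2, l3, hv⟩ := vm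
        have hs : 0 ≤ 6 * (-n) / (mm:ℝ) := div_nonneg (by linarith) hmmr.le
        have hs' : 6 * (-n) / (mm:ℝ) ≤ l := by rw [div_le_iff₀ hmmr]; linarith
        refine ⟨6 * (-n) / mm * u1, 6 * (-n) / mm * u2, 6 * (-n) / mm * u3, ?_, by nlinarith,
          by nlinarith, by nlinarith, ?_⟩
        · linear_combination (6 * (-n) / mm : ℝ) * hu
        · have : (6 * (-n) / mm : ℝ) * (mm / 6) = -n := by field_simp
          linear_combination (6 * (-n) / mm : ℝ) * hv - this
    obtain ⟨u1, u2, u3, hu, l1, l2, l3, hv⟩ := hu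
    have m1 : -(4 * l) ≤ u1 := by nlinarith
    have m2 : -(4 * l) ≤ u2 := by nlinarith
    have m3 : -(4 * l) ≤ u3 := by nlinarith
    obtain ⟨j, hj⟩ := hn
    have hjr : (n:ℝ) - 4 * (r - q) = 10 * j := by exact_mod_cast hj
    obtain ⟨t, z2, z3, e2, e3⟩ := bez hc (X := 3/5 + u2) (Y := 3/5 + u3) (k := j + (r - q))
      (by push_cast; linarith)
    refine ⟨t, ⟨-3 - α * z2 - β * z3, ?_⟩, ⟨z2, ?_⟩, ⟨z3, ?_⟩⟩
    · have : t * ((-α * q - β * r : ℤ) : ℝ) - ((-3 - α * z2 - β * z3 : ℤ) : ℝ) - 1/2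
          = 1/10 + u1 := by
        push_cast
        linear_combination (-α:ℝ) * e2 - β * e3 - 3/5 * habr - hu
      rw [this, abs_le]; constructor <;> linarith
    · rw [e2, abs_le]; constructor <;> linarith
    · rw [e3, abs_le]; constructor <;> linarith

lemma Hzero {a1 a2 x q r mp mm : ℤ} (h1 : 0 < a1) (h2 : 0 < a2) (h5 : a1 + a2 = 5)
    (hx1 : a2 * x % 10 = 6) (hx2 : a1 * x % 10 = 4)
    (hq : 0 < q) (hr : 0 < r) (hc : IsCoprime q r)
    (hmp : (mp - 60 * q) * a1 = 60 * r) (hmm : (mm - 60 * q) * a2 = 60 * r) :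
    Hyp (a2 * q) (-a1 * q) r (x * r - 5 * q) q mp mm := by
  have h1r : (1:ℝ) ≤ a1 := by exact_mod_cast h1
  have h2r : (1:ℝ) ≤ a2 := by exact_mod_cast h2
  have h5r : (a1 + a2 : ℝ) = 5 := by exact_mod_cast h5
  have hqr : (0:ℝ) < q := by exact_mod_cast hq
  have hrr : (0:ℝ) < r := by exact_mod_cast hr
  have a1r : (0:ℝ) < a1 := by linarith
  have a2r : (0:ℝ) < a2 := by linarith
  have hmpr : (mp:ℝ) = 60 * q + 60 * r / a1 := by
    have : ((mp - 60 * q) * a1 : ℝ) = 60 * r := by exact_mod_cast hmp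
    field_simp; linarith
  have hmmr : (mm:ℝ) = 60 * q + 60 * r / a2 := by
    have : ((mm - 60 * q) * a2 : ℝ) = 60 * r := by exact_mod_cast hmm
    field_simp; linarith
  obtain ⟨c, hcx⟩ : ∃ c, a2 * x = 10 * c + 6 := ⟨a2 * x / 10, by omega⟩
  obtain ⟨c', hcx'⟩ : ∃ c, a1 * x = 10 * c + 4 := ⟨a1 * x / 10, by omega⟩
  have hcxr : (a2 * x : ℝ) = 10 * c + 6 := by exact_mod_cast hcx
  have hcxr' : (a1 * x : ℝ) = 10 * c' + 4 := by exact_mod_cast hcx'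
  have hmp0 : (0:ℝ) < mp := by rw [hmpr]; positivity
  have hmm0 : (0:ℝ) < mm := by rw [hmmr]; positivity
  refine ⟨by exact_mod_cast hmp0, by exact_mod_cast hmm0, hq.le, ?_, ?_⟩
  · rintro l hl hl' ⟨t, n1, n2, n3⟩
    obtain ⟨e, k1, k2, k3, u1, u2, u3, he, e1, e2, e3, l1, l2, l3, f1, f2, f3, hu, hk⟩ :=
      lift_pt (a1 := a1) (a2 := a2) (a3 := 0) h1.le h2.le le_rfl (by omega) hl'
      (by push_cast; ring) n1 n2 n3
    push_cast at e1 e2 hu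
    have hZ : ∃ Z : ℤ, k1 - c = a2 * Z := by
      have ha : a2 = 5 - a1 := by omega
      subst ha
      have : a1 = 1 ∨ a1 = 2 ∨ a1 = 3 ∨ a1 = 4 := by omega
      rcases this with rfl | rfl | rfl | rfl
      · exact ⟨-(k2 + 1 + c'), by omega⟩
      · exact ⟨(k1 - c) / 3, by omega⟩
      · exact ⟨(k1 - c) / 2, by omega⟩
      · exact ⟨k1 - c, by omega⟩
    obtain ⟨Z, hZ⟩ := hZ
    have hZr : (k1 - c : ℝ) = a2 * Z := by exact_mod_cast hZ
    have hX : e * t * q = Z + x / 10 + u1 / a2 := by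
      field_simp
      linarith
    have hu2 : u1 / a2 = - u2 / a1 := by
      field_simp
      linarith
    have hn : ((10 * (r * Z - q * k3) + (x * r - 5 * q) : ℤ) : ℝ)
        = 10 * q * (u3 + 1/10) - 10 * r * (u1 / a2) := by
      push_cast
      linear_combination (10 * q : ℝ) * e3 - 10 * (r:ℝ) * hX
    have b1 : (u1 / a2 : ℝ) ≤ l / a2 := by gcongr
    have b2 : -(l / a1 : ℝ) ≤ u1 / a2 := by
      rw [hu2, neg_div]
      have : (u2 / a1 : ℝ) ≤ l / a1 := by gcongr
      linarith
    have c1 := mul_le_mul_of_nonneg_left b1 hrr.le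
    have c2 := mul_le_mul_of_nonneg_left b2 hrr.le
    have c3 := mul_le_mul_of_nonneg_left l3 hqr.le
    have c4 := mul_le_mul_of_nonneg_left f3 hqr.le
    refine ⟨10 * (r * Z - q * k3) + (x * r - 5 * q), ⟨r * Z - q * k3, by ring⟩, ?_, ?_⟩
    · rw [hn, hmmr]
      have : (60 * q + 60 * r / a2 : ℝ) / 6 * l = 10 * q * l + 10 * (r * (l / a2)) := by
        field_simp
        ring
      rw [this]; linarith
    · rw [hn, hmpr]
      have : (60 * q + 60 * r / a1 : ℝ) / 6 * l = 10 * q * l + 10 * (r * (l / a1)) := by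
        field_simp
        ring
      rw [this]; linarith
  · intro l hl hl' n hn hn1 hn2
    have hu : ∃ τ w : ℝ, a2 * τ ≤ l ∧ -l ≤ a1 * τ ∧ |w| ≤ 1/10 + l ∧
        10 * q * w - 10 * r * τ = n := by
      rcases le_total (0:ℝ) n with h0 | h0
      · have hd : (0:ℝ) < q + mp / 6 * l := by positivity
        have hs : 0 ≤ n / (q + mp / 6 * l : ℝ) := by positivity
        have hs' : n / (q + mp / 6 * l : ℝ) ≤ 1 := by rw [div_le_one hd]; exact hn2
        set s := n / (q + mp / 6 * l : ℝ) with hsd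
        have hsn : s * (q + mp / 6 * l : ℝ) = n := by rw [hsd]; field_simp
        refine ⟨-(s * l / a1), s * (1/10 + l), ?_, ?_, ?_, ?_⟩
        · have : 0 ≤ a2 * (s * l / a1) := by positivity
          linarith
        · have : a1 * -(s * l / a1) = - (s * l) := by field_simp
          rw [this]; nlinarith
        · rw [abs_of_nonneg (by positivity)]; nlinarith
        · rw [← hsn, hmpr]; field_simp; ring
      · have hd : (0:ℝ) < q + mm / 6 * l := by positivity
        have hs : 0 ≤ (-n) / (q + mm / 6 * l : ℝ) := div_nonneg (by linarith) hd.le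
        have hs' : (-n) / (q + mm / 6 * l : ℝ) ≤ 1 := by rw [div_le_one hd]; linarith
        set s := (-n) / (q + mm / 6 * l : ℝ) with hsd
        have hsn : s * (q + mm / 6 * l : ℝ) = -n := by rw [hsd]; field_simp
        refine ⟨(s * l / a2), -(s * (1/10 + l)), ?_, ?_, ?_, ?_⟩
        · have : a2 * (s * l / a2) = (s * l) := by field_simp
          rw [this]; nlinarith
        · have : 0 ≤ a1 * (s * l / a2) := by positivity
          linarith
        · rw [abs_neg, abs_of_nonneg (by positivity)]; nlinarith
        · have : (n:ℝ) = - (s * (q + mm / 6 * l : ℝ)) := by linarith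
          rw [this, hmmr]; field_simp; ring
    obtain ⟨τ, w, ht1, ht2, hw, hn'⟩ := hu
    have lo1 : -(4 * l) ≤ a2 * τ := by nlinarith
    have hi1 : a1 * τ ≤ 4 * l := by nlinarith
    obtain ⟨j, hj⟩ := hn
    have hjr : (n:ℝ) - (x * r - 5 * q) = 10 * j := by exact_mod_cast hj
    obtain ⟨t, z2, z3, e2, e3⟩ := bez hc (X := x/10 + τ) (Y := 1/2 + w) (k := -j)
      (by push_cast; linarith)
    refine ⟨t, ⟨a2 * z2 + c, ?_⟩, ⟨-a1 * z2 - c' - 1, ?_⟩, ⟨z3, ?_⟩⟩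
    · have : t * ((a2 * q : ℤ) : ℝ) - ((a2 * z2 + c : ℤ) : ℝ) - 1/2 = 1/10 + a2 * τ := by
        push_cast
        linear_combination (a2:ℝ) * e2 + hcxr / 10
      rw [this, abs_le]; constructor <;> linarith
    · have : t * ((-a1 * q : ℤ) : ℝ) - ((-a1 * z2 - c' - 1 : ℤ) : ℝ) - 1/2 = 1/10 - a1 * τ := by
        push_cast
        linear_combination (-a1:ℝ) * e2 - hcxr' / 10
      rw [this, abs_le]; constructor <;> linarith
    · rw [e3]; convert hw using 2; ring


def inP (l : ℝ) : Prop :=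
  (∃ M : ℤ, M % 5 = 2 ∧ 5 * (M:ℝ) * l = 4) ∨ (∃ M : ℤ, M % 5 = 4 ∧ 5 * (M:ℝ) * l = 3)

lemma leafL {l : ℝ} {A : ℤ} (k : ℤ) (hA : (A:ℝ) * l = k) (hk : k ≠ 0)
    (hd : 5 * k ∣ 4 * A) (hm : (4 * A / (5 * k)) % 5 = 2) : inP l := by
  refine Or.inl ⟨_, hm, ?_⟩
  obtain ⟨M, hM⟩ := hd
  rw [hM, Int.mul_ediv_cancel_left _ (by omega)]
  have hMr : (4 * A : ℝ) = 5 * k * M := by exact_mod_cast hM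
  have hkr : (k:ℝ) ≠ 0 := by exact_mod_cast hk
  apply mul_left_cancel₀ hkr
  linear_combination (-l) * hMr + 4 * hA

lemma leafR {l : ℝ} {A : ℤ} (k : ℤ) (hA : (A:ℝ) * l = k) (hk : k ≠ 0)
    (hd : 5 * k ∣ 3 * A) (hm : (3 * A / (5 * k)) % 5 = 4) : inP l := by
  refine Or.inr ⟨_, hm, ?_⟩
  obtain ⟨M, hM⟩ := hd
  rw [hM, Int.mul_ediv_cancel_left _ (by omega)]
  have hMr : (3 * A : ℝ) = 5 * k * M := by exact_mod_cast hM
  have hkr : (k:ℝ) ≠ 0 := by exact_mod_cast hk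
  apply mul_left_cancel₀ hkr
  linear_combination (-l) * hMr + 3 * hA

lemma core_full {a b c R mp mm : ℤ} (H : Hyp a b c R 0 mp mm) (hR : 2 ∣ R) {l : ℝ} (hl : 0 < l)
    (hl' : l ≤ 1/15) (hL : LL a b c (1/10 + l)) :
    ∃ n : ℤ, (10:ℤ) ∣ n - R ∧ (n = 2 ∨ n = 4 ∨ n = 6 ∨ n = 8) ∧
      ((mp * l = (6 * n : ℤ) ∧ n * mm ≤ (10 - n) * mp) ∨
       (mm * l = (6 * (10 - n) : ℤ) ∧ (10 - n) * mp ≤ n * mm)) := by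
  obtain ⟨n, h1, h2, h3, h4⟩ := core_s4 H hl hl' hL
  refine ⟨n, h1, by omega, ?_⟩
  simpa using h4

lemma case1a {p q r : ℤ} (hp : 0 < p) (hq : 0 < q) (hr : 0 < r) (h : p + q = 3 * r)
    (hc : IsCoprime q r) {l : ℝ} (hl : 0 < l) (hl' : l ≤ 1/15) (hL : LL p q r (1/10 + l)) :
    inP l := by
  have hpr : (0:ℝ) < p := by exact_mod_cast hp
  have hqr : (0:ℝ) < q := by exact_mod_cast hq
  have hrr : (0:ℝ) < r := by exact_mod_cast hr
  have hr' : (p:ℝ) + q = 3 * r := by exact_mod_cast h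
  have H : Hyp (-1 * q - 3 * (-r)) q (-r) (4 * (-r - q)) 0 (60 * (p + r)) (60 * (q + r)) := by
    refine Hfull (by norm_num) (by norm_num) (by norm_num) hc.neg_right (by omega) (by omega) ?_
      ⟨1, -4, 1, ?_⟩ ⟨-4, 1, 1, ?_⟩
    · intro l u1 u2 u3 hu l1 l2 l3
      push_cast at *
      constructor
      · nlinarith
      · have e : 10 * (-r * u2 - q * u3) = 10 * (r * u1 + p * u3) := by
          linear_combination (-10 * r : ℝ) * hu - 10 * u3 * hr'
        rw [e]; nlinarith
    · push_cast
      refine ⟨by norm_num, by norm_num, by norm_num, by norm_num, by linarith⟩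
    · push_cast
      refine ⟨by norm_num, by norm_num, by norm_num, by norm_num, by linarith⟩
  have hL' : LL (-1 * q - 3 * (-r)) q (-r) (1/10 + l) := by
    have : -1 * q - 3 * (-r) = p := by omega
    rw [this]; exact LL_neg3 hL
  obtain ⟨n, h1, h2, h3⟩ := core_full H (by omega) hl hl' hL'
  rcases h2 with rfl | rfl | rfl | rfl <;> rcases h3 with ⟨h3, h4⟩ | ⟨h3, h4⟩ <;>
    first
    | omega
    | exact leafL _ h3 (by norm_num) (by omega) (by omega)
    | exact leafR _ h3 (by norm_num) (by omega) (by omega)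

lemma case1b {p q r : ℤ} (hp : 0 < p) (hq : 0 < q) (hr : 0 < r) (h : q = p + 3 * r)
    (hc : IsCoprime q r) {l : ℝ} (hl : 0 < l) (hl' : l ≤ 1/15) (hL : LL p q r (1/10 + l)) :
    inP l := by
  have hpr : (0:ℝ) < p := by exact_mod_cast hp
  have hqr : (0:ℝ) < q := by exact_mod_cast hq
  have hrr : (0:ℝ) < r := by exact_mod_cast hr
  have hr' : (q:ℝ) = p + 3 * r := by exact_mod_cast h
  have H : Hyp (-1 * (-q) - 3 * r) (-q) r (4 * (r - (-q))) 0 (60 * (q + r))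
      (20 * (2 * q - 3 * r)) := by
    refine Hfull (by norm_num) (by norm_num) (by norm_num) hc.neg_left (by omega) (by omega) ?_
      ⟨-4, 1, 1, ?_⟩ ⟨1, 1, -2/3, ?_⟩
    · intro l u1 u2 u3 hu l1 l2 l3
      push_cast at *
      constructor
      · have e : 10 * (r * u2 - -q * u3) = -10/3 * (q * u1 + p * u2) := by
          linear_combination (10/3 * q : ℝ) * hu - 10/3 * u2 * hr'
        rw [e]; nlinarith
      · nlinarith
    · push_cast
      refine ⟨by norm_num, by norm_num, by norm_num, by norm_num, by linarith⟩
    · push_cast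
      refine ⟨by norm_num, by norm_num, by norm_num, by norm_num, by linarith⟩
  have hL' : LL (-1 * (-q) - 3 * r) (-q) r (1/10 + l) := by
    have : -1 * (-q) - 3 * r = p := by omega
    rw [this]; exact LL_neg2 hL
  obtain ⟨n, h1, h2, h3⟩ := core_full H (by omega) hl hl' hL'
  rcases h2 with rfl | rfl | rfl | rfl <;> rcases h3 with ⟨h3, h4⟩ | ⟨h3, h4⟩ <;>
    first
    | omega
    | exact leafL _ h3 (by norm_num) (by omega) (by omega)
    | exact leafR _ h3 (by norm_num) (by omega) (by omega)

lemma case2a {p q r : ℤ} (hp : 0 < p) (hq : 0 < q) (hr : 0 < r) (h : p = 2 * q + 2 * r)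
    (hc : IsCoprime q r) {l : ℝ} (hl : 0 < l) (hl' : l ≤ 1/15) (hL : LL p q r (1/10 + l)) :
    inP l := by
  have hqr : (0:ℝ) < q := by exact_mod_cast hq
  have hrr : (0:ℝ) < r := by exact_mod_cast hr
  have H : Hyp (-2 * q - 2 * r) q r (4 * (r - q)) 0 (30 * (2 * r + 3 * q))
      (30 * (2 * q + 3 * r)) := by
    refine Hfull (by norm_num) (by norm_num) (by norm_num) hc (by omega) (by omega) ?_
      ⟨1, 1, -3/2, ?_⟩ ⟨1, -3/2, 1, ?_⟩
    · intro l u1 u2 u3 hu l1 l2 l3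
      push_cast at *
      constructor
      · have e : 10 * (r * u2 - q * u3) = -(5 * r * u1 + 10 * (q + r) * u3) := by
          linear_combination (5 * r : ℝ) * hu
        rw [e]; nlinarith
      · have e : 10 * (r * u2 - q * u3) = (5 * q * u1 + 10 * (q + r) * u2) := by
          linear_combination (-5 * q : ℝ) * hu
        rw [e]; nlinarith
    · push_cast
      refine ⟨by norm_num, by norm_num, by norm_num, by norm_num, by linarith⟩
    · push_cast
      refine ⟨by norm_num, by norm_num, by norm_num, by norm_num, by linarith⟩
  have hL' : LL (-2 * q - 2 * r) q r (1/10 + l) := by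
    have : -2 * q - 2 * r = -p := by omega
    rw [this]; exact LL_neg1 hL
  obtain ⟨n, h1, h2, h3⟩ := core_full H (by omega) hl hl' hL'
  rcases h2 with rfl | rfl | rfl | rfl <;> rcases h3 with ⟨h3, h4⟩ | ⟨h3, h4⟩ <;>
    first
    | omega
    | exact leafL _ h3 (by norm_num) (by omega) (by omega)
    | exact leafR _ h3 (by norm_num) (by omega) (by omega)

lemma case2b {p q r : ℤ} (hp : 0 < p) (hq : 0 < q) (hr : 0 < r) (h : p + 2 * q = 2 * r)
    (hc : IsCoprime q r) {l : ℝ} (hl : 0 < l) (hl' : l ≤ 1/15) (hL : LL p q r (1/10 + l)) :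
    inP l := by
  have hpr : (0:ℝ) < p := by exact_mod_cast hp
  have hqr : (0:ℝ) < q := by exact_mod_cast hq
  have hrr : (0:ℝ) < r := by exact_mod_cast hr
  have hr' : (p:ℝ) + 2 * q = 2 * r := by exact_mod_cast h
  have H : Hyp (-2 * q - 2 * (-r)) q (-r) (4 * (-r - q)) 0 (30 * (3 * r - 2 * q))
      (60 * (q + r)) := by
    refine Hfull (by norm_num) (by norm_num) (by norm_num) hc.neg_right (by omega) (by omega) ?_
      ⟨1, -3/2, 1, ?_⟩ ⟨-4, 1, 1, ?_⟩
    · intro l u1 u2 u3 hu l1 l2 l3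
      push_cast at *
      constructor
      · nlinarith
      · have e : 10 * (-r * u2 - q * u3) = 5 * (r * u1 + p * u3) := by
          linear_combination (-5 * r : ℝ) * hu - 5 * u3 * hr'
        rw [e]; nlinarith
    · push_cast
      refine ⟨by norm_num, by norm_num, by norm_num, by norm_num, by linarith⟩
    · push_cast
      refine ⟨by norm_num, by norm_num, by norm_num, by norm_num, by linarith⟩
  have hL' : LL (-2 * q - 2 * (-r)) q (-r) (1/10 + l) := by
    have : -2 * q - 2 * (-r) = p := by omega
    rw [this]; exact LL_neg3 hL
  obtain ⟨n, h1, h2, h3⟩ := core_full H (by omega) hl hl' hL'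
  rcases h2 with rfl | rfl | rfl | rfl <;> rcases h3 with ⟨h3, h4⟩ | ⟨h3, h4⟩ <;>
    first
    | omega
    | exact leafL _ h3 (by norm_num) (by omega) (by omega)
    | exact leafR _ h3 (by norm_num) (by omega) (by omega)

lemma hyp3 {q r : ℤ} (hq : 0 < q) (hr : 0 < r) (hc : IsCoprime q r) :
    Hyp (4 * q) (-1 * q) r (4 * r - 5 * q) q (60 * q + 60 * r) (60 * q + 15 * r) :=
  Hzero (by norm_num) (by norm_num) (by norm_num) (by norm_num) (by norm_num) hq hr hc
    (by ring) (by ring)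

lemma hyp4 {q r : ℤ} (hq : 0 < q) (hr : 0 < r) (hc : IsCoprime q r) :
    Hyp (3 * q) (-2 * q) r (2 * r - 5 * q) q (60 * q + 30 * r) (60 * q + 20 * r) :=
  Hzero (by norm_num) (by norm_num) (by norm_num) (by norm_num) (by norm_num) hq hr hc
    (by ring) (by ring)

lemma core_zero {a b c R g mp mm : ℤ} (H : Hyp a b c R g mp mm) (hg : 0 < g) {l : ℝ} (hl : 0 < l)
    (hl' : l ≤ 1/15) (hL : LL a b c (1/10 + l)) :
    ∃ n : ℤ, (10:ℤ) ∣ n - R ∧ (g = 1 ∨ g = 2 ∨ g = 3 ∨ g = 4) ∧ g < n ∧ n < 10 - g ∧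
      ((mp * l = (6 * (n - g) : ℤ) ∧ (n - g) * mm ≤ (10 - n - g) * mp) ∨
       (mm * l = (6 * (10 - n - g) : ℤ) ∧ (10 - n - g) * mp ≤ (n - g) * mm)) := by
  obtain ⟨n, h1, h2, h3, h4⟩ := core_s4 H hl hl' hL
  refine ⟨n, h1, by omega, h2, h3, ?_⟩
  push_cast
  exact h4

lemma case3 {q r : ℤ} (hq : 0 < q) (hr : 0 < r)
    (hc : IsCoprime q r) {l : ℝ} (hl : 0 < l) (hl' : l ≤ 1/15)
    (hL : LL (4 * q) (-1 * q) r (1/10 + l)) : inP l := by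
  obtain ⟨n, h1, h2, h3, h4, h5⟩ := core_zero (hyp3 hq hr hc) hq hl hl' hL
  have h6 : n = 2 ∨ n = 3 ∨ n = 4 ∨ n = 5 ∨ n = 6 ∨ n = 7 ∨ n = 8 := by omega
  rcases h2 with rfl | rfl | rfl | rfl <;> rcases h6 with rfl | rfl | rfl | rfl | rfl | rfl | rfl <;>
    first
    | omega
    | (rcases h5 with ⟨h5, h6⟩ | ⟨h5, h6⟩ <;>
        first
        | omega
        | exact leafL _ h5 (by norm_num) (by omega) (by omega)
        | exact leafR _ h5 (by norm_num) (by omega) (by omega))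

lemma case4 {q r : ℤ} (hq : 0 < q) (hr : 0 < r)
    (hc : IsCoprime q r) {l : ℝ} (hl : 0 < l) (hl' : l ≤ 1/15)
    (hL : LL (3 * q) (-2 * q) r (1/10 + l)) : inP l := by
  obtain ⟨n, h1, h2, h3, h4, h5⟩ := core_zero (hyp4 hq hr hc) hq hl hl' hL
  have h6 : n = 2 ∨ n = 3 ∨ n = 4 ∨ n = 5 ∨ n = 6 ∨ n = 7 ∨ n = 8 := by omega
  rcases h2 with rfl | rfl | rfl | rfl <;> rcases h6 with rfl | rfl | rfl | rfl | rfl | rfl | rfl <;>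
    first
    | omega
    | (rcases h5 with ⟨h5, h6⟩ | ⟨h5, h6⟩ <;>
        first
        | omega
        | exact leafL _ h5 (by norm_num) (by omega) (by omega)
        | exact leafR _ h5 (by norm_num) (by omega) (by omega))

lemma real_of {a b c R g mp mm : ℤ} (H : Hyp a b c R g mp mm) {n : ℤ} (h1 : (10:ℤ) ∣ n - R)
    (h2 : g < n) (h3 : n < 10 - g) (h4 : (n - g) * mm ≤ (10 - n - g) * mp) {l : ℝ}
    (hl' : l ≤ 1/15) (hml : mp * l = 6 * (n - g)) : LL a b c (1/10 + l) := by
  have hmp : (0:ℝ) < mp := by exact_mod_cast H.mp_pos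
  have hmm : (0:ℝ) < mm := by exact_mod_cast H.mm_pos
  have hg : (0:ℝ) ≤ g := by exact_mod_cast H.g_nonneg
  have h2r : (g:ℝ) < n := by exact_mod_cast h2
  have h3r : (n:ℝ) < 10 - g := by exact_mod_cast h3
  have h4r : ((n - g) * mm : ℝ) ≤ (10 - n - g) * mp := by exact_mod_cast h4
  have hl : 0 < l := by
    by_contra hcon
    nlinarith
  refine ⟨H.bwd l hl.le hl' n h1 (by nlinarith) (by linarith), ?_⟩
  intro d' hd' hE
  have hpos : ∀ l' : ℝ, 0 ≤ l' → l' < l → ¬ EE a b c (1/10 + l') := by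
    intro l' h0 hlt hE
    obtain ⟨k, hk, hk1, hk2⟩ := H.fwd l' h0 (by linarith) hE
    have b1 : (k:ℝ) < n := by nlinarith
    have b2 : (n:ℝ) - 10 < k := by
      have : mm * l' < 6 * (10 - n - g) := by
        have : mm * l' < mm * l := by nlinarith
        have : (mm * l) * mp ≤ 6 * (10 - n - g) * mp := by nlinarith
        have := le_of_mul_le_mul_right this hmp
        linarith
      linarith
    have b1' : k < n := by exact_mod_cast b1
    have b2' : n - 10 < k := by exact_mod_cast b2
    omega
  rcases le_or_gt (1/10) d' with h | h
  · refine hpos (d' - 1/10) (by linarith) (by linarith) ?_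
    convert hE using 1; ring
  · refine hpos 0 le_rfl hl ?_
    obtain ⟨t, n1, n2, n3⟩ := hE
    exact ⟨t, near_mono (by linarith) n1, near_mono (by linarith) n2, near_mono (by linarith) n3⟩

lemma real1 (s : ℕ) (hs : 1 ≤ s) : LL 3 (-2) (5 * s + 5) (1/10 + 4/(5 * (5 * (s : ℝ) + 7))) := by
  have H := hyp4 (q := 1) (r := 5 * s + 5) (by norm_num) (by positivity) isCoprime_one_left
  have hs' : (1:ℝ) ≤ s := by exact_mod_cast hs
  refine real_of (n := 5) H (by omega) (by norm_num) (by norm_num) (by omega) ?_ ?_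
  · rw [div_le_div_iff₀ (by positivity) (by positivity)]; linarith
  · push_cast; field_simp; ring

lemma real2 (s : ℕ) (hs : 1 ≤ s) : LL 4 (-1) (5 * s + 8) (1/10 + 3/(5 * (5 * (s : ℝ) + 9))) := by
  have H := hyp3 (q := 1) (r := 5 * s + 8) (by norm_num) (by positivity) isCoprime_one_left
  have hs' : (1:ℝ) ≤ s := by exact_mod_cast hs
  refine real_of (n := 7) H (by omega) (by norm_num) (by norm_num) (by omega) ?_ ?_
  · rw [div_le_div_iff₀ (by positivity) (by positivity)]; linarith
  · push_cast; field_simp; ring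


def Prim (a b c : ℤ) : Prop := ∃ x y z : ℤ, x * a + y * b + z * c = 1

lemma Prim_abs {a b c : ℤ} (h : Prim a b c) : Prim |a| |b| |c| := by
  obtain ⟨x, y, z, h⟩ := h
  refine ⟨x * a.sign, y * b.sign, z * c.sign, ?_⟩
  simp only [mul_assoc, Int.sign_mul_abs]
  exact h

lemma LL_abs1 {a b c : ℤ} {d : ℝ} (h : LL a b c d) : LL |a| b c d := by
  rcases abs_choice a with h1 | h1 <;> rw [h1]
  · exact h
  · exact LL_neg1 h

lemma LL_abs {a b c : ℤ} {d : ℝ} (h : LL a b c d) : LL |a| |b| |c| d :=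
  LL_abs1 (LL_swap12 (LL_abs1 (LL_swap12 (LL_swap23 (LL_swap12 (LL_abs1
    (LL_swap12 (LL_swap23 h))))))))

lemma five_pos {A B C p q r : ℤ} (hA : 0 ≤ A) (hB : 0 ≤ B) (hC : 0 ≤ C) (h5 : A + B + C = 5)
    (hp : 0 < p) (hq : 0 < q) (hr : 0 < r) (hP : Prim p q r) (h : A * p + B * q = C * r)
    {l : ℝ} (hl : 0 < l) (hl' : l ≤ 1/15) (hL : LL p q r (1/10 + l)) : inP l := by
  obtain ⟨x, y, z, hx⟩ := hP
  have key : (r = 4 * q) ∨ (r = p + 3 * q) ∨ (r = 2 * p + 2 * q) ∨ (r = 3 * p + q) ∨ (r = 4 * p) ∨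
      (3 * q = 2 * r) ∨ (p + 2 * q = 2 * r) ∨ (2 * p + q = 2 * r) ∨ (3 * p = 2 * r) ∨
      (2 * q = 3 * r) ∨ (p + q = 3 * r) ∨ (2 * p = 3 * r) ∨ (q = 4 * r) ∨ (p = 4 * r) := by
    have hC' : C = 0 ∨ C = 1 ∨ C = 2 ∨ C = 3 ∨ C = 4 ∨ C = 5 := by omega
    have hA' : A = 0 ∨ A = 1 ∨ A = 2 ∨ A = 3 ∨ A = 4 ∨ A = 5 := by omega
    have hB' : B = 5 - A - C := by omega
    subst hB'
    rcases hC' with rfl | rfl | rfl | rfl | rfl | rfl <;>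
      rcases hA' with rfl | rfl | rfl | rfl | rfl | rfl <;> norm_num at h <;> omega
  have c3 : ∀ {g k x y z : ℤ}, 0 < g → 0 < k → x * (4 * g) + y * g + z * k = 1 →
      LL (4 * g) g k (1/10 + l) → inP l := by
    intro g k x y z hg hk hx hL
    refine case3 hg hk ⟨4 * x + y, z, by linear_combination hx⟩ hl hl' ?_
    simpa using LL_neg2 hL
  have c4 : ∀ {a b k x y z : ℤ}, 0 < a → 0 < b → 0 < k → 2 * a = 3 * b →
      x * a + y * b + z * k = 1 → LL a b k (1/10 + l) → inP l := by
    intro a b k x y z ha hb hk hab hx hL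
    obtain ⟨g, rfl⟩ : ∃ g, a = 3 * g := ⟨a / 3, by omega⟩
    obtain rfl : b = 2 * g := by omega
    refine case4 (q := g) (by omega) hk ⟨3 * x + 2 * y, z, by linear_combination hx⟩ hl hl' ?_
    simpa using LL_neg2 hL
  rcases key with h | h | h | h | h | h | h | h | h | h | h | h | h | h
  · subst h
    exact c3 (x := z) (y := y) (z := x) hq hp (by linarith)
      (LL_swap12 (LL_swap23 (LL_swap12 hL)))
  · exact case1b hp hr hq h ⟨z + x, y - 3 * x, by linear_combination hx + x * h⟩ hl hl'
      (LL_swap23 hL)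
  · exact case2a hr hp hq h ⟨x + 2 * z, y + 2 * z, by linear_combination hx - z * h⟩ hl hl'
      (LL_swap12 (LL_swap23 hL))
  · exact case1b hq hr hp (by omega) ⟨z + y, x - 3 * y, by linear_combination hx + y * h⟩ hl hl'
      (LL_swap23 (LL_swap12 hL))
  · subst h
    exact c3 (x := z) (y := x) (z := y) hp hq (by linarith) (LL_swap12 (LL_swap23 hL))
  · exact c4 (x := z) (y := y) (z := x) hr hq hp (by omega) (by linarith)
      (LL_swap12 (LL_swap23 (LL_swap12 hL)))
  · exact case2b hp hq hr h ⟨y - 2 * x, z + 2 * x, by linear_combination hx - x * h⟩ hl hl' hL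
  · exact case2b hq hp hr (by omega) ⟨x - 2 * y, z + 2 * y, by linear_combination hx - y * h⟩ hl hl'
      (LL_swap12 hL)
  · exact c4 (x := z) (y := x) (z := y) hr hp hq (by omega) (by linarith)
      (LL_swap12 (LL_swap23 hL))
  · exact c4 (x := y) (y := z) (z := x) hq hr hp (by omega) (by linarith)
      (LL_swap23 (LL_swap12 hL))
  · exact case1a hp hq hr h ⟨y - x, z + 3 * x, by linear_combination hx - x * h⟩ hl hl' hL
  · exact c4 (x := x) (y := z) (z := y) hp hr hq (by omega) (by linarith) (LL_swap23 hL)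
  · subst h
    exact c3 (x := y) (y := z) (z := x) hr hp (by linarith) (LL_swap23 (LL_swap12 hL))
  · subst h
    exact c3 (x := x) (y := z) (z := y) hr hq (by linarith) (LL_swap23 hL)

lemma five {a1 a2 a3 v1 v2 v3 : ℤ} (h5 : |a1| + |a2| + |a3| = 5)
    (hp : v1 ≠ 0) (hq : v2 ≠ 0) (hr : v3 ≠ 0) (hP : Prim v1 v2 v3)
    (h : a1 * v1 + a2 * v2 + a3 * v3 = 0)
    {l : ℝ} (hl : 0 < l) (hl' : l ≤ 1/15) (hL : LL v1 v2 v3 (1/10 + l)) : inP l := by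
  have hL := LL_abs hL
  have hP' := Prim_abs hP
  have e1 := abs_mul a1 v1
  have e2 := abs_mul a2 v2
  have e3 := abs_mul a3 v3
  have p1 := abs_pos.2 hp
  have p2 := abs_pos.2 hq
  have p3 := abs_pos.2 hr
  have hh : |a1| * |v1| + |a2| * |v2| = |a3| * |v3| ∨ |a1| * |v1| + |a3| * |v3| = |a2| * |v2| ∨
      |a2| * |v2| + |a3| * |v3| = |a1| * |v1| := by
    rw [← e1, ← e2, ← e3, Int.abs_eq_natAbs, Int.abs_eq_natAbs, Int.abs_eq_natAbs]
    omega
  obtain ⟨x, y, z, hx⟩ := hP'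
  rcases hh with h | h | h
  · exact five_pos (abs_nonneg _) (abs_nonneg _) (abs_nonneg _) h5 p1 p2 p3 ⟨x, y, z, hx⟩ h hl hl' hL
  · exact five_pos (abs_nonneg _) (abs_nonneg _) (abs_nonneg _) (by omega) p1 p3 p2
      ⟨x, z, y, by linarith⟩ h hl hl' (LL_swap23 hL)
  · exact five_pos (abs_nonneg _) (abs_nonneg _) (abs_nonneg _) (by omega) p2 p3 p1
      ⟨y, z, x, by linarith⟩ h hl hl' (LL_swap23 (LL_swap12 hL))

lemma three {a1 a2 a3 v1 v2 v3 : ℤ} (h3 : |a1| + |a2| + |a3| = 3)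
    (h : a1 * v1 + a2 * v2 + a3 * v3 = 0) {d : ℝ} (hE : EE v1 v2 v3 d) : 1/6 ≤ d := by
  obtain ⟨t, ⟨n1, h1⟩, ⟨n2, h2⟩, ⟨n3, h3'⟩⟩ := hE
  have hr : (a1 * v1 + a2 * v2 + a3 * v3 : ℝ) = 0 := by exact_mod_cast h
  have h3r : |(a1:ℝ)| + |(a2:ℝ)| + |(a3:ℝ)| = 3 := by exact_mod_cast h3
  obtain ⟨s, hs⟩ : ∃ s : ℤ, a1 + a2 + a3 = 2 * s + 1 := ⟨(a1 + a2 + a3) / 2, by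
    rcases abs_choice a1 with e1 | e1 <;> rcases abs_choice a2 with e2 | e2 <;>
      rcases abs_choice a3 with e3 | e3 <;> omega⟩
  have hsr : (a1 + a2 + a3 : ℝ) = 2 * s + 1 := by exact_mod_cast hs
  have hsum : a1 * (t * v1 - n1 - 1/2) + a2 * (t * v2 - n2 - 1/2) + a3 * (t * v3 - n3 - 1/2)
      = ((-(a1 * n1 + a2 * n2 + a3 * n3) - s : ℤ) : ℝ) - 1/2 := by
    push_cast
    linear_combination t * hr - 1/2 * hsr
  have hub : |a1 * (t * v1 - n1 - 1/2) + a2 * (t * v2 - n2 - 1/2) + a3 * (t * v3 - n3 - 1/2)|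
      ≤ 3 * d := by
    calc _ ≤ |a1 * (t * v1 - n1 - 1/2)| + |a2 * (t * v2 - n2 - 1/2)|
          + |a3 * (t * v3 - n3 - 1/2)| := abs_add_three _ _ _
      _ ≤ |(a1:ℝ)| * d + |(a2:ℝ)| * d + |(a3:ℝ)| * d := by
          rw [abs_mul, abs_mul, abs_mul]; gcongr
      _ = 3 * d := by rw [← h3r]; ring
  rw [hsum] at hub
  set k : ℤ := -(a1 * n1 + a2 * n2 + a3 * n3) - s
  rw [abs_le] at hub
  rcases le_or_gt k 0 with hk | hk
  · have : (k:ℝ) ≤ 0 := by exact_mod_cast hk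
    linarith
  · have : (1:ℝ) ≤ k := by exact_mod_cast hk
    linarith

lemma gcd2 (a b : ℤ) : ∃ g a' b' x y : ℤ, a = g * a' ∧ b = g * b' ∧ x * a' + y * b' = 1 := by
  by_cases h : a = 0 ∧ b = 0
  · exact ⟨0, 1, 0, 1, 0, by simp [h.1], by simp [h.2], by norm_num⟩
  · obtain ⟨a', ha⟩ := Int.gcd_dvd_left a b
    obtain ⟨b', hb⟩ := Int.gcd_dvd_right a b
    have hg : (Int.gcd a b : ℤ) ≠ 0 := by
      intro h0
      apply h
      exact Int.gcd_eq_zero_iff.1 (by exact_mod_cast h0)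
    refine ⟨Int.gcd a b, a', b', Int.gcdA a b, Int.gcdB a b, ha, hb, ?_⟩
    have := Int.gcd_eq_gcd_ab a b
    apply mul_left_cancel₀ hg
    linear_combination (-this) - Int.gcdA a b * ha - Int.gcdB a b * hb

lemma gcd3 (a b c : ℤ) : ∃ g a' b' c' : ℤ, a = g * a' ∧ b = g * b' ∧ c = g * c' ∧
    Prim a' b' c' := by
  obtain ⟨g, a', b', x, y, h1, h2, h3⟩ := gcd2 a b
  obtain ⟨G, g', c', x', y', h4, h5, h6⟩ := gcd2 g c
  refine ⟨G, g' * a', g' * b', c', by rw [h1, h4]; ring, by rw [h2, h4]; ring, h5,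
    ⟨x' * x, x' * y, y', ?_⟩⟩
  linear_combination h6 + x' * g' * h3

lemma dens {a1 a2 a3 : ℤ} (ha : Prim a1 a2 a3) (hne : ¬ (a1 = 0 ∧ a2 = 0)) {w1 w2 w3 : ℝ} {k : ℤ}
    (hw : a1 * w1 + a2 * w2 + a3 * w3 = k) (h1 : |w1 - 1/2| ≤ 1/14) (h2 : |w2 - 1/2| ≤ 1/14)
    (h3 : |w3 - 1/2| ≤ 1/14) :
    ∃ N : ℕ, ∀ v1 v2 v3 : ℤ, Prim v1 v2 v3 → a1 * v1 + a2 * v2 + a3 * v3 = 0 →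
      (|v1| ≤ N ∧ |v2| ≤ N ∧ |v3| ≤ N) ∨ EE v1 v2 v3 (1/10) := by
  obtain ⟨g, b1, b2, x, y, e1, e2, hxy⟩ := gcd2 a1 a2
  have hg : g ≠ 0 := by
    rintro rfl
    simp [e1, e2] at hne
  obtain ⟨c1, c2, c3, hc⟩ := ha
  have hgc : IsCoprime g a3 := ⟨c1 * b1 + c2 * b2, c3, by rw [← hc, e1, e2]; ring⟩
  -- the shifted real point
  obtain ⟨α, β, hα1, hα2, hα3⟩ : ∃ α β : ℝ, w1 - k * c1 = α * b2 + β * (-a3 * x) ∧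
      w2 - k * c2 = α * (-b1) + β * (-a3 * y) ∧ w3 - k * c3 = β * g := by
    have hgr : (g:ℝ) ≠ 0 := by exact_mod_cast hg
    have hcr : (c1 * a1 + c2 * a2 + c3 * a3 : ℝ) = 1 := by exact_mod_cast hc
    have hxyr : (x * b1 + y * b2 : ℝ) = 1 := by exact_mod_cast hxy
    have e1r : (a1:ℝ) = g * b1 := by exact_mod_cast e1
    have e2r : (a2:ℝ) = g * b2 := by exact_mod_cast e2
    have hz : a1 * (w1 - k * c1) + a2 * (w2 - k * c2) + a3 * (w3 - k * c3) = 0 := by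
      linear_combination hw - k * hcr
    have hz' : b1 * (w1 - k * c1) + b2 * (w2 - k * c2) = -a3 * ((w3 - k * c3) / g) := by
      field_simp
      rw [e1r, e2r] at hz
      linarith
    refine ⟨y * (w1 - k * c1) - x * (w2 - k * c2), (w3 - k * c3) / g, ?_, ?_, ?_⟩
    · linear_combination (-(w1 - k * c1)) * hxyr + x * hz'
    · linear_combination (-(w2 - k * c2)) * hxyr + y * hz'
    · field_simp
  set B : ℕ := b1.natAbs + b2.natAbs + (a3 * x).natAbs + (a3 * y).natAbs + g.natAbs + 1 with hB
  have hBb : ∀ z : ℤ, |z| ≤ B → |(z:ℝ)| ≤ B := fun z hz => by exact_mod_cast hz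
  have B1 : |b1| ≤ B := by rw [Int.abs_eq_natAbs]; omega
  have B2 : |b2| ≤ B := by rw [Int.abs_eq_natAbs]; omega
  have B3 : |a3 * x| ≤ B := by rw [Int.abs_eq_natAbs]; omega
  have B4 : |a3 * y| ≤ B := by rw [Int.abs_eq_natAbs]; omega
  have B5 : |g| ≤ B := by rw [Int.abs_eq_natAbs]; omega
  have hB1 : (1:ℤ) ≤ B := by omega
  have hB1r : (1:ℝ) ≤ B := by exact_mod_cast hB1
  refine ⟨36 * B * B, ?_⟩
  intro v1 v2 v3 ⟨X, Y, Z, hv⟩ hav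
  obtain ⟨n, hn⟩ : g ∣ v3 := by
    apply hgc.dvd_of_dvd_mul_left
    refine ⟨-(b1 * v1 + b2 * v2), ?_⟩
    rw [e1, e2] at hav
    linear_combination hav
  have hbn : b1 * v1 + b2 * v2 = -a3 * n := by
    apply mul_left_cancel₀ hg
    rw [e1, e2, hn] at hav
    linear_combination hav
  set m := y * v1 - x * v2 with hm
  have E1 : v1 = m * b2 + n * (-a3 * x) := by
    rw [hm]; linear_combination (-v1) * hxy + x * hbn
  have E2 : v2 = m * (-b1) + n * (-a3 * y) := by
    rw [hm]; linear_combination (-v2) * hxy + y * hbn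
  have hmn : IsCoprime m n := ⟨X * b2 + Y * (-b1), X * (-a3 * x) + Y * (-a3 * y) + Z * g, by
    rw [← hv, E1, E2, hn]; ring⟩
  have E1r : (v1:ℝ) = m * b2 + n * (-a3 * x) := by exact_mod_cast E1
  have E2r : (v2:ℝ) = m * (-b1) + n * (-a3 * y) := by exact_mod_cast E2
  have E3r : (v3:ℝ) = g * n := by exact_mod_cast hn
  -- from approximations to closeness
  have fin : ∀ α' β' : ℝ, |α' - α| * B + |β' - β| * B ≤ 1/36 → (∃ j : ℤ, n * α' - m * β' = j) →
      EE v1 v2 v3 (1/10) := by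
    rintro α' β' hd ⟨j, hj⟩
    obtain ⟨t, z1, z2, ht1, ht2⟩ := bez hmn hj
    have lem : ∀ (P Q : ℤ) (w c : ℝ), |P| ≤ B → |Q| ≤ B → |w - 1/2| ≤ 1/14 →
        w - c = α * P + β * Q → |(α' * P + β' * Q + c) - 1/2| ≤ 1/10 := by
      intro P Q w c hP hQ hw he
      have : (α' * P + β' * Q + c) - 1/2 = (w - 1/2) + (α' - α) * P + (β' - β) * Q := by
        linear_combination (-1:ℝ) * he
      rw [this]
      calc _ ≤ |w - 1/2| + |(α' - α) * P| + |(β' - β) * Q| := abs_add_three _ _ _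
        _ ≤ 1/14 + |α' - α| * B + |β' - β| * B := by
            rw [abs_mul, abs_mul]
            have := hBb P hP
            have := hBb Q hQ
            gcongr
        _ ≤ 1/10 := by linarith
    refine ⟨t, ⟨z1 * b2 + z2 * (-a3 * x) - k * c1, ?_⟩, ⟨z1 * (-b1) + z2 * (-a3 * y) - k * c2, ?_⟩,
      ⟨z2 * g - k * c3, ?_⟩⟩
    · convert lem b2 (-a3 * x) w1 (k * c1) B2 (by rwa [neg_mul, abs_neg]) h1
        (by push_cast; exact hα1) using 2
      rw [E1r]; push_cast
      linear_combination (b2:ℝ) * ht1 - (a3 * x : ℝ) * ht2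
    · convert lem (-b1) (-a3 * y) w2 (k * c2) (by rwa [abs_neg]) (by rwa [neg_mul, abs_neg]) h2
        (by push_cast; exact hα2) using 2
      rw [E2r]; push_cast
      linear_combination (-b1:ℝ) * ht1 - (a3 * y : ℝ) * ht2
    · convert lem 0 g w3 (k * c3) (by simp) B5 h3
        (by push_cast; linarith) using 2
      rw [E3r]; push_cast
      linear_combination (g:ℝ) * ht2
  have rnd : ∀ (n' : ℤ) (θ : ℝ), 18 * (B:ℤ) < |n'| → |((round θ : ℤ) - θ) / n'| * B ≤ 1/36 := by
    intro n' θ hn'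
    have hr : (18 * B : ℝ) < |(n':ℝ)| := by exact_mod_cast hn'
    rw [abs_div, abs_sub_comm, div_mul_eq_mul_div, div_le_iff₀ (by linarith)]
    have := abs_sub_round θ
    nlinarith
  by_cases hnB : 18 * (B:ℤ) < |n|
  · right
    have hn0 : (n:ℝ) ≠ 0 := by
      have : n ≠ 0 := by rintro rfl; simp at hnB; omega
      exact_mod_cast this
    refine fin (α + ((round (n * α - m * β) : ℤ) - (n * α - m * β)) / n) β ?_
      ⟨round (n * α - m * β), ?_⟩
    · have := rnd n (n * α - m * β) hnB
      simpa using this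
    · field_simp
      ring
  · by_cases hmB : 18 * (B:ℤ) < |m|
    · right
      have hm0 : (m:ℝ) ≠ 0 := by
        have : m ≠ 0 := by intro h0; rw [h0] at hmB; simp at hmB; omega
        exact_mod_cast this
      refine fin α (β - ((round (n * α - m * β) : ℤ) - (n * α - m * β)) / m) ?_
        ⟨round (n * α - m * β), ?_⟩
      · have := rnd m (n * α - m * β) hmB
        simpa using this
      · field_simp
        ring
    · left
      push Not at hnB hmB
      have lem : ∀ P Q : ℤ, |P| ≤ B → |Q| ≤ B → |m * P + n * Q| ≤ 36 * B * B := by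
        intro P Q hP hQ
        calc _ ≤ |m * P| + |n * Q| := abs_add_le _ _
          _ ≤ 18 * B * B + 18 * B * B := by
            rw [abs_mul, abs_mul]; gcongr
          _ = 36 * B * B := by ring
      push_cast
      refine ⟨?_, ?_, ?_⟩
      · rw [E1]; exact lem _ _ B2 (by rwa [neg_mul, abs_neg])
      · rw [E2]; exact lem _ _ (by rwa [abs_neg]) (by rwa [neg_mul, abs_neg])
      · have := lem 0 g (by simp) B5
        rw [hn]; convert this using 2; ring

lemma per_a {a1 a2 a3 : ℤ} (ha : Prim a1 a2 a3) :
    ∃ N : ℕ, ∀ v1 v2 v3 : ℤ, Prim v1 v2 v3 → v1 ≠ 0 → v2 ≠ 0 → v3 ≠ 0 →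
      a1 * v1 + a2 * v2 + a3 * v3 = 0 → ∀ l : ℝ, 0 < l → l ≤ 1/15 → LL v1 v2 v3 (1/10 + l) →
      inP l ∨ l = 1/15 ∨ (|v1| ≤ N ∧ |v2| ≤ N ∧ |v3| ≤ N) := by
  by_cases hne : a1 = 0 ∧ a2 = 0
  · obtain ⟨rfl, rfl⟩ := hne
    refine ⟨0, fun v1 v2 v3 _ _ _ h3 h => ?_⟩
    exfalso
    obtain ⟨x, y, z, hx⟩ := ha
    have : a3 ≠ 0 := by rintro rfl; simp at hx
    simp at h
    tauto
  set n := |a1| + |a2| + |a3| with hn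
  by_cases h1 : n = 1
  · refine ⟨0, fun v1 v2 v3 _ hv1 hv2 h3 h => ?_⟩
    exfalso
    by_cases z1 : a1 = 0
    · have z2 : a2 ≠ 0 := fun h => hne ⟨z1, h⟩
      have := abs_pos.2 z2
      have z3 : a3 = 0 := abs_eq_zero.1 (by have := abs_nonneg a1; have := abs_nonneg a3; omega)
      simp [z1, z3] at h
      tauto
    · have := abs_pos.2 z1
      have z3 : a3 = 0 := abs_eq_zero.1 (by have := abs_nonneg a2; have := abs_nonneg a3; omega)
      have z2 : a2 = 0 := abs_eq_zero.1 (by have := abs_nonneg a2; have := abs_nonneg a3; omega)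
      simp [z2, z3] at h
      tauto
  by_cases h3 : n = 3
  · refine ⟨0, fun v1 v2 v3 _ _ _ _ h l hl hl' hL => ?_⟩
    have := three h3 h hL.1
    right; left; linarith
  by_cases h5 : n = 5
  · refine ⟨0, fun v1 v2 v3 hP hv1 hv2 hv3 h l hl hl' hL => ?_⟩
    exact Or.inl (five h5 hv1 hv2 hv3 hP h hl hl' hL)
  obtain ⟨w1, w2, w3, k, hw, b1, b2, b3⟩ : ∃ (w1 w2 w3 : ℝ) (k : ℤ),
      a1 * w1 + a2 * w2 + a3 * w3 = k ∧ |w1 - 1/2| ≤ 1/14 ∧ |w2 - 1/2| ≤ 1/14 ∧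
      |w3 - 1/2| ≤ 1/14 := by
    have par : (n - (a1 + a2 + a3)) % 2 = 0 := by
      rcases abs_choice a1 with e1 | e1 <;> rcases abs_choice a2 with e2 | e2 <;>
        rcases abs_choice a3 with e3 | e3 <;> omega
    rcases Int.emod_two_eq_zero_or_one n with he | ho
    · obtain ⟨s, hs⟩ : ∃ s, a1 + a2 + a3 = 2 * s := ⟨(a1 + a2 + a3) / 2, by omega⟩
      have hsr : (a1 + a2 + a3 : ℝ) = 2 * s := by exact_mod_cast hs
      refine ⟨1/2, 1/2, 1/2, s, by linarith, by norm_num, by norm_num, by norm_num⟩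
    · obtain ⟨s, hs⟩ : ∃ s, a1 + a2 + a3 = 2 * s + 1 := ⟨(a1 + a2 + a3) / 2, by omega⟩
      have hsr : (a1 + a2 + a3 : ℝ) = 2 * s + 1 := by exact_mod_cast hs
      have h7 : 7 ≤ n := by
        have := abs_nonneg a1
        have := abs_nonneg a2
        have := abs_nonneg a3
        omega
      have h7r : (7:ℝ) ≤ n := by exact_mod_cast h7
      have sg : ∀ a : ℤ, |(1/2 + 1/(2 * (n:ℝ)) * (a.sign : ℤ)) - 1/2| ≤ 1/14 := by
        intro a
        rw [add_sub_cancel_left, abs_mul]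
        have h1 : |((a.sign : ℤ) : ℝ)| ≤ 1 := by
          have : |a.sign| ≤ 1 := by
            rcases Int.sign_trichotomy a with h | h | h <;> rw [h] <;> norm_num
          exact_mod_cast this
        have h2 : |1/(2 * (n:ℝ))| ≤ 1/14 := by
          rw [abs_of_nonneg (by positivity)]
          apply one_div_le_one_div_of_le <;> linarith
        calc _ ≤ (1/14 : ℝ) * 1 := by gcongr
          _ = 1/14 := by ring
      refine ⟨_, _, _, s + 1, ?_, sg a1, sg a2, sg a3⟩
      have hnr : (a1 * a1.sign + a2 * a2.sign + a3 * a3.sign : ℝ) = n := by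
        have : a1 * a1.sign + a2 * a2.sign + a3 * a3.sign = n := by
          simp only [Int.mul_sign_self, hn, Int.natCast_natAbs]
        exact_mod_cast this
      push_cast
      have : 1/(2 * (n:ℝ)) * n = 1/2 := by field_simp
      linear_combination 1/2 * hsr + 1/(2 * (n:ℝ)) * hnr + this
  obtain ⟨N, hN⟩ := dens ha hne hw b1 b2 b3
  refine ⟨N, fun v1 v2 v3 hP hv1 hv2 hv3 h l hl hl' hL => ?_⟩
  rcases hN v1 v2 v3 hP h with h | h
  · exact Or.inr (Or.inr h)
  · exact absurd h (hL.2 (1/10) (by linarith))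


open Complex in
lemma fourier_expand (k : ℕ) (x : ℝ) :
    ((((2 - 2 * Real.cos (2 * Real.pi * x)) ^ k : ℝ)) : ℂ) =
      ∑ j ∈ Finset.range (2 * k + 1), ((-1) ^ (j + k) * ((2 * k).choose j : ℂ)) *
        cexp (2 * Real.pi * I * ((j:ℤ) - (k:ℤ) : ℤ) * x) := by
  set w : ℂ := cexp (2 * Real.pi * I * x) with hw
  have hw0 : w ≠ 0 := Complex.exp_ne_zero _
  have hcos : (2 : ℂ) * Complex.cos (2 * Real.pi * x) = w + w⁻¹ := by
    rw [Complex.two_cos, hw, ← Complex.exp_neg]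
    congr 1 <;> congr 1 <;> ring
  have hb : (2 : ℂ) - 2 * Complex.cos (2 * Real.pi * x) = -1 * (w + -1) ^ 2 * w⁻¹ := by
    rw [hcos]; field_simp; ring
  push_cast
  rw [hb, mul_pow, mul_pow, ← pow_mul, add_pow, Finset.mul_sum, Finset.sum_mul]
  refine Finset.sum_congr rfl fun j hj => ?_
  have hj' : j ≤ 2 * k := by simp at hj; omega
  have e1 : cexp (2 * Real.pi * I * ((j:ℂ) - (k:ℂ)) * x) = w ^ j * w⁻¹ ^ k := by
    rw [hw, ← Complex.exp_neg, ← Complex.exp_nat_mul, ← Complex.exp_nat_mul, ← Complex.exp_add]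
    congr 1; ring
  have e2 : ((-1:ℂ)) ^ (2 * k - j) = (-1) ^ j := by
    have : ((-1:ℂ)) ^ (2 * k - j) * (-1) ^ j = 1 := by
      rw [← pow_add, Nat.sub_add_cancel hj', pow_mul]; simp
    have h2 : ((-1:ℂ)) ^ j * (-1) ^ j = 1 := by rw [← mul_pow]; simp
    exact mul_right_cancel₀ (pow_ne_zero _ (by norm_num)) (this.trans h2.symm)
  rw [e1, e2, pow_add]; ring

open Complex in
lemma int_exp (n : ℤ) : ∫ t in (0:ℝ)..1, cexp (2 * Real.pi * I * n * t) = if n = 0 then 1 else 0 := by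
  split_ifs with h
  · simp [h]
  · have hn : (2 * Real.pi * I * n : ℂ) ≠ 0 := by
      have : (n:ℂ) ≠ 0 := by exact_mod_cast h
      simp [Real.pi_ne_zero, this]
    rw [integral_exp_mul_complex hn]
    have : cexp (2 * Real.pi * I * n * ((1:ℝ):ℂ)) = 1 := by
      rw [Complex.exp_eq_one_iff]
      exact ⟨n, by push_cast; ring⟩
    rw [this]; simp

lemma not_near_bound {x : ℝ} (h : ¬ near (1/10) x) :
    2 - 2 * Real.cos (2 * Real.pi * x) ≤ 2 + 2 * Real.cos (Real.pi / 5) := by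
  have hf := Int.floor_le x
  have hf' := Int.lt_floor_add_one x
  set y := x - ⌊x⌋ - 1/2 with hy
  have hy1 : 1/10 < |y| := by
    by_contra hc
    push Not at hc
    exact h ⟨⌊x⌋, hc⟩
  have hy2 : |y| ≤ 1/2 := by rw [abs_le]; constructor <;> linarith
  have e : Real.cos (2 * Real.pi * x) = - Real.cos (2 * Real.pi * |y|) := by
    have : 2 * Real.pi * x = (2 * Real.pi * y + Real.pi) + (⌊x⌋ : ℤ) * (2 * Real.pi) := by
      rw [hy]; ring
    rw [this, Real.cos_add_int_mul_two_pi, Real.cos_add_pi]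
    rcases abs_choice y with h | h <;> rw [h]
    rw [mul_neg, Real.cos_neg]
  rw [e]
  have hpi := Real.pi_pos
  have : Real.cos (2 * Real.pi * |y|) ≤ Real.cos (Real.pi / 5) := by
    apply Real.cos_le_cos_of_nonneg_of_le_pi
    · positivity
    · nlinarith
    · nlinarith
  linarith

open Complex in
lemma mean_val (k : ℕ) (v1 v2 v3 : ℤ)
    (h : ∀ a1 a2 a3 : ℤ, |a1| ≤ k → |a2| ≤ k → |a3| ≤ k → a1 * v1 + a2 * v2 + a3 * v3 = 0 →
      a1 = 0 ∧ a2 = 0 ∧ a3 = 0) :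
    ∫ t in (0:ℝ)..1, (2 - 2 * Real.cos (2 * Real.pi * (t * v1))) ^ k *
      (2 - 2 * Real.cos (2 * Real.pi * (t * v2))) ^ k *
      (2 - 2 * Real.cos (2 * Real.pi * (t * v3))) ^ k = (k.centralBinom : ℝ) ^ 3 := by
  apply Complex.ofReal_injective
  rw [← intervalIntegral.integral_ofReal]
  set c : ℕ → ℂ := fun j => (-1) ^ (j + k) * ((2 * k).choose j : ℂ) with hc
  set S := Finset.range (2 * k + 1) with hS
  have e : ∀ t : ℝ, (((2 - 2 * Real.cos (2 * Real.pi * (t * v1))) ^ k *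
      (2 - 2 * Real.cos (2 * Real.pi * (t * v2))) ^ k *
      (2 - 2 * Real.cos (2 * Real.pi * (t * v3))) ^ k : ℝ) : ℂ) =
      ∑ j1 ∈ S, ∑ j2 ∈ S, ∑ j3 ∈ S, (c j1 * c j2 * c j3) * cexp (2 * Real.pi * I *
        ((((j1:ℤ) - k) * v1 + ((j2:ℤ) - k) * v2 + ((j3:ℤ) - k) * v3 : ℤ) : ℂ) * t) := by
    intro t
    rw [Complex.ofReal_mul, Complex.ofReal_mul, fourier_expand, fourier_expand, fourier_expand,
      Finset.sum_mul_sum, Finset.sum_mul]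
    refine Finset.sum_congr rfl fun j1 _ => ?_
    rw [Finset.sum_mul_sum]
    refine Finset.sum_congr rfl fun j2 _ => Finset.sum_congr rfl fun j3 _ => ?_
    have : ∀ A B C D E F : ℂ, (A * B) * (C * D) * (E * F) = (A * C * E) * (B * D * F) := by
      intros; ring
    rw [this, ← Complex.exp_add, ← Complex.exp_add]
    congr 2
    push_cast
    ring
  simp_rw [e]
  have hIntg : ∀ (a : ℂ) (n : ℤ), IntervalIntegrable
      (fun t : ℝ => a * cexp (2 * Real.pi * I * (n:ℂ) * t)) MeasureTheory.volume 0 1 := by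
    intro a n
    apply Continuous.intervalIntegrable
    fun_prop
  rw [intervalIntegral.integral_finsetSum]
  swap
  · intro j1 _
    apply Continuous.intervalIntegrable
    fun_prop
  have step : ∀ j1 ∈ S, (∫ t in (0:ℝ)..1, ∑ j2 ∈ S, ∑ j3 ∈ S, (c j1 * c j2 * c j3) *
      cexp (2 * Real.pi * I *
        ((((j1:ℤ) - k) * v1 + ((j2:ℤ) - k) * v2 + ((j3:ℤ) - k) * v3 : ℤ) : ℂ) * t)) =
      ∑ j2 ∈ S, ∑ j3 ∈ S, (if j1 = k then c j1 else 0) * (if j2 = k then c j2 else 0) *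
        (if j3 = k then c j3 else 0) := by
    intro j1 hj1
    rw [intervalIntegral.integral_finsetSum]
    swap
    · intro j2 _
      apply Continuous.intervalIntegrable
      fun_prop
    refine Finset.sum_congr rfl fun j2 hj2 => ?_
    rw [intervalIntegral.integral_finsetSum (fun j3 _ => hIntg _ _)]
    refine Finset.sum_congr rfl fun j3 hj3 => ?_
    rw [intervalIntegral.integral_const_mul, int_exp]
    simp only [hS, Finset.mem_range] at hj1 hj2 hj3
    by_cases hz : ((j1:ℤ) - k) * v1 + ((j2:ℤ) - k) * v2 + ((j3:ℤ) - k) * v3 = 0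
    · obtain ⟨h1, h2, h3⟩ := h _ _ _ (by rw [abs_le]; omega) (by rw [abs_le]; omega)
        (by rw [abs_le]; omega) hz
      rw [if_pos hz, if_pos (by omega), if_pos (by omega), if_pos (by omega), mul_one]
    · rw [if_neg hz]
      by_cases h1 : j1 = k
      · by_cases h2 : j2 = k
        · by_cases h3 : j3 = k
          · subst h1
            simp [h2, h3] at hz
          · simp [h3]
        · simp [h2]
      · simp [h1]
  rw [Finset.sum_congr rfl step]
  have hk : k ∈ S := by simp [hS]; omega
  have hck : c k = k.centralBinom := by
    simp only [hc, Nat.centralBinom]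
    rw [← two_mul, pow_mul]; simp
  simp_rw [← Finset.mul_sum, ← Finset.sum_mul, Finset.sum_ite_eq', if_pos hk]
  try simp_rw [← Finset.mul_sum, ← Finset.sum_mul, Finset.sum_ite_eq', if_pos hk]
  try simp_rw [← Finset.mul_sum, ← Finset.sum_mul, Finset.sum_ite_eq', if_pos hk]
  rw [hck]; push_cast; ring

lemma bohr : ∃ K : ℕ, ∀ v1 v2 v3 : ℤ,
    (∀ a1 a2 a3 : ℤ, |a1| ≤ K → |a2| ≤ K → |a3| ≤ K → a1 * v1 + a2 * v2 + a3 * v3 = 0 →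
      a1 = 0 ∧ a2 = 0 ∧ a3 = 0) → EE v1 v2 v3 (1/10) := by
  set ρ : ℝ := (1 + Real.cos (Real.pi / 5)) / 2 with hρ
  have hpi := Real.pi_pos
  have hc0 : 0 ≤ Real.cos (Real.pi / 5) :=
    Real.cos_nonneg_of_neg_pi_div_two_le_of_le (by linarith) (by linarith)
  have hc1 : Real.cos (Real.pi / 5) < 1 := by
    rw [← Real.cos_zero]
    exact Real.cos_lt_cos_of_nonneg_of_le_pi le_rfl (by linarith) (by linarith)
  have hρ0 : 0 ≤ ρ := by rw [hρ]; linarith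
  have hρ1 : ρ < 1 := by rw [hρ]; linarith
  have lim := tendsto_pow_const_mul_const_pow_of_abs_lt_one 3 (r := ρ)
    (by rw [abs_of_nonneg hρ0]; exact hρ1)
  have ev := (lim.eventually (gt_mem_nhds (show (0:ℝ) < 1/8 by norm_num))).and
    (Filter.eventually_ge_atTop 1)
  obtain ⟨k, hk, hk1⟩ := ev.exists
  refine ⟨k, fun v1 v2 v3 h => ?_⟩
  by_contra hE
  have hm := mean_val k v1 v2 v3 h
  have bd : ∀ x : ℝ, 0 ≤ 2 - 2 * Real.cos (2 * Real.pi * x) ∧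
      2 - 2 * Real.cos (2 * Real.pi * x) ≤ 4 := by
    intro x
    have := Real.cos_le_one (2 * Real.pi * x)
    have := Real.neg_one_le_cos (2 * Real.pi * x)
    constructor <;> linarith
  have hub : ∀ t : ℝ, (2 - 2 * Real.cos (2 * Real.pi * (t * v1))) ^ k *
      (2 - 2 * Real.cos (2 * Real.pi * (t * v2))) ^ k *
      (2 - 2 * Real.cos (2 * Real.pi * (t * v3))) ^ k ≤ 64 ^ k * ρ ^ k := by
    intro t
    rw [← mul_pow, ← mul_pow, ← mul_pow]
    obtain ⟨a0, a4⟩ := bd (t * v1)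
    obtain ⟨b0, b4⟩ := bd (t * v2)
    obtain ⟨c0, c4⟩ := bd (t * v3)
    have h64 : 64 * ρ = 4 * 4 * (2 + 2 * Real.cos (Real.pi / 5)) := by rw [hρ]; ring
    have hd0 : 0 ≤ 2 + 2 * Real.cos (Real.pi / 5) := by linarith
    apply pow_le_pow_left₀ (by positivity)
    rw [h64]
    by_cases n1 : near (1/10) (t * v1)
    · by_cases n2 : near (1/10) (t * v2)
      · have n3 : ¬ near (1/10) (t * v3) := fun n3 => hE ⟨t, n1, n2, n3⟩
        have := not_near_bound n3
        gcongr
      · have := not_near_bound n2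
        calc _ ≤ 4 * (2 + 2 * Real.cos (Real.pi / 5)) * 4 := by gcongr
          _ = _ := by ring
    · have := not_near_bound n1
      calc _ ≤ (2 + 2 * Real.cos (Real.pi / 5)) * 4 * 4 := by gcongr
        _ = _ := by ring
  have hle : (k.centralBinom : ℝ) ^ 3 ≤ 64 ^ k * ρ ^ k := by
    rw [← hm]
    calc _ ≤ ∫ t in (0:ℝ)..1, (64 ^ k * ρ ^ k : ℝ) := by
          apply intervalIntegral.integral_mono_on (by norm_num)
          · apply Continuous.intervalIntegrable
            fun_prop
          · exact intervalIntegrable_const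
          · intro t _
            exact hub t
      _ = _ := by simp
  have h4 : ((4:ℝ)) ^ k ≤ 2 * k * k.centralBinom := by
    exact_mod_cast Nat.four_pow_le_two_mul_self_mul_centralBinom k hk1
  have h64 : (64:ℝ) ^ k ≤ 8 * k ^ 3 * (64 ^ k * ρ ^ k) := by
    calc (64:ℝ) ^ k = (4 ^ k) ^ 3 := by rw [← pow_mul, mul_comm, pow_mul]; norm_num
      _ ≤ (2 * k * k.centralBinom) ^ 3 := by gcongr
      _ = 8 * k ^ 3 * (k.centralBinom : ℝ) ^ 3 := by ring
      _ ≤ _ := by gcongr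
  have p64 : (0:ℝ) < 64 ^ k := by positivity
  nlinarith


lemma lemA : ∃ N : ℕ, ∀ v1 v2 v3 : ℤ, Prim v1 v2 v3 → v1 ≠ 0 → v2 ≠ 0 → v3 ≠ 0 →
    ∀ l : ℝ, 0 < l → l ≤ 1/15 → LL v1 v2 v3 (1/10 + l) →
      inP l ∨ l = 1/15 ∨ (|v1| ≤ N ∧ |v2| ≤ N ∧ |v3| ≤ N) := by
  obtain ⟨K, hK⟩ := bohr
  have hex : ∀ a : ℤ × ℤ × ℤ, ∃ N : ℕ, Prim a.1 a.2.1 a.2.2 → ∀ v1 v2 v3 : ℤ, Prim v1 v2 v3 →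
      v1 ≠ 0 → v2 ≠ 0 → v3 ≠ 0 → a.1 * v1 + a.2.1 * v2 + a.2.2 * v3 = 0 →
      ∀ l : ℝ, 0 < l → l ≤ 1/15 → LL v1 v2 v3 (1/10 + l) →
      inP l ∨ l = 1/15 ∨ (|v1| ≤ N ∧ |v2| ≤ N ∧ |v3| ≤ N) := by
    intro a
    by_cases ha : Prim a.1 a.2.1 a.2.2
    · obtain ⟨N, hN⟩ := per_a ha
      exact ⟨N, fun _ => hN⟩
    · exact ⟨0, fun h => absurd h ha⟩
  choose F hF using hex
  let B : Finset (ℤ × ℤ × ℤ) :=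
    Finset.Icc (-(K:ℤ)) K ×ˢ (Finset.Icc (-(K:ℤ)) K ×ˢ Finset.Icc (-(K:ℤ)) K)
  refine ⟨B.sup F, ?_⟩
  intro v1 v2 v3 hv h1 h2 h3 l hl0 hl hLL
  have hnE : ¬ EE v1 v2 v3 (1/10) := hLL.2 _ (by linarith)
  have hrel : ∃ a1 a2 a3 : ℤ, |a1| ≤ K ∧ |a2| ≤ K ∧ |a3| ≤ K ∧ a1*v1+a2*v2+a3*v3=0 ∧
      ¬ (a1 = 0 ∧ a2 = 0 ∧ a3 = 0) := by
    by_contra hcon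
    apply hnE
    apply hK
    intro a1 a2 a3 q1 q2 q3 q
    by_contra hz
    exact hcon ⟨a1, a2, a3, q1, q2, q3, q, hz⟩
  obtain ⟨a1, a2, a3, q1, q2, q3, q, hz⟩ := hrel
  obtain ⟨g, b1, b2, b3, e1, e2, e3, hP⟩ := gcd3 a1 a2 a3
  have hg : g ≠ 0 := by
    rintro rfl
    apply hz
    simp [e1, e2, e3]
  have hg1 : 1 ≤ |g| := Int.one_le_abs hg
  have hb : ∀ b a : ℤ, a = g * b → |a| ≤ K → b ∈ Finset.Icc (-(K:ℤ)) K := by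
    intro b a e ha
    rw [e, abs_mul] at ha
    rw [Finset.mem_Icc, ← abs_le]
    nlinarith [abs_nonneg b]
  have hq : b1 * v1 + b2 * v2 + b3 * v3 = 0 := by
    have : g * (b1 * v1 + b2 * v2 + b3 * v3) = 0 := by
      rw [e1, e2, e3] at q
      linarith
    exact (mul_eq_zero.1 this).resolve_left hg
  have hmem : (b1, b2, b3) ∈ B := by
    simp only [B, Finset.mem_product]
    exact ⟨hb _ _ e1 q1, hb _ _ e2 q2, hb _ _ e3 q3⟩
  have hle : F (b1, b2, b3) ≤ B.sup F := Finset.le_sup hmem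
  have hle' : (F (b1, b2, b3) : ℤ) ≤ (B.sup F : ℕ) := by exact_mod_cast hle
  rcases hF (b1, b2, b3) hP v1 v2 v3 hv h1 h2 h3 hq l hl0 hl hLL with h | h | ⟨u1, u2, u3⟩
  · exact Or.inl h
  · exact Or.inr (Or.inl h)
  · exact Or.inr (Or.inr ⟨u1.trans hle', u2.trans hle', u3.trans hle'⟩)

lemma dist_le_iff (x d : ℝ) :
    dist ((x : ℝ) : AddCircle (1:ℝ)) ((1/2 : ℝ) : AddCircle (1:ℝ)) ≤ d ↔ near d x := by
  rw [dist_eq_norm, ← AddCircle.coe_sub, UnitAddCircle.norm_eq]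
  constructor
  · intro h
    refine ⟨round (x - 1/2), ?_⟩
    rwa [show x - (round (x - 1/2) : ℤ) - 1/2 = x - 1/2 - (round (x - 1/2) : ℤ) by ring]
  · rintro ⟨n, hn⟩
    refine (round_le (x - 1/2) n).trans ?_
    rwa [show x - 1/2 - (n:ℝ) = x - n - 1/2 by ring]

/-- the function whose infimum is `DVal` -/
def fD (x : Torus 3) : ℝ := ⨆ i, dist (x i) ((1 / 2 : ℝ) : AddCircle (1 : ℝ))

lemma fD_le_iff (x : Torus 3) (d : ℝ) :
    fD x ≤ d ↔ ∀ i, dist (x i) ((1 / 2 : ℝ) : AddCircle (1 : ℝ)) ≤ d := by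
  unfold fD
  exact ciSup_le_iff (Set.finite_range _).bddAbove

def pt (v : Fin 1 → Fin 3 → ℤ) (t : ℝ) : Torus 3 := fun i => ((t * v 0 i : ℝ) : AddCircle (1:ℝ))

lemma spanTorus_eq (v : Fin 1 → Fin 3 → ℤ) : spanTorus v = Set.range (pt v) := by
  ext p
  simp only [spanTorus, Set.mem_ofPred_eq, Set.mem_range]
  constructor
  · rintro ⟨t, rfl⟩
    refine ⟨t 0, ?_⟩
    ext i
    simp [pt, torusProj]
  · rintro ⟨t, rfl⟩
    refine ⟨fun _ => t, ?_⟩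
    ext i
    simp [pt, torusProj]

lemma EE_iff (v : Fin 1 → Fin 3 → ℤ) (d : ℝ) :
    EE (v 0 0) (v 0 1) (v 0 2) d ↔ ∃ t, fD (pt v t) ≤ d := by
  unfold EE
  apply exists_congr
  intro t
  rw [fD_le_iff, Fin.forall_fin_succ, Fin.forall_fin_two]
  simp only [pt, dist_le_iff]
  rfl

lemma exists_min (v : Fin 1 → Fin 3 → ℤ) : ∃ t, ∀ s, fD (pt v t) ≤ fD (pt v s) := by
  have hc : Continuous fun t => fD (pt v t) := by
    have : (fun t => fD (pt v t)) = fun t => Finset.univ.sup' Finset.univ_nonempty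
        (fun i : Fin 3 => dist (pt v t i) ((1 / 2 : ℝ) : AddCircle (1 : ℝ))) := by
      funext t
      rw [Finset.sup'_univ_eq_ciSup]
      rfl
    rw [this]
    apply Continuous.finset_sup'_apply
    intro i _
    apply Continuous.dist _ continuous_const
    exact (AddCircle.continuous_mk' 1).comp (by fun_prop : Continuous fun t : ℝ => t * (v 0 i : ℝ))
  obtain ⟨t, _, ht⟩ := (isCompact_Icc (a := (0:ℝ)) (b := 1)).exists_isMinOn
    ⟨0, by simp⟩ hc.continuousOn
  refine ⟨t, fun s => ?_⟩
  have hp : pt v s = pt v (Int.fract s) := by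
    ext i
    simp only [pt]
    have e : s * (v 0 i : ℝ) = Int.fract s * (v 0 i : ℝ) + ((⌊s⌋ * v 0 i : ℤ) : ℝ) := by
      push_cast
      nth_rewrite 1 [← Int.fract_add_floor s]
      ring
    rw [e, AddCircle.coe_add]
    have z : ∀ n : ℤ, ((n : ℝ) : AddCircle (1:ℝ)) = 0 := by
      intro n
      rw [AddCircle.coe_eq_zero_iff]
      exact ⟨n, by simp⟩
    rw [z, add_zero]
  rw [hp]
  exact ht ⟨Int.fract_nonneg s, (Int.fract_lt_one s).le⟩

lemma DVal_LL (v : Fin 1 → Fin 3 → ℤ) : LL (v 0 0) (v 0 1) (v 0 2) (DVal (spanTorus v)) := by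
  obtain ⟨t, ht⟩ := exists_min v
  have hD : DVal (spanTorus v) = fD (pt v t) := by
    have : IsLeast (fD '' spanTorus v) (fD (pt v t)) := by
      rw [spanTorus_eq]
      refine ⟨⟨_, ⟨t, rfl⟩, rfl⟩, ?_⟩
      rintro _ ⟨_, ⟨s, rfl⟩, rfl⟩
      exact ht s
    exact this.csInf_eq
  rw [hD]
  refine ⟨(EE_iff v _).2 ⟨t, le_rfl⟩, ?_⟩
  intro d hd hE
  obtain ⟨s, hs⟩ := (EE_iff v _).1 hE
  linarith [ht s]

lemma LL_unique {a b c : ℤ} {d d' : ℝ} (h : LL a b c d) (h' : LL a b c d') : d = d' := by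
  rcases lt_trichotomy d d' with q | q | q
  · exact absurd h.1 (h'.2 _ q)
  · exact q
  · exact absurd h'.1 (h.2 _ q)

lemma span_smul (v w : Fin 1 → Fin 3 → ℤ) (g : ℤ) (hg : g ≠ 0) (h : ∀ i, v 0 i = g * w 0 i) :
    spanTorus v = spanTorus w := by
  have hgr : (g:ℝ) ≠ 0 := by exact_mod_cast hg
  rw [spanTorus_eq, spanTorus_eq]
  ext p
  constructor
  · rintro ⟨t, rfl⟩
    refine ⟨t * g, ?_⟩
    ext i
    simp only [pt, h i]
    congr 1
    push_cast
    ring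
  · rintro ⟨t, rfl⟩
    refine ⟨t / g, ?_⟩
    ext i
    simp only [pt, h i]
    congr 1
    push_cast
    field_simp

lemma proper_ne (v : Fin 1 → Fin 3 → ℤ) (h : IsProperSub (spanTorus v)) (i : Fin 3) :
    v 0 i ≠ 0 := by
  intro hi
  apply h
  rw [spanTorus_eq]
  rintro _ ⟨t, rfl⟩
  refine Set.mem_iUnion.2 ⟨i, ?_⟩
  simp [pt, hi]

lemma mem_Spec {a b c : ℤ} {d : ℝ} (ha : a ≠ 0) (h : LL a b c d) (hd : d < 1/2) :
    d ∈ Spec 1 3 := by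
  let v : Fin 1 → Fin 3 → ℤ := fun _ => ![a, b, c]
  refine ⟨spanTorus v, ⟨v, ?_, rfl⟩, ?_, ?_⟩
  · rw [linearIndependent_unique_iff]
    intro h0
    have := congrFun h0 0
    simp [v] at this
    exact ha this
  · intro hsub
    obtain ⟨t, ht⟩ := (EE_iff v d).1 h.1
    have hm := hsub (by rw [spanTorus_eq]; exact ⟨t, rfl⟩ : pt v t ∈ spanTorus v)
    obtain ⟨i, hi⟩ := Set.mem_iUnion.1 hm
    have h0 : pt v t i = ((0:ℝ) : AddCircle (1:ℝ)) := hi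
    have h1 := (fD_le_iff _ _).1 ht i
    rw [h0, dist_le_iff] at h1
    obtain ⟨n, hn⟩ := h1
    rw [abs_le] at hn
    have p1 : (-1:ℝ) < n := by linarith
    have p2 : (n:ℝ) < 0 := by linarith
    have p1' : (-1:ℤ) < n := by exact_mod_cast p1
    have p2' : n < 0 := by exact_mod_cast p2
    omega
  · exact LL_unique h (DVal_LL v)

lemma from_Spec {d : ℝ} (h : d ∈ Spec 1 3) : ∃ w : Fin 1 → Fin 3 → ℤ,
    Prim (w 0 0) (w 0 1) (w 0 2) ∧ (∀ i, w 0 i ≠ 0) ∧ d = DVal (spanTorus w) := by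
  obtain ⟨T, ⟨v, hv, rfl⟩, hp, rfl⟩ := h
  obtain ⟨g, b1, b2, b3, e1, e2, e3, hP⟩ := gcd3 (v 0 0) (v 0 1) (v 0 2)
  have hg : g ≠ 0 := by
    rintro rfl
    exact proper_ne v hp 0 (by simpa using e1)
  let w : Fin 1 → Fin 3 → ℤ := fun _ => ![b1, b2, b3]
  have hvw : spanTorus v = spanTorus w := by
    apply span_smul v w g hg
    intro i
    fin_cases i
    · exact e1
    · exact e2
    · exact e3
  refine ⟨w, hP, ?_, by rw [hvw]⟩
  rw [hvw] at hp
  exact proper_ne w hp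

theorem main_fin :
    (symmDiff (Spec 1 3 ∩ Set.Ioc (1/10 : ℝ) (1/6))
      ({x : ℝ | ∃ s : ℕ, x = 1/10 + 4/(5 * (5 * (s : ℝ) + 7))} ∪
       {x : ℝ | ∃ s : ℕ, x = 1/10 + 3/(5 * (5 * (s : ℝ) + 9))})).Finite := by
  obtain ⟨N, hN⟩ := lemA
  rw [Set.symmDiff_def]
  apply Set.Finite.union
  · let V : Set (Fin 1 → Fin 3 → ℤ) := Set.pi Set.univ fun _ =>
      Set.pi Set.univ fun _ => Set.Icc (-(N:ℤ)) N
    have hV : V.Finite := Set.Finite.pi fun _ => Set.Finite.pi fun _ => Set.finite_Icc _ _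
    refine ((hV.image fun w => DVal (spanTorus w)).insert (1/6)).subset ?_
    rintro d ⟨⟨hS, hd1, hd2⟩, hnP⟩
    obtain ⟨w, hP, hw, hdw⟩ := from_Spec hS
    have hLL := DVal_LL w
    rw [← hdw] at hLL
    have hLL' : LL (w 0 0) (w 0 1) (w 0 2) (1/10 + (d - 1/10)) := by
      rwa [show 1/10 + (d - 1/10) = d by ring]
    rcases hN _ _ _ hP (hw 0) (hw 1) (hw 2) (d - 1/10) (by linarith) (by linarith) hLL'
      with h | h | ⟨u1, u2, u3⟩
    · exfalso
      apply hnP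
      rcases h with ⟨M, hM, h⟩ | ⟨M, hM, h⟩
      · left
        have hM12 : (12:ℝ) ≤ M := by
          by_contra hlt
          push Not at hlt
          nlinarith
        have hM12' : (12:ℤ) ≤ M := by exact_mod_cast hM12
        obtain ⟨s, hs⟩ := Int.eq_ofNat_of_zero_le (show 0 ≤ (M - 7) / 5 by omega)
        have hMs : M = 5 * (s:ℤ) + 7 := by omega
        have hMr : (M:ℝ) = 5 * (s:ℝ) + 7 := by exact_mod_cast hMs
        refine ⟨s, ?_⟩
        rw [hMr] at h
        have : (5 * (s:ℝ) + 7) ≠ 0 := by positivity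
        have : d - 1/10 = 4/(5 * (5 * (s : ℝ) + 7)) := by
          rw [eq_div_iff (by positivity)]
          linarith
        linarith
      · right
        have hM9 : (9:ℝ) ≤ M := by
          by_contra hlt
          push Not at hlt
          nlinarith
        have hM9' : (9:ℤ) ≤ M := by exact_mod_cast hM9
        obtain ⟨s, hs⟩ := Int.eq_ofNat_of_zero_le (show 0 ≤ (M - 9) / 5 by omega)
        have hMs : M = 5 * (s:ℤ) + 9 := by omega
        have hMr : (M:ℝ) = 5 * (s:ℝ) + 9 := by exact_mod_cast hMs
        refine ⟨s, ?_⟩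
        rw [hMr] at h
        have : d - 1/10 = 3/(5 * (5 * (s : ℝ) + 9)) := by
          rw [eq_div_iff (by positivity)]
          linarith
        linarith
    · left
      linarith
    · right
      refine ⟨w, ?_, hdw.symm⟩
      rintro j - i -
      fin_cases j
      rw [abs_le] at u1 u2 u3
      fin_cases i
      · exact u1
      · exact u2
      · exact u3
  · refine (Set.toFinite {(1/10 + 4/(5*(5*((0:ℕ):ℝ)+7)) : ℝ), 1/10 + 3/(5*(5*((0:ℕ):ℝ)+9))}).subset ?_
    rintro d ⟨⟨s, hs⟩ | ⟨s, hs⟩, hn⟩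
    · rcases Nat.eq_zero_or_pos s with rfl | hpos
      · left; exact hs
      · exfalso
        have hsr : (1:ℝ) ≤ s := by exact_mod_cast hpos
        have hb : 4/(5*(5*(s:ℝ)+7)) ≤ 1/15 := by
          rw [div_le_div_iff₀ (by positivity) (by norm_num)]
          linarith
        have hb0 : 0 < 4/(5*(5*(s:ℝ)+7)) := by positivity
        apply hn
        refine ⟨?_, by rw [hs]; linarith, by rw [hs]; linarith⟩
        have := real1 s hpos
        rw [← hs] at this
        exact mem_Spec (by norm_num) this (by rw [hs]; linarith)
    · rcases Nat.eq_zero_or_pos s with rfl | hpos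
      · right; exact hs
      · exfalso
        have hsr : (1:ℝ) ≤ s := by exact_mod_cast hpos
        have hb : 3/(5*(5*(s:ℝ)+9)) ≤ 1/15 := by
          rw [div_le_div_iff₀ (by positivity) (by norm_num)]
          linarith
        have hb0 : 0 < 3/(5*(5*(s:ℝ)+9)) := by positivity
        apply hn
        refine ⟨?_, by rw [hs]; linarith, by rw [hs]; linarith⟩
        have := real2 s hpos
        rw [← hs] at this
        exact mem_Spec (by norm_num) this (by rw [hs]; linarith)


/-- `𝒮₁(3) ∩ (1/10, 1/6]` has finite symmetric difference with
`(1/10 + 4/5Prog(5,7)) ∪ (1/10 + 3/5Prog(5,9))`. -/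
theorem stmt4 :
    (symmDiff (Spec 1 3 ∩ Set.Ioc (1/10 : ℝ) (1/6))
      ({x : ℝ | ∃ s : ℕ, x = 1/10 + 4/(5 * (5 * (s : ℝ) + 7))} ∪
       {x : ℝ | ∃ s : ℕ, x = 1/10 + 3/(5 * (5 * (s : ℝ) + 9))})).Finite := by
  exact main_fin
end
end
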